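/- arXiv:0911.3565 — 6 statements merged into one kernel-verified Lean document; each statement's English description precedes it below -/
import Mathlib

section
/- Let m ≥ n and let F_3, G_3 ∈ K[y_1,…,y_n] ⊂ K[y_1,…,y_m] be non-degenerate homogeneous cubic forms. Set F = F_3 + y_{n+1}^2 + ⋯ + y_m^2 and G = G_3 + y_{n+1}^2 + ⋯ + y_m^2. Then the Artinian Gorenstein local K-algebras A_F and A_G are isomorphic as K-algebras if and only if F_3 and G_3 are projectively equivalent, i.e. there exist φ ∈ GL_n(K) and c ∈ K∖{0} with F_3 ∘ φ = c · G_3. -/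
/-- The contraction (derivative) action of the power series ring
`R = K[[x_1,…,x_n]]` on the polynomial ring `P = K[y_1,…,y_n]`:
`f ∘ g = f(∂/∂y_1, …, ∂/∂y_n)(g)`.  It is defined on the monomial basis by
`x^α ∘ y^β = (∏ i, (β i)!/(β i - α i)!) y^(β-α)` (zero unless `α ≤ β`), the honest
iterated partial derivative, and extended `K`-linearly. -/
noncomputable def contract {K : Type*} [Field K] {n : ℕ} (f : MvPowerSeries (Fin n) K) :
    MvPolynomial (Fin n) K →ₗ[K] MvPolynomial (Fin n) K :=
  (MvPolynomial.basisMonomials (Fin n) K).constr K fun β =>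
    ∑ α ∈ Finset.Iic β,
      (MvPowerSeries.coeff α f * ∏ i, ((β i).descFactorial (α i) : K)) •
        MvPolynomial.monomial (β - α) (1 : K)

theorem contract_add {K : Type*} [Field K] {n : ℕ} (f g : MvPowerSeries (Fin n) K) :
    contract (f + g) = contract f + contract g := by
  unfold contract
  rw [← map_add]
  congr 1
  funext β
  simp only [Pi.add_apply]
  rw [← Finset.sum_add_distrib]
  exact Finset.sum_congr rfl fun α _ => by rw [map_add, add_mul, add_smul]

theorem contract_zero {K : Type*} [Field K] {n : ℕ} :
    contract (0 : MvPowerSeries (Fin n) K) = 0 := by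
  unfold contract
  convert map_zero ((MvPolynomial.basisMonomials (Fin n) K).constr
    (M' := MvPolynomial (Fin n) K) K) using 2
  funext β
  simp

/-- The annihilator `Ann_R(F) = Ann_R(⟨F⟩_R)` of (the cyclic `R`-submodule of
`P` generated by) a polynomial `F` under the contraction action; an ideal of
`R = K[[x_1,…,x_n]]`.  The Artinian Gorenstein local algebra associated to `F`
is `A_F = R ⧸ annR F`. -/
noncomputable def annR {K : Type*} [Field K] {n : ℕ} (F : MvPolynomial (Fin n) K) :
    Ideal (MvPowerSeries (Fin n) K) where
  carrier := {f | ∀ u : MvPowerSeries (Fin n) K, contract (u * f) F = 0}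
  zero_mem' := fun u => by rw [mul_zero, contract_zero]; rfl
  add_mem' := fun {a b} ha hb u => by
    rw [mul_add, contract_add, LinearMap.add_apply, ha u, hb u, add_zero]
  smul_mem' := fun c f hf u => by
    rw [smul_eq_mul, ← mul_assoc]; exact hf (u * c)

/-- The linear form `l 1 • x_1 + ⋯ + l n • x_n` in `R = K[[x_1,…,x_n]]`. -/
noncomputable def linForm {K : Type*} [Field K] {n : ℕ} (l : Fin n → K) :
    MvPowerSeries (Fin n) K :=
  ∑ i, MvPowerSeries.monomial (Finsupp.single i 1) (l i)

/-- A polynomial `F ∈ K[y_1,…,y_n]` is non-degenerate if `Ann_R(F)` contains no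
nonzero linear form; equivalently, the embedding dimension of `A_F` is `n`,
i.e. `HF_{A_F}(1) = n`. -/
def nondegenerate {K : Type*} [Field K] {n : ℕ} (F : MvPolynomial (Fin n) K) : Prop :=
  ∀ l : Fin n → K, linForm l ∈ annR F → l = 0

/-- Two forms `F, G ∈ K[y_1,…,y_n]` are projectively equivalent if they agree up
to an invertible linear change of coordinates `φ ∈ GL_n(K)` and a nonzero scalar
`c`: `F ∘ φ = c • G`. -/
def projEquiv {K : Type*} [Field K] {n : ℕ} (F G : MvPolynomial (Fin n) K) : Prop :=
  ∃ φ : GL (Fin n) K, ∃ c : K, c ≠ 0 ∧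
    MvPolynomial.aeval
      (fun i => ∑ j, (φ : Matrix (Fin n) (Fin n) K) i j •
        (MvPolynomial.X j : MvPolynomial (Fin n) K)) F = c • G


namespace AFProof
open MvPolynomial

variable {K : Type*} [Field K] {n : ℕ}

theorem contract_monomial (f : MvPowerSeries (Fin n) K) (β : Fin n →₀ ℕ) :
    contract f (monomial β (1 : K)) = ∑ α ∈ Finset.Iic β,
      (MvPowerSeries.coeff α f * ∏ i, ((β i).descFactorial (α i) : K)) •
        monomial (β - α) (1 : K) := by
  unfold contract
  have := (MvPolynomial.basisMonomials (Fin n) K).constr_basis K (fun β =>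
    ∑ α ∈ Finset.Iic β,
      (MvPowerSeries.coeff α f * ∏ i, ((β i).descFactorial (α i) : K)) •
        MvPolynomial.monomial (β - α) (1 : K)) β
  rwa [MvPolynomial.coe_basisMonomials] at this

theorem hom_ext' {M : Type*} [AddCommGroup M] [Module K M]
    {A B : MvPolynomial (Fin n) K →ₗ[K] M}
    (h : ∀ β, A (monomial β (1 : K)) = B (monomial β (1 : K))) : A = B := by
  apply (MvPolynomial.basisMonomials (Fin n) K).ext
  intro β
  rw [MvPolynomial.coe_basisMonomials]
  exact h β

theorem contract_smul (c : K) (f : MvPowerSeries (Fin n) K) :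
    contract (c • f) = c • contract f := by
  apply hom_ext'
  intro β
  rw [LinearMap.smul_apply, contract_monomial, contract_monomial, Finset.smul_sum]
  refine Finset.sum_congr rfl fun α _ => ?_
  rw [map_smul, smul_smul, smul_eq_mul, mul_assoc]

noncomputable def contractL :
    MvPowerSeries (Fin n) K →ₗ[K] (MvPolynomial (Fin n) K →ₗ[K] MvPolynomial (Fin n) K) where
  toFun := contract
  map_add' := contract_add
  map_smul' := contract_smul

theorem contractL_apply (f : MvPowerSeries (Fin n) K) : contractL f = contract f := rfl

theorem desc_add (b a c : ℕ) : b.descFactorial (c + a) =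
    b.descFactorial a * (b - a).descFactorial c := by
  have := Nat.descFactorial_mul_descFactorial (n := b) (k := a) (m := c + a) (by omega)
  rw [← this, mul_comm]; simp

theorem contract_mul (f g : MvPowerSeries (Fin n) K) :
    contract (f * g) = contract f ∘ₗ contract g := by
  apply hom_ext'
  intro β
  rw [LinearMap.comp_apply, contract_monomial, contract_monomial, map_sum]
  simp_rw [map_smul, contract_monomial, MvPowerSeries.coeff_mul, Finset.sum_mul, Finset.sum_smul,
    Finset.smul_sum]
  rw [Finset.sum_sigma', Finset.sum_sigma']
  refine Finset.sum_bij' (fun x _ => ⟨x.2.2, x.2.1⟩) (fun x _ => ⟨x.2 + x.1, (x.2, x.1)⟩) ?_ ?_ ?_ ?_ ?_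
  · rintro ⟨δ, γ, α⟩ h
    simp only [Finset.mem_sigma, Finset.mem_Iic, Finset.HasAntidiagonal.mem_antidiagonal] at h ⊢
    obtain ⟨h1, rfl⟩ := h
    exact ⟨le_trans le_add_self h1, le_tsub_of_add_le_right h1⟩
  · rintro ⟨α, γ⟩ h
    simp only [Finset.mem_sigma, Finset.mem_Iic, Finset.HasAntidiagonal.mem_antidiagonal] at h ⊢
    refine ⟨?_, trivial⟩
    exact (le_tsub_iff_right h.1).1 h.2
  · rintro ⟨δ, γ, α⟩ h
    simp only [Finset.mem_sigma, Finset.mem_Iic, Finset.HasAntidiagonal.mem_antidiagonal] at h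
    obtain ⟨h1, rfl⟩ := h
    rfl
  · rintro ⟨α, γ⟩ h
    rfl
  · rintro ⟨δ, γ, α⟩ h
    simp only [Finset.mem_sigma, Finset.mem_Iic, Finset.HasAntidiagonal.mem_antidiagonal] at h
    obtain ⟨h1, rfl⟩ := h
    simp only [smul_smul]
    rw [tsub_tsub, add_comm α γ]
    congr 1
    have : (∏ i, ((β i).descFactorial ((γ + α) i) : K)) =
      (∏ i, ((β i).descFactorial (α i) : K)) * ∏ i, (((β - α) i).descFactorial (γ i) : K) := by
      rw [← Finset.prod_mul_distrib]
      refine Finset.prod_congr rfl fun i _ => ?_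
      rw [Finsupp.add_apply, desc_add, Finsupp.tsub_apply]
      push_cast; rfl
    rw [this]; ring

theorem contract_C (c : K) : contract (MvPowerSeries.C (σ := Fin n) c) = c • LinearMap.id := by
  apply hom_ext'
  intro β
  rw [contract_monomial, Finset.sum_eq_single 0]
  · simp
  · intro α _ h
    rw [MvPowerSeries.coeff_C, if_neg h]; simp
  · simp

theorem contract_X (i : Fin n) :
    contract (MvPowerSeries.X i) = (pderiv (R := K) i).toLinearMap := by
  apply hom_ext'
  intro β
  rw [contract_monomial]
  change _ = pderiv i (monomial β (1 : K))
  rw [pderiv_monomial]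
  have : ∀ α, (MvPowerSeries.coeff α (MvPowerSeries.X i : MvPowerSeries (Fin n) K) * ∏ i, ((β i).descFactorial (α i) : K)) •
        monomial (β - α) (1 : K) = if α = Finsupp.single i 1 then monomial (β - Finsupp.single i 1) ((β i : ℕ) : K) else 0 := by
    intro α
    rw [MvPowerSeries.coeff_X]
    split_ifs with h
    · subst h
      rw [Finset.prod_eq_single i]
      · simp [smul_monomial]
      · intro j _ hj
        simp [Finsupp.single_apply, hj.symm]
      · simp
    · simp
  simp_rw [this]
  rw [Finset.sum_ite_eq', one_mul]
  split_ifs with h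
  · rfl
  · have : β i = 0 := by
      by_contra h0
      apply h
      rw [Finset.mem_Iic, Finsupp.single_le_iff]; omega
    rw [this]; simp

theorem mem_annR {F : MvPolynomial (Fin n) K} {f : MvPowerSeries (Fin n) K} :
    f ∈ annR F ↔ contract f F = 0 := by
  constructor
  · intro h
    have := h 1
    rwa [one_mul] at this
  · intro h u
    rw [contract_mul, LinearMap.comp_apply, h, map_zero]

theorem contract_linForm (l : Fin n → K) (F : MvPolynomial (Fin n) K) :
    contract (linForm l) F = ∑ i, l i • pderiv i F := by
  have : linForm l = ∑ i, l i • (MvPowerSeries.X i : MvPowerSeries (Fin n) K) := by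
    unfold linForm
    refine Finset.sum_congr rfl fun i _ => ?_
    rw [MvPowerSeries.X, ← map_smul]; simp
  rw [this, ← contractL_apply, map_sum, LinearMap.sum_apply]
  refine Finset.sum_congr rfl fun i _ => ?_
  rw [map_smul, contractL_apply, contract_X]; rfl

theorem contract_eq_zero {f : MvPowerSeries (Fin n) K} {F : MvPolynomial (Fin n) K} {d : ℕ}
    (hF : F.totalDegree ≤ d) (hf : ∀ α : Fin n →₀ ℕ, α.degree ≤ d → MvPowerSeries.coeff α f = 0) :
    contract f F = 0 := by
  rw [F.as_sum, map_sum]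
  refine Finset.sum_eq_zero fun β hβ => ?_
  have : monomial β (coeff β F) = coeff β F • monomial β (1 : K) := by
    rw [smul_monomial]; simp
  rw [this, map_smul, contract_monomial, Finset.sum_eq_zero, smul_zero]
  intro α hα
  rw [hf, zero_mul, zero_smul]
  rw [Finset.mem_Iic] at hα
  have h1 := le_totalDegree hβ
  have h2 : α.degree ≤ β.degree := Finsupp.degree_mono hα
  have h3 : β.degree = β.sum fun _ e => e := rfl
  omega

theorem contract_congr {f g : MvPowerSeries (Fin n) K} {F : MvPolynomial (Fin n) K} {d : ℕ}
    (hF : F.totalDegree ≤ d) (hf : (d + 1 : ℕ) ≤ (f - g).order) :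
    contract f F = contract g F := by
  rw [← sub_eq_zero]
  have : contract (f - g) F = 0 := by
    apply contract_eq_zero hF
    intro α hα
    apply MvPowerSeries.coeff_of_lt_order
    refine lt_of_lt_of_le ?_ hf
    exact_mod_cast Nat.lt_succ_of_le hα
  rw [← this, ← contractL_apply, ← contractL_apply, ← contractL_apply, map_sub]; rfl

end AFProof

namespace AFProof
open MvPolynomial

variable {K : Type*} [Field K] {n : ℕ}

noncomputable def lin (A : Matrix (Fin n) (Fin n) K) :
    MvPolynomial (Fin n) K →ₐ[K] MvPolynomial (Fin n) K :=
  aeval (fun i => ∑ j, A i j • (X j : MvPolynomial (Fin n) K))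

theorem lin_X (A : Matrix (Fin n) (Fin n) K) (i : Fin n) :
    lin A (X i) = ∑ j, A i j • (X j : MvPolynomial (Fin n) K) := by
  simp [lin]

theorem lin_lin (A B : Matrix (Fin n) (Fin n) K) (F : MvPolynomial (Fin n) K) :
    lin A (lin B F) = lin (B * A) F := by
  suffices h : (lin A).comp (lin B) = lin (B * A) from DFunLike.congr_fun h F
  apply MvPolynomial.algHom_ext
  intro i
  rw [AlgHom.comp_apply, lin_X, lin_X, map_sum]
  simp_rw [map_smul, lin_X, Finset.smul_sum, smul_smul, Matrix.mul_apply, Finset.sum_smul]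
  rw [Finset.sum_comm]

theorem lin_one (F : MvPolynomial (Fin n) K) : lin (1 : Matrix (Fin n) (Fin n) K) F = F := by
  suffices h : lin (1 : Matrix (Fin n) (Fin n) K) = AlgHom.id K _ from DFunLike.congr_fun h F
  apply MvPolynomial.algHom_ext
  intro i
  rw [lin_X]
  simp [Matrix.one_apply]

theorem pderiv_lin (A : Matrix (Fin n) (Fin n) K) (F : MvPolynomial (Fin n) K) (j : Fin n) :
    pderiv j (lin A F) = ∑ i, A i j • lin A (pderiv i F) := by
  induction F using MvPolynomial.induction_on with
  | C a =>
    have : lin A (C a) = C a := by simp [lin]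
    simp [this]
  | add p q hp hq =>
    simp only [map_add, hp, hq, smul_add, Finset.sum_add_distrib]
  | mul_X p k hp =>
    have h1 : pderiv j (lin A (X k)) = C (A k j) := by
      rw [lin_X, map_sum]
      simp [pderiv_X, Pi.single_apply, MvPolynomial.smul_eq_C_mul]
    have h2 : ∀ i, A i j • lin A (pderiv i (p * X k)) =
        (A i j • lin A (pderiv i p)) * lin A (X k) + if i = k then A k j • lin A p else 0 := by
      intro i
      rw [pderiv_mul, map_add, map_mul, map_mul, pderiv_X, smul_add, smul_mul_assoc]
      congr 1
      split_ifs with h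
      · subst h; simp
      · simp [Pi.single_apply, Ne.symm h]
    simp_rw [h2]
    rw [Finset.sum_add_distrib, ← Finset.sum_mul, ← hp, map_mul, pderiv_mul, h1]
    simp [MvPolynomial.smul_eq_C_mul, mul_comm]

theorem contract_coe_lin (A : Matrix (Fin n) (Fin n) K) (p : MvPolynomial (Fin n) K) :
    ∀ F : MvPolynomial (Fin n) K, contract (p : MvPowerSeries (Fin n) K) (lin A F) =
      lin A (contract (lin A.transpose p : MvPowerSeries (Fin n) K) F) := by
  induction p using MvPolynomial.induction_on with
  | C a =>
    intro F
    have : lin A.transpose (C a) = C a := by simp [lin]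
    rw [this, MvPolynomial.coe_C, contract_C]
    simp
  | add p q hp hq =>
    intro F
    rw [map_add, MvPolynomial.coe_add, MvPolynomial.coe_add, contract_add, contract_add]
    simp only [LinearMap.add_apply, map_add, hp, hq]
  | mul_X p k hp =>
    intro F
    have h : contract (lin A.transpose (X k) : MvPowerSeries (Fin n) K) F =
        ∑ i, A i k • pderiv i F := by
      rw [← contract_linForm]
      congr 2
      rw [lin_X]
      unfold linForm
      rw [← MvPolynomial.coeToMvPowerSeries.ringHom_apply, map_sum]
      refine Finset.sum_congr rfl fun i _ => ?_
      rw [MvPolynomial.coeToMvPowerSeries.ringHom_apply, X, smul_monomial,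
        MvPolynomial.coe_monomial]
      simp
    rw [map_mul, MvPolynomial.coe_mul, MvPolynomial.coe_mul, contract_mul, contract_mul,
      LinearMap.comp_apply, LinearMap.comp_apply, h, MvPolynomial.coe_X, contract_X]
    change contract _ (pderiv k (lin A F)) = _
    rw [pderiv_lin, ← hp, map_sum (lin A)]
    simp_rw [map_smul]

noncomputable def piF (F : MvPolynomial (Fin n) K) :
    MvPolynomial (Fin n) K →ₐ[K] (MvPowerSeries (Fin n) K ⧸ annR F) :=
  (Ideal.Quotient.mkₐ K (annR F)).comp (MvPolynomial.coeToMvPowerSeries.algHom K)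

theorem piF_apply (F p : MvPolynomial (Fin n) K) :
    piF F p = Ideal.Quotient.mk (annR F) (p : MvPowerSeries (Fin n) K) := by
  simp [piF]

theorem piF_eq_zero (F p : MvPolynomial (Fin n) K) :
    piF F p = 0 ↔ contract (p : MvPowerSeries (Fin n) K) F = 0 := by
  rw [piF_apply, Ideal.Quotient.eq_zero_iff_mem, mem_annR]

theorem piF_surj (F : MvPolynomial (Fin n) K) : Function.Surjective (piF F) := by
  intro y
  obtain ⟨f, rfl⟩ := Ideal.Quotient.mk_surjective y
  refine ⟨MvPowerSeries.truncTotal (F.totalDegree + 1) f, ?_⟩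
  rw [piF_apply, Ideal.Quotient.eq, mem_annR]
  apply contract_eq_zero le_rfl
  intro α hα
  rw [map_sub, MvPolynomial.coeff_coe, MvPowerSeries.coeff_truncTotal _ (by omega), sub_self]

theorem iso_of_lin (A B : Matrix (Fin n) (Fin n) K) (hAB : A * B = 1)
    (F : MvPolynomial (Fin n) K) :
    Nonempty ((MvPowerSeries (Fin n) K ⧸ annR F) ≃ₐ[K]
      (MvPowerSeries (Fin n) K ⧸ annR (lin A F))) := by
  have hinj : Function.Injective (lin A) := by
    intro p q h
    have := congrArg (lin B) h
    rwa [lin_lin, lin_lin, hAB, lin_one, lin_one] at this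
  have hsurj : Function.Surjective (lin A.transpose) := by
    intro p
    refine ⟨lin B.transpose p, ?_⟩
    rw [lin_lin, ← Matrix.transpose_mul, hAB, Matrix.transpose_one, lin_one]
  have hs : Function.Surjective ((piF F).comp (lin A.transpose)) := (piF_surj F).comp hsurj
  have hker : RingHom.ker ((piF F).comp (lin A.transpose)) = RingHom.ker (piF (lin A F)) := by
    ext p
    rw [RingHom.mem_ker, RingHom.mem_ker, AlgHom.comp_apply, piF_eq_zero, piF_eq_zero,
      contract_coe_lin, map_eq_zero_iff _ hinj]
  exact ⟨(Ideal.quotientKerAlgEquivOfSurjective hs).symm.trans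
    ((Ideal.quotientEquivAlgOfEq K hker).trans
      (Ideal.quotientKerAlgEquivOfSurjective (piF_surj (lin A F))))⟩

theorem homog_D (v : Fin n → K) {F : MvPolynomial (Fin n) K} {d : ℕ} (hF : F.IsHomogeneous d) :
    (contract (linForm v) F).IsHomogeneous (d - 1) := by
  rw [contract_linForm]
  apply IsHomogeneous.sum
  intro i _
  rw [MvPolynomial.smul_eq_C_mul]
  exact hF.pderiv.C_mul _

theorem eval_D (v : Fin n → K) {F : MvPolynomial (Fin n) K} {d : ℕ} (hF : F.IsHomogeneous d) :
    eval v (contract (linForm v) F) = d * eval v F := by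
  have := congrArg (eval v) hF.sum_X_mul_pderiv
  rw [contract_linForm, map_sum]
  simp only [map_sum, map_mul, eval_X, nsmul_eq_mul, map_natCast] at this
  rw [← this]
  simp [MvPolynomial.smul_eq_C_mul]

theorem cube (v : Fin n → K) {F : MvPolynomial (Fin n) K} (hF : F.IsHomogeneous 3) :
    contract (linForm v ^ 3) F = C (6 * eval v F) := by
  have h1 := homog_D v hF
  have h2 := homog_D v h1
  have h3 := homog_D v h2
  have e1 := eval_D v hF
  have e2 := eval_D v h1
  have e3 := eval_D v h2
  have h : contract (linForm v ^ 3) F =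
    contract (linForm v) (contract (linForm v) (contract (linForm v) F)) := by
    rw [pow_succ, pow_two, contract_mul, contract_mul]; rfl
  rw [h]
  have h4 := (totalDegree_eq_zero_iff_eq_C (p := contract (linForm v) (contract (linForm v) (contract (linForm v) F)))).1 (by
    have := h3.totalDegree_le; omega)
  rw [h4] at e3 ⊢
  rw [eval_C] at e3
  rw [e3, e2, e1]
  congr 1
  push_cast; norm_num; ring

theorem order_linForm (v : Fin n → K) : 1 ≤ (linForm v).order := by
  rw [MvPowerSeries.one_le_order_iff_constCoeff_eq_zero]
  unfold linForm
  rw [map_sum]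
  refine Finset.sum_eq_zero fun i _ => ?_
  rw [← MvPowerSeries.coeff_zero_eq_constantCoeff_apply, MvPowerSeries.coeff_monomial, if_neg]
  intro h
  have := DFunLike.congr_fun h i
  simp at this

theorem cube2 (v : Fin n → K) {F Q : MvPolynomial (Fin n) K} (hF : F.IsHomogeneous 3)
    (hQ : Q.totalDegree ≤ 2) :
    contract (linForm v ^ 3) (F + Q) = C (6 * eval v F) := by
  rw [map_add, cube v hF]
  rw [contract_eq_zero hQ, add_zero]
  intro α hα
  apply MvPowerSeries.coeff_of_lt_order
  refine lt_of_lt_of_le ?_ (MvPowerSeries.le_order_pow_of_constantCoeff_eq_zero 3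
    (MvPowerSeries.one_le_order_iff_constCoeff_eq_zero.1 (order_linForm v)))
  exact_mod_cast Nat.lt_succ_of_le hα

theorem cube_gen {g : MvPowerSeries (Fin n) K} (hg : g.constantCoeff = 0)
    {F Q : MvPolynomial (Fin n) K} (hF : F.IsHomogeneous 3)
    (hQ : Q.totalDegree ≤ 2) :
    contract (g ^ 3) (F + Q) =
      C (6 * eval (fun i => MvPowerSeries.coeff (Finsupp.single i 1) g) F) := by
  rw [← cube2 _ hF hQ]
  set l := linForm (fun i => MvPowerSeries.coeff (Finsupp.single i 1) g) with hl
  apply contract_congr (d := 3)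
  · exact (totalDegree_add _ _).trans (max_le hF.totalDegree_le (hQ.trans (by norm_num)))
  have ho : 1 ≤ g.order := MvPowerSeries.one_le_order_iff_constCoeff_eq_zero.2 hg
  have hlo : 1 ≤ l.order := order_linForm _
  have hlc := MvPowerSeries.one_le_order_iff_constCoeff_eq_zero.1 hlo
  have h2 : ((2 : ℕ) : ℕ∞) ≤ (g - l).order := by
    apply MvPowerSeries.nat_le_order
    intro d hd
    have hd : d.degree = 0 ∨ d.degree = 1 := by omega
    rcases hd with hd | hd
    · rw [Finsupp.degree_eq_zero_iff] at hd
      subst hd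
      rw [MvPowerSeries.coeff_zero_eq_constantCoeff_apply, map_sub, hg, hlc, sub_zero]
    · obtain ⟨i, rfl⟩ := (Finsupp.sum_eq_one_iff d).1 hd
      rw [map_sub, hl, linForm, map_sum, Finset.sum_eq_single i]
      · simp
      · intro j _ hj
        rw [MvPowerSeries.coeff_monomial, if_neg]
        rw [Finsupp.single_left_inj (by norm_num)]
        exact hj.symm
      · simp
  have hmul : ∀ {a b : MvPowerSeries (Fin n) K}, 1 ≤ a.order → 1 ≤ b.order → 2 ≤ (a * b).order := by
    intro a b ha hb
    refine le_trans ?_ MvPowerSeries.le_order_mul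
    exact le_trans (by norm_num) (add_le_add ha hb)
  have hq : 2 ≤ (g * g + g * l + l * l).order := by
    refine le_trans (le_min (le_trans (le_min (hmul ho ho) (hmul ho hlo)) MvPowerSeries.min_order_le_add) (hmul hlo hlo)) MvPowerSeries.min_order_le_add
  have : g ^ 3 - l ^ 3 = (g - l) * (g * g + g * l + l * l) := by ring
  rw [this]
  refine le_trans ?_ MvPowerSeries.le_order_mul
  exact le_trans (by norm_num) (add_le_add h2 hq)

end AFProof

namespace AFProof
open MvPolynomial

variable {K : Type*} [Field K]

theorem eval_scale {n d : ℕ} {F : MvPolynomial (Fin n) K} (hF : F.IsHomogeneous d) (s : K)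
    (v : Fin n → K) : eval (s • v) F = s ^ d * eval v F := by
  rw [eval_eq', eval_eq', Finset.mul_sum]
  refine Finset.sum_congr rfl fun e he => ?_
  have h1 : e.degree = d := by
    by_contra h
    exact (mem_support_iff.1 he) (hF.coeff_eq_zero h)
  have h2 : ∑ i, e i = d := by rw [← h1, Finsupp.degree_eq_sum]
  simp_rw [Pi.smul_apply, smul_eq_mul, mul_pow]
  rw [Finset.prod_mul_distrib, Finset.prod_pow_eq_pow_sum, h2]
  ring

theorem eval_lin {n : ℕ} (A : Matrix (Fin n) (Fin n) K) (v : Fin n → K)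
    (F : MvPolynomial (Fin n) K) : eval v (lin A F) = eval (A.mulVec v) F := by
  induction F using MvPolynomial.induction_on with
  | C a => simp [lin]
  | add p q hp hq => simp only [map_add, hp, hq]
  | mul_X p k hp =>
    rw [map_mul, map_mul, map_mul, hp, lin_X, eval_X]
    simp [Matrix.mulVec, dotProduct, MvPolynomial.smul_eq_C_mul]

theorem lin_scale [Infinite K] {n d : ℕ} {F : MvPolynomial (Fin n) K} (hF : F.IsHomogeneous d)
    (s : K) (A : Matrix (Fin n) (Fin n) K) : lin (s • A) F = s ^ d • lin A F := by
  apply MvPolynomial.funext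
  intro v
  rw [eval_lin, Matrix.smul_mulVec, eval_scale hF, smul_eval, eval_lin]

theorem n_eq_zero {n : ℕ} (h : nondegenerate (0 : MvPolynomial (Fin n) K)) : n = 0 := by
  by_contra hn
  have := h (fun _ => 1) (by rw [mem_annR, map_zero])
  have := congrFun this ⟨0, Nat.pos_of_ne_zero hn⟩
  simp at this

theorem eq_zero_of_n {F : MvPolynomial (Fin 0) K} (hF : F.IsHomogeneous 3) : F = 0 := by
  ext d
  rw [coeff_zero]
  apply hF.coeff_eq_zero
  rw [Subsingleton.elim d 0]; simp

theorem totalDegree_Q (m n : ℕ) :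
    (∑ j ∈ Finset.univ.filter (fun j : Fin m => n ≤ (j : ℕ)),
      (X j : MvPolynomial (Fin m) K) ^ 2).totalDegree ≤ 2 := by
  apply totalDegree_finsetSum_le
  intro i _
  simp

theorem backward [IsAlgClosed K] {n k : ℕ} (F3 G3 : MvPolynomial (Fin n) K)
    (hF3 : F3.IsHomogeneous 3) (h : projEquiv F3 G3) :
    Nonempty ((MvPowerSeries (Fin (n + k)) K ⧸
        annR (K := K) (n := n + k) (rename (Fin.castAdd k) F3 +
          ∑ j ∈ Finset.univ.filter (fun j : Fin (n + k) => n ≤ (j : ℕ)), X j ^ 2)) ≃ₐ[K]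
      (MvPowerSeries (Fin (n + k)) K ⧸
        annR (K := K) (n := n + k) (rename (Fin.castAdd k) G3 +
          ∑ j ∈ Finset.univ.filter (fun j : Fin (n + k) => n ≤ (j : ℕ)), X j ^ 2))) := by
  obtain ⟨φ, c, hc, h⟩ := h
  change lin (φ : Matrix (Fin n) (Fin n) K) F3 = c • G3 at h
  obtain ⟨z, hz⟩ := IsAlgClosed.exists_pow_nat_eq c (n := 3) (by norm_num)
  have hz0 : z ≠ 0 := by
    rintro rfl
    apply hc; rw [← hz]; norm_num
  have : Infinite K := IsAlgClosed.instInfinite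
  set A : Matrix (Fin n) (Fin n) K := z⁻¹ • (φ : Matrix (Fin n) (Fin n) K) with hA
  set B : Matrix (Fin n) (Fin n) K := z • ((φ⁻¹ : GL (Fin n) K) : Matrix (Fin n) (Fin n) K) with hB
  have hAB : A * B = 1 := by
    rw [hA, hB, Matrix.smul_mul, Matrix.mul_smul, smul_smul, inv_mul_cancel₀ hz0, one_smul,
      ← Units.val_mul, mul_inv_cancel, Units.val_one]
  have hAF : lin A F3 = G3 := by
    rw [hA, lin_scale hF3, h, smul_smul, ← hz, ← mul_pow, inv_mul_cancel₀ hz0, one_pow, one_smul]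
  let e : Fin n ⊕ Fin k ≃ Fin (n + k) := finSumFinEquiv
  let A' : Matrix (Fin (n + k)) (Fin (n + k)) K := Matrix.reindex e e (Matrix.fromBlocks A 0 0 1)
  let B' : Matrix (Fin (n + k)) (Fin (n + k)) K := Matrix.reindex e e (Matrix.fromBlocks B 0 0 1)
  have hAB' : A' * B' = 1 := by
    simp only [A', B', Matrix.reindex_apply]
    rw [Matrix.submatrix_mul_equiv, Matrix.fromBlocks_multiply]
    simp [hAB]
  have key : lin A' (rename (Fin.castAdd k) F3 +
      ∑ j ∈ Finset.univ.filter (fun j : Fin (n + k) => n ≤ (j : ℕ)), X j ^ 2) =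
      rename (Fin.castAdd k) G3 +
      ∑ j ∈ Finset.univ.filter (fun j : Fin (n + k) => n ≤ (j : ℕ)), X j ^ 2 := by
    rw [map_add, map_sum, ← hAF]
    congr 1
    · suffices hh : (lin A').comp (rename (Fin.castAdd k)) =
        (rename (Fin.castAdd k)).comp (lin A) from DFunLike.congr_fun hh F3
      apply MvPolynomial.algHom_ext
      intro i
      rw [AlgHom.comp_apply, AlgHom.comp_apply, rename_X, lin_X, lin_X, Fin.sum_univ_add, map_sum]
      simp [A', e, Matrix.reindex_apply]
    · refine Finset.sum_congr rfl fun j hj => ?_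
      rw [map_pow]
      congr 1
      rw [Finset.mem_filter] at hj
      obtain ⟨i, rfl⟩ : ∃ i, j = Fin.natAdd n i :=
        ⟨⟨j - n, by omega⟩, by ext; simp; omega⟩
      rw [lin_X, Fin.sum_univ_add]
      simp [A', e, Matrix.reindex_apply, Matrix.one_apply]
  have := iso_of_lin A' B' hAB' (rename (Fin.castAdd k) F3 +
      ∑ j ∈ Finset.univ.filter (fun j : Fin (n + k) => n ≤ (j : ℕ)), X j ^ 2)
  rwa [key] at this

theorem coeff_lc {m n : ℕ} (g : Fin n → MvPowerSeries (Fin m) K) (a : Fin n → K)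
    (d : Fin m →₀ ℕ) :
    MvPowerSeries.coeff d (∑ j, a j • g j) = ∑ j, MvPowerSeries.coeff d (g j) * a j := by
  rw [map_sum]
  refine Finset.sum_congr rfl fun j _ => ?_
  rw [map_smul, smul_eq_mul, mul_comm]

theorem cube_lc {m n : ℕ} {ι : Fin n → Fin m} (hι : Function.Injective ι)
    (g : Fin n → MvPowerSeries (Fin m) K)
    (hg : ∀ i, (g i).constantCoeff = 0) {F3 : MvPolynomial (Fin n) K}
    {Q : MvPolynomial (Fin m) K} (hF : F3.IsHomogeneous 3) (hQ : Q.totalDegree ≤ 2)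
    (a : Fin n → K) :
    contract ((∑ j, a j • g j) ^ 3) (rename ι F3 + Q) =
      C (6 * eval ((Matrix.of fun i j =>
        MvPowerSeries.coeff (Finsupp.single (ι i) 1) (g j)).mulVec a) F3) := by
  rw [cube_gen _ hF.rename_isHomogeneous hQ, eval_rename]
  · congr 4
    funext i
    simp only [Function.comp_apply, coeff_lc, Matrix.mulVec, dotProduct, Matrix.of_apply]
  · rw [← MvPowerSeries.coeff_zero_eq_constantCoeff_apply, coeff_lc]
    refine Finset.sum_eq_zero fun j _ => ?_
    rw [MvPowerSeries.coeff_zero_eq_constantCoeff_apply, hg, zero_mul]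

theorem forward [CharZero K] {m n : ℕ} {ι : Fin n → Fin m} (hι : Function.Injective ι)
    (F3 G3 : MvPolynomial (Fin n) K) (Q Q' : MvPolynomial (Fin m) K)
    (hQ : Q.totalDegree ≤ 2) (hQ' : Q'.totalDegree ≤ 2)
    (hF3 : F3.IsHomogeneous 3) (hndF : nondegenerate F3)
    (hG3 : G3.IsHomogeneous 3) (hndG : nondegenerate G3)
    (θ : (MvPowerSeries (Fin m) K ⧸ annR (rename ι G3 + Q')) ≃ₐ[K]
      (MvPowerSeries (Fin m) K ⧸ annR (rename ι F3 + Q))) : projEquiv F3 G3 := by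
  by_cases hn : n = 0
  · subst hn
    refine ⟨1, 1, one_ne_zero, ?_⟩
    rw [eq_zero_of_n hF3, eq_zero_of_n hG3]; simp
  have hF0 : F3 ≠ 0 := by rintro rfl; exact hn (n_eq_zero hndF)
  have hG0 : G3 ≠ 0 := by rintro rfl; exact hn (n_eq_zero hndG)
  have hFQ : rename ι F3 + Q ≠ 0 := by
    intro h
    have h1 : rename ι F3 = -Q := eq_neg_of_add_eq_zero_left h
    have h2 : (rename ι F3).IsHomogeneous 3 := hF3.rename_isHomogeneous
    have h3 := h2.totalDegree (by
      rw [Ne, map_eq_zero_iff _ (rename_injective ι hι)]; exact hF0)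
    rw [h1, totalDegree_neg] at h3
    omega
  have hGd : (rename ι G3 + Q').totalDegree ≤ 3 :=
    (totalDegree_add _ _).trans (max_le
      (hG3.rename_isHomogeneous).totalDegree_le (hQ'.trans (by norm_num)))
  let x : Fin n → MvPowerSeries (Fin m) K := fun i => MvPowerSeries.X (ι i)
  have hx : ∀ i, (x i).constantCoeff = 0 := fun i => by simp [x]
  choose g hg using fun i => Ideal.Quotient.mk_surjective (θ (Ideal.Quotient.mk _ (x i)))
  have hmem : ∀ p q : MvPowerSeries (Fin m) K,
      Ideal.Quotient.mk _ q = θ (Ideal.Quotient.mk _ p) →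
      (contract p (rename ι G3 + Q') = 0 ↔ contract q (rename ι F3 + Q) = 0) := by
    intro p q h
    rw [← mem_annR, ← mem_annR, ← Ideal.Quotient.eq_zero_iff_mem, ← Ideal.Quotient.eq_zero_iff_mem,
      h, map_eq_zero_iff _ θ.injective]
  have hg0 : ∀ i, (g i).constantCoeff = 0 := by
    intro i
    by_contra h0
    have hu : IsUnit (g i ^ 4) := by
      apply IsUnit.pow
      rw [MvPowerSeries.isUnit_iff_constantCoeff]
      exact isUnit_iff_ne_zero.2 h0
    have h1 := (hmem (x i ^ 4) (g i ^ 4) (by rw [map_pow, map_pow, map_pow, hg])).1 (by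
      apply contract_eq_zero hGd
      intro α hα
      apply MvPowerSeries.coeff_of_lt_order
      refine lt_of_lt_of_le ?_ (MvPowerSeries.le_order_pow_of_constantCoeff_eq_zero 4 (hx i))
      exact_mod_cast Nat.lt_succ_of_le hα)
    rw [← mem_annR] at h1
    have h2 := (Ideal.eq_top_of_isUnit_mem _ h1 hu)
    have h3 : (MvPowerSeries.C (1 : K)) ∈ annR (rename ι F3 + Q) := by rw [h2]; trivial
    rw [mem_annR, contract_C] at h3
    apply hFQ
    simpa using h3
  set φ : Matrix (Fin n) (Fin n) K := Matrix.of fun i j =>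
        MvPowerSeries.coeff (Finsupp.single (ι i) 1) (g j) with hφ
  have hcF := fun a => cube_lc (Q := Q) hι g hg0 hF3 hQ a
  have hcG : ∀ a, contract ((∑ j, a j • x j) ^ 3) (rename ι G3 + Q') = C (6 * eval a G3) := by
    intro a
    rw [cube_lc (Q := Q') hι x hx hG3 hQ' a]
    have : (Matrix.of fun i j => MvPowerSeries.coeff (Finsupp.single (ι i) 1) (x j)) =
        (1 : Matrix (Fin n) (Fin n) K) := by
      ext i j
      simp only [Matrix.of_apply, x, MvPowerSeries.coeff_X, Matrix.one_apply]
      congr 1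
      rw [Finsupp.single_left_inj (by norm_num), hι.eq_iff]
    rw [this, Matrix.one_mulVec]
  have key : ∀ (r : K) (a b : Fin n → K),
      eval a G3 = r * eval b G3 ↔ eval (φ.mulVec a) F3 = r * eval (φ.mulVec b) F3 := by
    intro r a b
    have h6 : (6 : K) ≠ 0 := by norm_num
    have hsum : ∀ a : Fin n → K, Ideal.Quotient.mk (annR (rename ι F3 + Q)) (∑ j, a j • g j) =
        θ (Ideal.Quotient.mk _ (∑ j, a j • x j)) := by
      intro a
      have e1 : ∀ (c : K) f, Ideal.Quotient.mk (annR (rename ι F3 + Q)) (c • f) = c • Ideal.Quotient.mk (annR (rename ι F3 + Q)) f := fun _ _ => rfl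
      have e2 : ∀ (c : K) f, Ideal.Quotient.mk (annR (rename ι G3 + Q')) (c • f) = c • Ideal.Quotient.mk (annR (rename ι G3 + Q')) f := fun _ _ => rfl
      simp only [map_sum, e1, e2, map_smul, hg]
    have := hmem ((∑ j, a j • x j) ^ 3 - MvPowerSeries.C r * (∑ j, b j • x j) ^ 3)
      ((∑ j, a j • g j) ^ 3 - MvPowerSeries.C r * (∑ j, b j • g j) ^ 3) (by
        rw [map_sub, map_sub, map_sub, map_mul, map_mul, map_mul, map_pow, map_pow, map_pow,
          map_pow, map_pow, map_pow, hsum, hsum]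
        congr 2
        exact (θ.commutes r).symm)
    have e : ∀ (p q : MvPowerSeries (Fin m) K) (F : MvPolynomial (Fin m) K),
        contract (p - MvPowerSeries.C r * q) F = contract p F - r • contract q F := by
      intro p q F
      rw [← contractL_apply, map_sub, LinearMap.sub_apply, contractL_apply, contractL_apply,
        contract_mul, contract_C]
      rfl
    rw [e, e, hcF, hcF, hcG, hcG, MvPolynomial.smul_eq_C_mul, MvPolynomial.smul_eq_C_mul,
      ← C_mul, ← C_mul, ← C_sub, ← C_sub, C_eq_zero, C_eq_zero, sub_eq_zero, sub_eq_zero,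
      mul_left_comm r, mul_left_comm r, mul_right_inj' h6, mul_right_inj' h6] at this
    exact this
  obtain ⟨b, hb⟩ : ∃ b, eval b G3 ≠ 0 := by
    by_contra! h
    exact hG0 (MvPolynomial.funext fun v => by rw [h, map_zero])
  have hb' : eval (φ.mulVec b) F3 ≠ 0 := by
    intro h
    apply hb
    have := (key 0 b b).2 (by rw [h, mul_zero])
    rwa [zero_mul] at this
  set c := eval (φ.mulVec b) F3 / eval b G3 with hc
  have hc0 : c ≠ 0 := div_ne_zero hb' hb
  have hlin : lin φ F3 = c • G3 := by
    apply MvPolynomial.funext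
    intro a
    rw [eval_lin, smul_eval, (key (eval a G3 / eval b G3) a b).1 (by field_simp), hc]
    field_simp
  have hdet : φ.det ≠ 0 := by
    intro h
    obtain ⟨v, hv, hv0⟩ := Matrix.exists_mulVec_eq_zero_iff.2 h
    apply hv
    apply hndG
    rw [mem_annR]
    have h1 : contract (linForm v) (c • G3) = 0 := by
      rw [← hlin, contract_linForm]
      simp_rw [pderiv_lin, Finset.smul_sum, smul_smul]
      rw [Finset.sum_comm]
      refine Finset.sum_eq_zero fun i _ => ?_
      rw [← Finset.sum_smul]
      have := congrFun hv0 i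
      simp only [Matrix.mulVec, dotProduct, Pi.zero_apply] at this
      simp_rw [mul_comm (v _)]
      rw [this, zero_smul]
    rw [map_smul] at h1
    exact (smul_eq_zero.1 h1).resolve_left hc0
  exact ⟨Matrix.GeneralLinearGroup.mkOfDetNeZero φ hdet, c, hc0, hlin⟩

end AFProof

/-- For `m ≥ n` and non-degenerate cubic forms `F_3, G_3 ∈ K[y_1,…,y_n]`, setting
`F = F_3 + y_{n+1}^2 + ⋯ + y_m^2` and `G = G_3 + y_{n+1}^2 + ⋯ + y_m^2`, the
algebras `A_F` and `A_G` are isomorphic as `K`-algebras iff `F_3` and `G_3` are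
projectively equivalent. -/
theorem aF_normal_forms_iso_iff_proj_equiv
    {K : Type*} [Field K] [IsAlgClosed K] [CharZero K] {m n : ℕ} (hnm : n ≤ m)
    (F3 G3 : MvPolynomial (Fin n) K)
    (hF3 : F3.IsHomogeneous 3) (hndF : nondegenerate F3)
    (hG3 : G3.IsHomogeneous 3) (hndG : nondegenerate G3) :
    Nonempty ((MvPowerSeries (Fin m) K ⧸
        annR (K := K) (n := m) (MvPolynomial.rename (Fin.castLE hnm) F3 +
          ∑ j ∈ Finset.univ.filter (fun j : Fin m => n ≤ (j : ℕ)),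
            MvPolynomial.X j ^ 2)) ≃ₐ[K]
      (MvPowerSeries (Fin m) K ⧸
        annR (K := K) (n := m) (MvPolynomial.rename (Fin.castLE hnm) G3 +
          ∑ j ∈ Finset.univ.filter (fun j : Fin m => n ≤ (j : ℕ)),
            MvPolynomial.X j ^ 2))) ↔
      projEquiv F3 G3 := by
  constructor
  · rintro ⟨ψ⟩
    exact AFProof.forward (Fin.castLE_injective hnm) F3 G3 _ _ (AFProof.totalDegree_Q m n)
      (AFProof.totalDegree_Q m n) hF3 hndF hG3 hndG ψ.symm
  · intro h
    obtain ⟨k, rfl⟩ := Nat.exists_eq_add_of_le hnm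
    exact AFProof.backward F3 G3 hF3 h
end

section
/- Let R = K[[x_1,x_2]] and let A = R/(x_1^4, −x_1^3 + x_2^2). Then A is an Artinian Gorenstein local K-algebra with Hilbert function {1,2,2,2,1}, its associated graded ring is isomorphic to R/(x_1^4, x_2^2), and A is NOT isomorphic as a K-algebra to its associated graded ring. In particular, an Artinian Gorenstein local K-algebra with symmetric Hilbert function and socle degree four need not be canonically graded. -/
/-- The maximal ideal `M = (x_1, …, x_n)` of `R = K[[x_1,…,x_n]]`,
i.e. the ideal of power series with zero constant term. -/
noncomputable def mxR (K : Type*) [Field K] (n : ℕ) : Ideal (MvPowerSeries (Fin n) K) :=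
  RingHom.ker (MvPowerSeries.constantCoeff (σ := Fin n) (R := K))

/-- The Hilbert function of `A = R/I` where `R = K[[x_1,…,x_n]]`:
`HF_A(i) = dim_K (m^i/m^(i+1)) = dim_K A/m^(i+1) - dim_K A/m^i`, computed via
`A/m^j = R/(I + M^j)` where `M = (x_1,…,x_n)`. -/
noncomputable def hilbQ {K : Type*} [Field K] {n : ℕ}
    (I : Ideal (MvPowerSeries (Fin n) K)) (i : ℕ) : ℕ :=
  Module.finrank K (MvPowerSeries (Fin n) K ⧸ (I ⊔ mxR K n ^ (i + 1))) -
    Module.finrank K (MvPowerSeries (Fin n) K ⧸ (I ⊔ mxR K n ^ i))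

/-- `dim_K` of the socle `(0 :_A m)` of `A = R/I`, where `m = M/I` is the
maximal ideal of `A`.  The Artinian local ring `A = R/I` is Gorenstein iff
this equals `1`. -/
noncomputable def socDimQ {K : Type*} [Field K] {n : ℕ}
    (I : Ideal (MvPowerSeries (Fin n) K)) : ℕ :=
  Module.finrank K
    ((Submodule.colon (⊥ : Ideal (MvPowerSeries (Fin n) K ⧸ I))
      ((mxR K n).map (Ideal.Quotient.mk I))).restrictScalars K)

/-- The total degree `|α| = α 1 + ⋯ + α n` of a multi-index. -/
def degM {n : ℕ} (α : Fin n →₀ ℕ) : ℕ := ∑ i, α i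

/-- The ideal `I^*` of `R` generated by the initial forms `f^*` of the elements
`f ∈ I` (for `f ≠ 0` of order `d`, `f^*` is the degree-`d` homogeneous component
of `f`; the set below consists of all such initial forms, together with `0`).
For an ideal `I` with `R/I` Artinian, `R/I^*` is (canonically isomorphic to) the
associated graded ring `gr_m(R/I) = ⊕_{i ≥ 0} m^i/m^(i+1)` of `A = R/I`. -/
noncomputable def initialIdeal {K : Type*} [Field K] {n : ℕ}
    (I : Ideal (MvPowerSeries (Fin n) K)) : Ideal (MvPowerSeries (Fin n) K) :=
  Ideal.span { g | ∃ f ∈ I, ∃ d : ℕ,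
    (∀ α : Fin n →₀ ℕ, degM α < d → MvPowerSeries.coeff α f = 0) ∧
    (∀ α : Fin n →₀ ℕ, MvPowerSeries.coeff α g =
      if degM α = d then MvPowerSeries.coeff α f else 0) }

/-- The variable `x_i` of `R = K[[x_1,…,x_n]]`. -/
noncomputable def psX {K : Type*} [Field K] {n : ℕ} (i : Fin n) :
    MvPowerSeries (Fin n) K := MvPowerSeries.X i


namespace NCG
open MvPowerSeries

variable {K : Type*} [Field K]

noncomputable def ix (a b : ℕ) : Fin 2 →₀ ℕ := Finsupp.single 0 a + Finsupp.single 1 b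

@[simp] lemma ix_zero (a b : ℕ) : ix a b 0 = a := by simp [ix]
@[simp] lemma ix_one (a b : ℕ) : ix a b 1 = b := by simp [ix]

lemma ix_eta (m : Fin 2 →₀ ℕ) : ix (m 0) (m 1) = m := by
  ext i; fin_cases i <;> simp

lemma ix_inj (a b c d : ℕ) : ix a b = ix c d ↔ a = c ∧ b = d := by
  constructor
  · intro h
    exact ⟨by simpa using congrArg (fun m => m 0) h, by simpa using congrArg (fun m => m 1) h⟩
  · rintro ⟨rfl, rfl⟩; rfl

lemma degM_ix (a b : ℕ) : degM (ix a b) = a + b := by simp [degM]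

noncomputable def cf (a b : ℕ) : MvPowerSeries (Fin 2) K →ₗ[K] K := coeff (ix a b)

lemma cf_ext {f g : MvPowerSeries (Fin 2) K} (h : ∀ a b, cf a b f = cf a b g) : f = g := by
  ext m
  rw [← ix_eta m]; exact h _ _

lemma cf_x (a b n : ℕ) (f : MvPowerSeries (Fin 2) K) :
    cf a b (psX 0 ^ n * f) = if n ≤ a then cf (a - n) b f else 0 := by
  rw [cf, psX, X_pow_eq, coeff_monomial_mul]
  have h1 : Finsupp.single 0 n ≤ ix a b ↔ n ≤ a := by
    constructor
    · intro h; simpa using h 0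
    · intro h i; fin_cases i <;> simp [h]
  have h2 : ix a b - Finsupp.single 0 n = ix (a - n) b := by
    ext i; fin_cases i <;> simp
  simp only [h1, h2, one_mul, cf]

lemma cf_y (a b n : ℕ) (f : MvPowerSeries (Fin 2) K) :
    cf a b (psX 1 ^ n * f) = if n ≤ b then cf a (b - n) f else 0 := by
  rw [cf, psX, X_pow_eq, coeff_monomial_mul]
  have h1 : Finsupp.single 1 n ≤ ix a b ↔ n ≤ b := by
    constructor
    · intro h; simpa using h 1
    · intro h i; fin_cases i <;> simp [h]
  have h2 : ix a b - Finsupp.single 1 n = ix a (b - n) := by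
    ext i; fin_cases i <;> simp
  simp only [h1, h2, one_mul, cf]

lemma cf_00 (f : MvPowerSeries (Fin 2) K) : cf 0 0 f = constantCoeff f := by
  have : ix 0 0 = 0 := by ext i; fin_cases i <;> simp
  rw [cf, this]; rfl

lemma cf_one (a b : ℕ) : cf a b (1 : MvPowerSeries (Fin 2) K) = if a = 0 ∧ b = 0 then 1 else 0 := by
  have h : ix 0 0 = 0 := by ext i; fin_cases i <;> simp
  classical
  rw [cf, coeff_one, ← h]
  simp only [ix_inj]

noncomputable def mon (a b : ℕ) : MvPowerSeries (Fin 2) K := psX 0 ^ a * psX 1 ^ b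

lemma cf_mon (a b c d : ℕ) : cf a b (mon c d : MvPowerSeries (Fin 2) K) =
    if a = c ∧ b = d then 1 else 0 := by
  rw [mon, cf_x, ← mul_one (psX 1 ^ d), cf_y, cf_one]
  split_ifs <;> first | rfl | omega

/-- division by monomials -/
lemma decomp (f : MvPowerSeries (Fin 2) K) (p q : ℕ) : ∃ g h : MvPowerSeries (Fin 2) K,
    f = (∑ i : Fin p, ∑ j : Fin q, cf i j f • mon (i:ℕ) (j:ℕ)) + psX 0 ^ p * g + psX 1 ^ q * h := by
  let g' : MvPowerSeries (Fin 2) K := fun m => if p ≤ m 0 then coeff m f else 0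
  let h' : MvPowerSeries (Fin 2) K := fun m => if p ≤ m 0 then 0 else if q ≤ m 1 then coeff m f else 0
  have hg' : ∀ m, coeff m g' = if p ≤ m 0 then coeff m f else 0 := fun m => rfl
  have hh' : ∀ m, coeff m h' = if p ≤ m 0 then 0 else if q ≤ m 1 then coeff m f else 0 :=
    fun m => rfl
  have hg : (psX 0) ^ p ∣ g' := by
    rw [psX, X_pow_dvd_iff]; intro m hm; rw [hg', if_neg (by omega)]
  have hh : (psX 1) ^ q ∣ h' := by
    rw [psX, X_pow_dvd_iff]; intro m hm; rw [hh', if_neg (show ¬ q ≤ m 1 by omega), ite_self]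
  obtain ⟨g, hg⟩ := hg
  obtain ⟨h, hh⟩ := hh
  refine ⟨g, h, ?_⟩
  rw [← hg, ← hh]
  apply cf_ext
  intro a b
  have e1 : cf a b g' = if p ≤ a then cf a b f else 0 := by rw [cf, hg']; simp
  have e2 : cf a b h' = if p ≤ a then 0 else if q ≤ b then cf a b f else 0 := by
    rw [cf, hh']; simp
  simp only [map_add, map_sum, map_smul, cf_mon, e1, e2, smul_eq_mul]
  by_cases ha : p ≤ a
  · rw [Finset.sum_eq_zero]
    · simp [ha]
    · intro i _
      apply Finset.sum_eq_zero; intro j _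
      rw [if_neg (by omega), mul_zero]
  · by_cases hb : q ≤ b
    · rw [Finset.sum_eq_zero]
      · simp [ha, hb]
      · intro i _
        apply Finset.sum_eq_zero; intro j _
        rw [if_neg (by omega), mul_zero]
    · rw [Finset.sum_eq_single (⟨a, by omega⟩ : Fin p), Finset.sum_eq_single (⟨b, by omega⟩ : Fin q)]
      · simp [ha, hb]
      · intro j _ hj
        rw [if_neg, mul_zero]
        rintro ⟨-, h2⟩; exact hj (Fin.ext h2.symm)
      · simp
      · intro i _ hi
        apply Finset.sum_eq_zero; intro j _
        rw [if_neg, mul_zero]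
        rintro ⟨h2, -⟩; exact hi (Fin.ext h2.symm)
      · simp

lemma mem_mx (f : MvPowerSeries (Fin 2) K) : f ∈ mxR K 2 ↔ cf 0 0 f = 0 := by
  rw [cf_00]; rfl

lemma x_mem : (psX 0 : MvPowerSeries (Fin 2) K) ∈ mxR K 2 := by
  rw [mem_mx, cf_00, psX]; exact constantCoeff_X _

lemma y_mem : (psX 1 : MvPowerSeries (Fin 2) K) ∈ mxR K 2 := by
  rw [mem_mx, cf_00, psX]; exact constantCoeff_X _

lemma mon_mem (a b : ℕ) : (mon a b : MvPowerSeries (Fin 2) K) ∈ mxR K 2 ^ (a + b) := by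
  rw [pow_add]; exact Ideal.mul_mem_mul (Ideal.pow_mem_pow x_mem _) (Ideal.pow_mem_pow y_mem _)

lemma cf_pow (d : ℕ) (f : MvPowerSeries (Fin 2) K) (hf : f ∈ mxR K 2 ^ d) :
    ∀ a b, a + b < d → cf a b f = 0 := by
  have key : ∀ d : ℕ, ∀ f ∈ mxR K 2 ^ d, (d : ℕ∞) ≤ f.order := by
    intro d
    induction d with
    | zero => intro f _; simp
    | succ d ih =>
      intro f hf
      rw [pow_succ] at hf
      refine Submodule.mul_induction_on hf ?_ ?_
      · intro g hg h hh
        refine le_trans ?_ le_order_mul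
        push_cast
        exact add_le_add (ih g hg) (one_le_order_iff_constCoeff_eq_zero.2 hh)
      · intro g h hg hh
        exact le_trans (le_min hg hh) min_order_le_add
  intro a b hab
  apply coeff_of_lt_order
  refine lt_of_lt_of_le ?_ (key d f hf)
  have : (ix a b).degree = a + b := by simp [Finsupp.degree_eq_sum]
  rw [this]; exact_mod_cast hab

lemma mx_eq : mxR K 2 = Ideal.span {psX 0, psX 1} := by
  apply le_antisymm
  · intro f hf
    rw [mem_mx] at hf
    obtain ⟨g, h, e⟩ := decomp f 1 1
    rw [e]
    simp only [Finset.univ_unique, Fin.default_eq_zero, Fin.val_zero, Finset.sum_singleton, hf,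
      zero_smul, zero_add, pow_one]
    exact Ideal.mem_span_pair.2 ⟨g, h, by ring⟩
  · rw [Ideal.span_le]
    rintro f (rfl | rfl)
    · exact x_mem
    · exact y_mem

/-- the ideals -/
noncomputable def J (e : K) : Ideal (MvPowerSeries (Fin 2) K) :=
  Ideal.span {psX 0 ^ 4, psX 1 ^ 2 - C e * psX 0 ^ 3}

noncomputable def nf (e : K) (i j : ℕ) : MvPowerSeries (Fin 2) K →ₗ[K] K :=
  cf i j + (if i = 3 then e else 0) • cf 0 (j + 2)

lemma nf_apply (e : K) (i j : ℕ) (f : MvPowerSeries (Fin 2) K) :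
    nf e i j f = cf i j f + (if i = 3 then e else 0) * cf 0 (j + 2) f := rfl

lemma C_mul' (e : K) (f : MvPowerSeries (Fin 2) K) : C e * f = e • f := by
  rw [smul_eq_C_mul]

lemma nf_J (e : K) (f : MvPowerSeries (Fin 2) K) (hf : f ∈ J e) (i j : ℕ) (hi : i < 4)
    (hj : j < 2) : nf e i j f = 0 := by
  obtain ⟨a, b, rfl⟩ := Ideal.mem_span_pair.1 hf
  have : a * psX 0 ^ 4 + b * (psX 1 ^ 2 - C e * psX 0 ^ 3) =
    psX 0 ^ 4 * a + psX 1 ^ 2 * b - e • (psX 0 ^ 3 * b) := by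
    rw [← C_mul']; ring
  rw [this]
  simp only [nf_apply, map_add, map_sub, map_smul, cf_x, cf_y, smul_eq_mul]
  have h1 : ¬ 4 ≤ i := by omega
  have h2 : ¬ 2 ≤ j := by omega
  by_cases h3 : i = 3
  · subst h3; simp [h2]
  · have : ¬ 3 ≤ i := by omega
    simp [h1, h2, h3, this]

lemma x4_mem (e : K) : psX 0 ^ 4 ∈ J e := Ideal.subset_span (by simp)
lemma y2_mem (e : K) : psX 1 ^ 2 - C e * psX 0 ^ 3 ∈ J e := Ideal.subset_span (by simp)

lemma x3y2_mem (e : K) : psX 0 ^ 3 * psX 1 ^ 2 ∈ J e := by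
  have : (psX 0 ^ 3 * psX 1 ^ 2 : MvPowerSeries (Fin 2) K) = psX 0 ^ 3 * (psX 1 ^ 2 - C e * psX 0 ^ 3) +
    C e * psX 0 ^ 2 * psX 0 ^ 4 := by ring
  rw [this]
  exact add_mem (Ideal.mul_mem_left _ _ (y2_mem e)) (Ideal.mul_mem_left _ _ (x4_mem e))

lemma nf_decomp (e : K) (f : MvPowerSeries (Fin 2) K) :
    f - ∑ i : Fin 4, ∑ j : Fin 2, nf e i j f • mon (i:ℕ) (j:ℕ) ∈ J e := by
  obtain ⟨g, h, hf⟩ := decomp f 4 2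
  obtain ⟨u, v, hh⟩ := decomp h 1 2
  have h0 : cf 0 2 f = cf 0 0 h := by
    have := congrArg (cf 0 2) hf
    simp only [map_add, map_sum, map_smul, cf_mon, cf_x, cf_y] at this
    simpa [Fin.sum_univ_succ] using this
  have h1 : cf 0 3 f = cf 0 1 h := by
    have := congrArg (cf 0 3) hf
    simp only [map_add, map_sum, map_smul, cf_mon, cf_x, cf_y] at this
    simpa [Fin.sum_univ_succ] using this
  have : f - ∑ i : Fin 4, ∑ j : Fin 2, nf e i j f • mon (i:ℕ) (j:ℕ) =
      psX 0 ^ 4 * (g + C e * u) + (psX 1 ^ 2 - C e * psX 0 ^ 3) * h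
        + psX 0 ^ 3 * psX 1 ^ 2 * (C e * v) := by
    have h2 : (psX 1 ^ 2 - C e * psX 0 ^ 3) * h = psX 1 ^ 2 * h - C e * psX 0 ^ 3 * h := by ring
    rw [h2]
    conv_lhs => enter [1]; rw [hf]
    conv_rhs => enter [1, 2, 2]; rw [hh]
    simp [nf_apply, Fin.sum_univ_succ, h0, h1, mon, smul_eq_C_mul]
    ring
  rw [this]
  exact add_mem (add_mem (Ideal.mul_mem_right _ _ (x4_mem e)) (Ideal.mul_mem_right _ _ (y2_mem e)))
    (Ideal.mul_mem_right _ _ (x3y2_mem e))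

lemma mem_J (e : K) (f : MvPowerSeries (Fin 2) K)
    (h : ∀ i j, i < 4 → j < 2 → nf e i j f = 0) : f ∈ J e := by
  have := nf_decomp e f
  rwa [Finset.sum_eq_zero, sub_zero] at this
  intro i _
  apply Finset.sum_eq_zero; intro j _
  rw [h _ _ i.2 j.2, zero_smul]

lemma mem_sup (e : K) (d : ℕ) (f : MvPowerSeries (Fin 2) K) :
    f ∈ J e ⊔ mxR K 2 ^ d ↔ ∀ i j, i < 4 → j < 2 → i + j < d → nf e i j f = 0 := by
  constructor
  · intro hf i j hi hj hd
    obtain ⟨g, hg, h, hh, rfl⟩ := Submodule.mem_sup.1 hf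
    rw [map_add, nf_J e g hg i j hi hj, zero_add, nf_apply, cf_pow d h hh i j hd, zero_add]
    by_cases h3 : i = 3
    · rw [cf_pow d h hh 0 (j+2) (by omega), mul_zero]
    · simp [h3]
  · intro h
    rw [← sub_add_cancel f (∑ i : Fin 4, ∑ j : Fin 2, nf e i j f • mon (i:ℕ) (j:ℕ))]
    refine Submodule.add_mem_sup (nf_decomp e f) ?_
    refine sum_mem fun i _ => sum_mem fun j _ => ?_
    by_cases hd : (i:ℕ) + j < d
    · rw [h _ _ i.2 j.2 hd, zero_smul]; exact zero_mem _
    · rw [smul_eq_C_mul]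
      exact Ideal.mul_mem_left _ _ (Ideal.pow_le_pow_right (by omega) (mon_mem _ _))

lemma nf_mon (e : K) (i j a b : ℕ) (hb : b < 2) :
    nf e i j (mon a b : MvPowerSeries (Fin 2) K) = if i = a ∧ j = b then 1 else 0 := by
  rw [nf_apply, cf_mon, cf_mon, if_neg (show ¬ (0 = a ∧ j + 2 = b) by omega)]
  simp

abbrev S (d : ℕ) := {p : Fin 4 × Fin 2 // (p.1 : ℕ) + p.2 < d}

noncomputable def Phi (e : K) (d : ℕ) : MvPowerSeries (Fin 2) K →ₗ[K] (S d → K) :=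
  LinearMap.pi fun p => nf e p.1.1 p.1.2

lemma Phi_surj (e : K) (d : ℕ) : Function.Surjective (Phi e d) := by
  intro v
  refine ⟨∑ p : S d, v p • mon p.1.1 p.1.2, ?_⟩
  ext q
  simp only [Phi, LinearMap.pi_apply, map_sum, map_smul]
  rw [Finset.sum_eq_single q]
  · rw [nf_mon _ _ _ _ _ q.1.2.2]; simp
  · intro p _ hp
    rw [nf_mon _ _ _ _ _ p.1.2.2, if_neg, smul_zero]
    rintro ⟨h1, h2⟩
    exact hp (Subtype.ext (Prod.ext (Fin.ext h1.symm) (Fin.ext h2.symm)))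
  · simp

lemma Phi_ker (e : K) (d : ℕ) :
    LinearMap.ker (Phi e d) = (J e ⊔ mxR K 2 ^ d).restrictScalars K := by
  ext f
  rw [LinearMap.mem_ker, Submodule.restrictScalars_mem, mem_sup]
  constructor
  · intro h i j hi hj hd
    exact congrFun h (⟨(⟨i, hi⟩, ⟨j, hj⟩), hd⟩ : S d)
  · intro h
    ext p
    exact h _ _ p.1.1.2 p.1.2.2 p.2

lemma finrank_quot (e : K) (d : ℕ) :
    Module.finrank K (MvPowerSeries (Fin 2) K ⧸ (J e ⊔ mxR K 2 ^ d)) = Fintype.card (S d) := by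
  have E1 := (Phi e d).quotKerEquivOfSurjective (Phi_surj e d)
  rw [Phi_ker] at E1
  have E2 := Submodule.Quotient.restrictScalarsEquiv K (J e ⊔ mxR K 2 ^ d)
  have := (E2.symm.trans E1).finrank_eq
  rw [Module.finrank_fintype_fun_eq_card] at this
  exact this

lemma hilb (e : K) (d : ℕ) : hilbQ (J e) d = Fintype.card (S (d+1)) - Fintype.card (S d) := by
  rw [hilbQ, finrank_quot, finrank_quot]

lemma pow5 (e : K) : mxR K 2 ^ 5 ≤ J e := by
  intro f hf
  apply mem_J
  intro i j hi hj
  exact (mem_sup e 5 f).1 (Submodule.mem_sup_right hf) i j hi hj (by omega)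

lemma J_one : (Ideal.span {psX 0 ^ 4, -psX 0 ^ 3 + psX 1 ^ 2} :
    Ideal (MvPowerSeries (Fin 2) K)) = J 1 := by
  rw [J, map_one, one_mul, neg_add_eq_sub]

lemma J_zero : (Ideal.span {psX 0 ^ 4, psX 1 ^ 2} :
    Ideal (MvPowerSeries (Fin 2) K)) = J 0 := by
  rw [J, map_zero, zero_mul, sub_zero]

lemma initial_J : initialIdeal (J (1 : K)) = J 0 := by
  apply le_antisymm
  · rw [initialIdeal, Ideal.span_le]
    rintro g ⟨f, hf, d, h1, h2⟩
    have c1 : ∀ a b, a + b < d → cf a b f = 0 := fun a b h => h1 _ (by rwa [degM_ix])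
    have c2 : ∀ a b, cf a b g = if a + b = d then cf a b f else 0 := fun a b => by
      have := h2 (ix a b); rwa [degM_ix] at this
    apply mem_J
    intro i j hi hj
    have := nf_J 1 f hf i j hi hj
    rw [nf_apply] at this ⊢
    rw [ite_self, zero_mul, add_zero, c2]
    split_ifs with hd
    · by_cases h3 : i = 3
      · rw [c1 0 (j+2) (by omega), mul_zero, add_zero] at this; exact this
      · simpa [h3] using this
    · rfl
  · rw [← J_zero, Ideal.span_le]
    have ex : ∀ n : ℕ, (psX 0 ^ n : MvPowerSeries (Fin 2) K) = mon n 0 := fun n => by simp [mon]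
    have ey : ∀ n : ℕ, (psX 1 ^ n : MvPowerSeries (Fin 2) K) = mon 0 n := fun n => by simp [mon]
    rintro g (rfl | rfl)
    · refine Ideal.subset_span ⟨psX 0 ^ 4, x4_mem 1, 4, ?_, ?_⟩
      · intro m hm
        rw [← ix_eta m] at hm ⊢
        rw [degM_ix] at hm
        change cf _ _ _ = _
        rw [ex, cf_mon, if_neg (by omega)]
      · intro m
        rw [← ix_eta m, degM_ix]
        change cf _ _ _ = if _ then cf _ _ _ else _
        rw [ex, cf_mon]
        split_ifs <;> first | rfl | omega
    · refine Ideal.subset_span ⟨_, y2_mem 1, 2, ?_, ?_⟩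
      · intro m hm
        rw [← ix_eta m] at hm ⊢
        rw [degM_ix] at hm
        change cf _ _ _ = _
        rw [map_one C, one_mul, ex, ey, map_sub, cf_mon, cf_mon, if_neg (by omega),
          if_neg (by omega), sub_zero]
      · intro m
        rw [← ix_eta m, degM_ix]
        change cf _ _ _ = if _ then cf _ _ _ else _
        rw [map_one C, one_mul, ex, ey, map_sub, cf_mon, cf_mon]
        split_ifs <;> first | omega | simp

lemma x3y_mul (e : K) (f : MvPowerSeries (Fin 2) K) (hf : f ∈ mxR K 2) : mon 3 1 * f ∈ J e := by
  apply pow5 e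
  exact Ideal.mul_mem_mul (mon_mem 3 1) hf

lemma soc_nf (e : K) (f : MvPowerSeries (Fin 2) K) (hx : psX 0 * f ∈ J e) (hy : psX 1 * f ∈ J e) :
    f - nf e 3 1 f • mon 3 1 ∈ J e := by
  have X : ∀ i j, i < 3 → j < 2 → cf i j f = 0 := by
    intro i j hi hj
    have := nf_J e _ hx (i+1) j (by omega) hj
    rw [← pow_one (psX 0), nf_apply, cf_x, cf_x] at this
    simpa using this
  have Y : nf e 3 0 f = 0 := by
    have := nf_J e _ hy 3 1 (by omega) (by omega)
    rw [← pow_one (psX 1), nf_apply, cf_y, cf_y] at this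
    simpa [nf_apply] using this
  apply mem_J
  intro i j hi hj
  rw [map_sub, map_smul, nf_mon _ _ _ _ _ (by omega)]
  by_cases h3 : i = 3
  · subst h3
    interval_cases j
    · simp [Y]
    · simp
  · simp [h3, nf_apply, X i j (by omega) hj]

lemma soc (e : K) : socDimQ (J e) = 1 := by
  rw [socDimQ]
  have hm : ∀ f : MvPowerSeries (Fin 2) K, Ideal.Quotient.mk (J e) f ∈
      Submodule.colon (⊥ : Ideal (MvPowerSeries (Fin 2) K ⧸ J e))
        ((mxR K 2).map (Ideal.Quotient.mk (J e))) ↔ ∀ p ∈ mxR K 2, p * f ∈ J e := by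
    intro f
    rw [Submodule.mem_colon]
    constructor
    · intro h p hp
      have := h _ (Ideal.mem_map_of_mem _ hp)
      rw [Submodule.mem_bot, smul_eq_mul, ← map_mul, Ideal.Quotient.eq_zero_iff_mem] at this
      rwa [mul_comm]
    · intro h q hq
      obtain ⟨p, hp, rfl⟩ :=
        (Ideal.mem_map_iff_of_surjective _ Ideal.Quotient.mk_surjective).1 hq
      rw [Submodule.mem_bot, smul_eq_mul, ← map_mul, Ideal.Quotient.eq_zero_iff_mem, mul_comm]
      exact h p hp
  refine finrank_eq_one_iff'.2 ⟨⟨Ideal.Quotient.mk (J e) (mon 3 1), ?_⟩, ?_, ?_⟩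
  · rw [Submodule.restrictScalars_mem, hm]
    intro p hp; rw [mul_comm]; exact x3y_mul e p hp
  · intro h
    have h := congrArg Subtype.val h
    have h : Ideal.Quotient.mk (J e) (mon 3 1) = 0 := h
    rw [Ideal.Quotient.eq_zero_iff_mem] at h
    have := nf_J e _ h 3 1 (by omega) (by omega)
    rw [nf_mon _ _ _ _ _ (by omega)] at this
    simp at this
  · rintro ⟨w, hw⟩
    obtain ⟨f, rfl⟩ := Ideal.Quotient.mk_surjective w
    rw [Submodule.restrictScalars_mem, hm] at hw
    refine ⟨nf e 3 1 f, Subtype.ext ?_⟩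
    have := soc_nf e f (hw _ x_mem) (hw _ y_mem)
    change nf e 3 1 f • Ideal.Quotient.mk (J e) (mon 3 1) = Ideal.Quotient.mk (J e) f
    rw [← Ideal.Quotient.mk_eq_mk_iff_sub_mem] at this
    rw [this]; rfl

lemma sq_mem (f : MvPowerSeries (Fin 2) K) (h : f ^ 2 ∈ J (1 : K)) : f ∈ mxR K 2 ^ 2 := by
  have h00 : cf 0 0 f = 0 := by
    have := nf_J 1 _ h 0 0 (by omega) (by omega)
    rw [nf_apply, cf_00, map_pow] at this
    rw [cf_00]; simpa using this
  obtain ⟨u, v, hf⟩ : ∃ u v, f = psX 0 ^ 1 * u + psX 1 ^ 1 * v := by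
    obtain ⟨g, h, e⟩ := decomp f 1 1
    exact ⟨g, h, by simpa [h00] using e⟩
  have hsq : f ^ 2 = psX 0 ^ 2 * u ^ 2 + psX 1 ^ 1 * (psX 0 ^ 1 * (2 * u * v)) + psX 1 ^ 2 * v ^ 2 := by
    rw [hf]; ring
  have hu : u ∈ mxR K 2 := by
    have := nf_J 1 _ h 2 0 (by omega) (by omega)
    rw [nf_apply, hsq] at this
    simp only [map_add, cf_x, cf_y] at this
    rw [mem_mx]
    simpa [cf_00] using this
  have hv : v ∈ mxR K 2 := by
    have := nf_J 1 _ h 3 0 (by omega) (by omega)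
    rw [nf_apply, hsq] at this
    simp only [map_add, cf_x, cf_y] at this
    have h1 : cf 1 0 (u ^ 2) = 0 := cf_pow 2 _ (Ideal.pow_mem_pow hu 2) 1 0 (by omega)
    rw [mem_mx]
    simpa [cf_00, h1] using this
  rw [hf, pow_one, pow_one, pow_two]
  exact add_mem (Ideal.mul_mem_mul x_mem hu) (Ideal.mul_mem_mul y_mem hv)

lemma no_iso (ψ : (MvPowerSeries (Fin 2) K ⧸ J (1 : K)) ≃ₐ[K]
    (MvPowerSeries (Fin 2) K ⧸ J (0 : K))) : False := by
  let q0 := Ideal.Quotient.mk (J (0 : K))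
  let q1 := Ideal.Quotient.mk (J (1 : K))
  let F : MvPowerSeries (Fin 2) K →+* MvPowerSeries (Fin 2) K ⧸ J (0 : K) :=
    (ψ : _ →+* _).comp q1
  have hF : mxR K 2 ≤ Ideal.comap F (Ideal.map q0 (mxR K 2)) := by
    intro u hu
    obtain ⟨p, hp⟩ := Ideal.Quotient.mk_surjective (F u)
    rw [Ideal.mem_comap, ← hp]
    apply Ideal.mem_map_of_mem
    have h5 : F u ^ 5 = 0 := by
      have : q1 (u ^ 5) = 0 := Ideal.Quotient.eq_zero_iff_mem.2 (pow5 1 (Ideal.pow_mem_pow hu 5))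
      rw [← map_pow]
      change ψ (q1 (u ^ 5)) = 0
      rw [this, map_zero]
    rw [← hp, ← map_pow, Ideal.Quotient.eq_zero_iff_mem] at h5
    have := nf_J 0 _ h5 0 0 (by omega) (by omega)
    rw [nf_apply, cf_00, map_pow] at this
    rw [mem_mx, cf_00]; simpa using this
  obtain ⟨f, hf⟩ := Ideal.Quotient.mk_surjective (ψ.symm (q0 (psX 1)))
  have hFf : F f = q0 (psX 1) := by
    change ψ (q1 f) = _
    rw [show q1 f = _ from hf]; simp
  have hf2 : f ^ 2 ∈ J (1 : K) := by
    rw [← Ideal.Quotient.eq_zero_iff_mem, map_pow, hf, ← map_pow, ← map_pow]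
    have : q0 (psX 1 ^ 2) = 0 :=
      Ideal.Quotient.eq_zero_iff_mem.2 (by rw [← J_zero]; exact Ideal.subset_span (by simp))
    rw [this, map_zero]
  have h2 : F f ∈ Ideal.map q0 (mxR K 2 ^ 2) := by
    rw [Ideal.map_pow, ← Ideal.mem_comap]
    exact Ideal.le_comap_pow F 2 (Ideal.pow_right_mono hF 2 (sq_mem f hf2))
  obtain ⟨g, hg, hgf⟩ := (Ideal.mem_map_iff_of_surjective _ Ideal.Quotient.mk_surjective).1 h2
  rw [hFf] at hgf
  have h3 := Ideal.Quotient.mk_eq_mk_iff_sub_mem _ _ |>.1 hgf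
  have h4 := nf_J 0 _ h3 0 1 (by omega) (by omega)
  have h5 := cf_pow 2 g hg 0 1 (by omega)
  have h6 : (psX 1 : MvPowerSeries (Fin 2) K) = mon 0 1 := by simp [mon]
  rw [nf_apply, map_sub, h5, h6, cf_mon] at h4
  simp at h4

end NCG

/-- The ring `A = K[[x_1,x_2]]/(x_1^4, -x_1^3 + x_2^2)` is an Artinian
Gorenstein local `K`-algebra with Hilbert function `{1,2,2,2,1}`, its associated
graded ring is isomorphic to `K[[x_1,x_2]]/(x_1^4, x_2^2)`, and `A` is *not*
isomorphic (as a `K`-algebra) to its associated graded ring. -/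
theorem not_canonically_graded_example
    {K : Type*} [Field K] [IsAlgClosed K] [CharZero K] :
    socDimQ (Ideal.span {psX 0 ^ 4, -psX 0 ^ 3 + psX 1 ^ 2} :
        Ideal (MvPowerSeries (Fin 2) K)) = 1 ∧
    hilbQ (Ideal.span {psX 0 ^ 4, -psX 0 ^ 3 + psX 1 ^ 2} :
        Ideal (MvPowerSeries (Fin 2) K)) 0 = 1 ∧
    hilbQ (Ideal.span {psX 0 ^ 4, -psX 0 ^ 3 + psX 1 ^ 2} :
        Ideal (MvPowerSeries (Fin 2) K)) 1 = 2 ∧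
    hilbQ (Ideal.span {psX 0 ^ 4, -psX 0 ^ 3 + psX 1 ^ 2} :
        Ideal (MvPowerSeries (Fin 2) K)) 2 = 2 ∧
    hilbQ (Ideal.span {psX 0 ^ 4, -psX 0 ^ 3 + psX 1 ^ 2} :
        Ideal (MvPowerSeries (Fin 2) K)) 3 = 2 ∧
    hilbQ (Ideal.span {psX 0 ^ 4, -psX 0 ^ 3 + psX 1 ^ 2} :
        Ideal (MvPowerSeries (Fin 2) K)) 4 = 1 ∧
    mxR K 2 ^ 5 ≤ (Ideal.span {psX 0 ^ 4, -psX 0 ^ 3 + psX 1 ^ 2} :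
        Ideal (MvPowerSeries (Fin 2) K)) ∧
    Nonempty ((MvPowerSeries (Fin 2) K ⧸
        initialIdeal (Ideal.span {psX 0 ^ 4, -psX 0 ^ 3 + psX 1 ^ 2} :
          Ideal (MvPowerSeries (Fin 2) K))) ≃ₐ[K]
      (MvPowerSeries (Fin 2) K ⧸
        (Ideal.span {psX 0 ^ 4, psX 1 ^ 2} : Ideal (MvPowerSeries (Fin 2) K)))) ∧
    ¬ Nonempty ((MvPowerSeries (Fin 2) K ⧸
        (Ideal.span {psX 0 ^ 4, -psX 0 ^ 3 + psX 1 ^ 2} :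
          Ideal (MvPowerSeries (Fin 2) K))) ≃ₐ[K]
      (MvPowerSeries (Fin 2) K ⧸
        initialIdeal (Ideal.span {psX 0 ^ 4, -psX 0 ^ 3 + psX 1 ^ 2} :
          Ideal (MvPowerSeries (Fin 2) K)))) := by
  rw [NCG.J_one, NCG.J_zero, NCG.initial_J]
  refine ⟨NCG.soc 1, ?_, ?_, ?_, ?_, ?_, NCG.pow5 1, ⟨AlgEquiv.refl⟩, ?_⟩
  · rw [NCG.hilb]; decide
  · rw [NCG.hilb]; decide
  · rw [NCG.hilb]; decide
  · rw [NCG.hilb]; decide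
  · rw [NCG.hilb]; decide
  · rintro ⟨ψ⟩
    exact NCG.no_iso ψ
end

section
/- Let A be an Artinian Gorenstein local K-algebra with Hilbert function {1,2,2,2,1}. Then A is isomorphic as a K-algebra to one and only one of the following quotients of R = K[[x_1,x_2]]: (a) R/(x_1^4, x_2^2); (b) R/(x_1^4, −x_1^3 + x_2^2); (c) R/(x_1^2 + x_2^2, x_2^4). Moreover the rings in cases (a) and (c) are isomorphic to their associated graded rings, while the ring in case (b) is not. -/
/-- The Hilbert function
`HF_A(i) = dim_K (m^i/m^(i+1)) = dim_K A/m^(i+1) - dim_K A/m^i`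
of a local `K`-algebra `A` with maximal ideal `m`. -/
noncomputable def hilbLoc (K : Type*) [Field K] (A : Type*) [CommRing A] [IsLocalRing A]
    [Algebra K A] (i : ℕ) : ℕ :=
  Module.finrank K (A ⧸ (IsLocalRing.maximalIdeal A ^ (i + 1))) -
    Module.finrank K (A ⧸ (IsLocalRing.maximalIdeal A ^ i))

/-- `dim_K` of the socle `(0 : m)` of a local `K`-algebra `A`;
an Artinian local ring `A` is Gorenstein iff this equals `1`. -/
noncomputable def socDimLoc (K : Type*) [Field K] (A : Type*) [CommRing A] [IsLocalRing A]
    [Algebra K A] : ℕ :=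
  Module.finrank K
    ((Submodule.colon (⊥ : Ideal A) (IsLocalRing.maximalIdeal A)).restrictScalars K)

/-- The residue field of the local `K`-algebra `A` is `K` itself,
via the structure map. -/
def residueFieldIsK (K : Type*) [Field K] (A : Type*) [CommRing A] [IsLocalRing A]
    [Algebra K A] : Prop :=
  Function.Bijective (algebraMap K (IsLocalRing.ResidueField A))

set_option linter.unusedSimpArgs false
namespace HC

variable {K : Type*} [Field K]

/-- exponent vector -/
noncomputable def E (i j : ℕ) : Fin 2 →₀ ℕ := Finsupp.single 0 i + Finsupp.single 1 j

lemma E_zero (i j : ℕ) : E i j 0 = i := by simp [E]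
lemma E_one (i j : ℕ) : E i j 1 = j := by simp [E]

lemma E_self (α : Fin 2 →₀ ℕ) : E (α 0) (α 1) = α := by
  ext k; fin_cases k
  · exact E_zero _ _
  · exact E_one _ _

/-- coefficient -/
noncomputable def cc (i j : ℕ) (f : MvPowerSeries (Fin 2) K) : K := MvPowerSeries.coeff (E i j) f

lemma cc_mul (i j : ℕ) (f g : MvPowerSeries (Fin 2) K) :
    cc i j (f * g) = ∑ p ∈ Finset.HasAntidiagonal.antidiagonal i, ∑ q ∈ Finset.HasAntidiagonal.antidiagonal j,
      cc p.1 q.1 f * cc p.2 q.2 g := by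
  classical
  unfold cc
  rw [MvPowerSeries.coeff_mul, ← Finset.sum_product']
  refine Finset.sum_nbij' (fun a => ((a.1 0, a.2 0), (a.1 1, a.2 1)))
    (fun b => (E b.1.1 b.2.1, E b.1.2 b.2.2)) ?_ ?_ ?_ ?_ ?_
  · rintro ⟨a, b⟩ h
    simp only [Finset.HasAntidiagonal.mem_antidiagonal, Finset.mem_product] at h ⊢
    constructor
    · rw [← E_zero i j, ← h]; rfl
    · rw [← E_one i j, ← h]; rfl
  · rintro ⟨⟨a, b⟩, c, d⟩ h
    simp only [Finset.HasAntidiagonal.mem_antidiagonal, Finset.mem_product] at h ⊢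
    rw [← h.1, ← h.2]
    ext k; fin_cases k <;> simp [E]
  · rintro ⟨a, b⟩ h
    simp [E_self]
  · rintro ⟨⟨a, b⟩, c, d⟩ h
    simp [E_zero, E_one]
  · rintro ⟨a, b⟩ h
    simp [E_self]

lemma cc_add (i j : ℕ) (f g : MvPowerSeries (Fin 2) K) : cc i j (f + g) = cc i j f + cc i j g :=
  map_add _ _ _
lemma cc_neg (i j : ℕ) (f : MvPowerSeries (Fin 2) K) : cc i j (-f) = - cc i j f :=
  map_neg _ _

lemma E_inj {i j k l : ℕ} : E i j = E k l ↔ i = k ∧ j = l := by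
  constructor
  · intro h
    exact ⟨by rw [← E_zero i j, h, E_zero], by rw [← E_one i j, h, E_one]⟩
  · rintro ⟨rfl, rfl⟩; rfl

lemma cc_X0 (i j n : ℕ) : cc i j (psX (K := K) (n := 2) 0 ^ n) = if i = n ∧ j = 0 then 1 else 0 := by
  unfold cc psX
  rw [MvPowerSeries.coeff_X_pow]
  have : Finsupp.single (0 : Fin 2) n = E n 0 := by simp [E]
  rw [this]; simp only [E_inj]

lemma cc_X1 (i j n : ℕ) : cc i j (psX (K := K) (n := 2) 1 ^ n) = if i = 0 ∧ j = n then 1 else 0 := by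
  unfold cc psX
  rw [MvPowerSeries.coeff_X_pow]
  have : Finsupp.single (1 : Fin 2) n = E 0 n := by simp [E]
  rw [this]; simp only [E_inj]

lemma cc_X0' (i j : ℕ) : cc i j (psX (K := K) (n := 2) 0) = if i = 1 ∧ j = 0 then 1 else 0 := by
  simpa using cc_X0 (K := K) i j 1

lemma cc_X1' (i j : ℕ) : cc i j (psX (K := K) (n := 2) 1) = if i = 0 ∧ j = 1 then 1 else 0 := by
  simpa using cc_X1 (K := K) i j 1

lemma mem_M {f : MvPowerSeries (Fin 2) K} : f ∈ mxR K 2 ↔ cc 0 0 f = 0 := by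
  unfold mxR cc
  rw [RingHom.mem_ker]
  have : E 0 0 = 0 := by simp [E]
  rw [this, MvPowerSeries.coeff_zero_eq_constantCoeff]

lemma pow_cc {k : ℕ} : ∀ {f : MvPowerSeries (Fin 2) K}, f ∈ mxR K 2 ^ k →
    ∀ i j, i + j < k → cc i j f = 0 := by
  induction k with
  | zero => intro f _ i j h; omega
  | succ k ih =>
    intro f hf
    rw [pow_succ] at hf
    refine Submodule.mul_induction_on hf ?_ ?_
    · intro a ha b hb i j hij
      rw [cc_mul]
      refine Finset.sum_eq_zero fun p hp => Finset.sum_eq_zero fun q hq => ?_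
      rw [Finset.HasAntidiagonal.mem_antidiagonal] at hp hq
      by_cases h : p.1 + q.1 < k
      · rw [ih ha _ _ h, zero_mul]
      · have h1 : p.2 = 0 := by omega
        have h2 : q.2 = 0 := by omega
        rw [h1, h2, mem_M.1 hb, mul_zero]
    · intro a b ha hb i j hij
      rw [cc_add, ha _ _ hij, hb _ _ hij, add_zero]

/-- splitting -/
lemma split (f : MvPowerSeries (Fin 2) K) : ∃ g h : MvPowerSeries (Fin 2) K,
    f = algebraMap K _ (cc 0 0 f) + psX 0 * g + psX 1 * h := by
  classical
  let f1 : MvPowerSeries (Fin 2) K := fun α => if α 0 = 0 then 0 else MvPowerSeries.coeff α f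
  have h1 : (MvPowerSeries.X 0 : MvPowerSeries (Fin 2) K) ∣ f1 := by
    rw [MvPowerSeries.X_dvd_iff]
    intro m hm
    show (if m 0 = 0 then (0 : K) else _) = 0
    rw [if_pos hm]
  have hc : ∀ m, MvPowerSeries.coeff m f1 = if m 0 = 0 then 0 else MvPowerSeries.coeff m f :=
    fun m => rfl
  have h2 : (MvPowerSeries.X 1 : MvPowerSeries (Fin 2) K) ∣
      f - f1 - algebraMap K _ (cc 0 0 f) := by
    rw [MvPowerSeries.X_dvd_iff]
    intro m hm
    rw [map_sub, map_sub, hc, ← MvPowerSeries.c_eq_algebraMap, MvPowerSeries.coeff_C]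
    by_cases h0 : m 0 = 0
    · have : m = 0 := by ext k; fin_cases k <;> assumption
      subst this
      have : E 0 0 = 0 := by simp [E]
      simp [cc, this]
    · have : m ≠ 0 := by rintro rfl; exact h0 rfl
      simp [h0, this]
  obtain ⟨g, hg⟩ := h1
  obtain ⟨h, hh⟩ := h2
  refine ⟨g, h, ?_⟩
  unfold psX
  rw [← hg, ← hh]; ring

lemma X0_mem : psX (K := K) (n := 2) 0 ∈ mxR K 2 := by rw [mem_M, cc_X0']; simp
lemma X1_mem : psX (K := K) (n := 2) 1 ∈ mxR K 2 := by rw [mem_M, cc_X1']; simp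

lemma M_eq : mxR K 2 = Ideal.span {psX 0, psX 1} := by
  apply le_antisymm
  · intro f hf
    obtain ⟨g, h, e⟩ := split f
    rw [e, mem_M.1 hf, map_zero, zero_add]
    exact Ideal.add_mem _ (Ideal.mul_mem_right _ _ (Ideal.subset_span (by simp)))
      (Ideal.mul_mem_right _ _ (Ideal.subset_span (by simp)))
  · rw [Ideal.span_le]
    rintro _ (rfl | rfl)
    exacts [X0_mem, X1_mem]

lemma M_sq {f : MvPowerSeries (Fin 2) K} (h0 : cc 0 0 f = 0) (h1 : cc 1 0 f = 0)
    (h2 : cc 0 1 f = 0) : f ∈ mxR K 2 ^ 2 := by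
  obtain ⟨g, h, e⟩ := split f
  rw [h0, map_zero, zero_add] at e
  have hg : g ∈ mxR K 2 := by
    rw [mem_M]
    rw [e] at h1
    simpa [cc_add, cc_mul, Finset.Nat.antidiagonal_succ, cc_X0', cc_X1'] using h1
  have hh : h ∈ mxR K 2 := by
    rw [mem_M]
    rw [e] at h2
    simpa [cc_add, cc_mul, Finset.Nat.antidiagonal_succ, cc_X0', cc_X1'] using h2
  rw [e, pow_two]
  exact Ideal.add_mem _ (Ideal.mul_mem_mul X0_mem hg) (Ideal.mul_mem_mul X1_mem hh)

lemma isUnit_of {f : MvPowerSeries (Fin 2) K} (h : f ∉ mxR K 2) : IsUnit f := by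
  rw [MvPowerSeries.isUnit_iff_constantCoeff]
  exact (isUnit_iff_ne_zero.2 (fun h' => h h'))

lemma M_ne_top : (1 : MvPowerSeries (Fin 2) K) ∉ mxR K 2 := by
  unfold mxR; simp

lemma map_le {I J : Ideal (MvPowerSeries (Fin 2) K)} (hI : I ≤ mxR K 2)
    (φ : (MvPowerSeries (Fin 2) K ⧸ I) ≃ₐ[K] (MvPowerSeries (Fin 2) K ⧸ J)) :
    ((mxR K 2).map (Ideal.Quotient.mk I)).map (φ : _ →+* _)
      ≤ (mxR K 2).map (Ideal.Quotient.mk J) := by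
  rw [Ideal.map_map, Ideal.map_le_iff_le_comap]
  intro r hr
  rw [Ideal.mem_comap]
  obtain ⟨s, hs⟩ := Ideal.Quotient.mk_surjective (φ (Ideal.Quotient.mk I r))
  have : s ∈ mxR K 2 := by
    by_contra h
    have h1 : IsUnit (φ (Ideal.Quotient.mk I r)) := by
      rw [← hs]; exact (isUnit_of h).map _
    have h2 : IsUnit (Ideal.Quotient.mk I r) := by
      have := h1.map φ.symm
      simpa using this
    obtain ⟨t, ht⟩ := h2.exists_right_inv
    obtain ⟨t, rfl⟩ := Ideal.Quotient.mk_surjective t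
    rw [← map_mul, ← map_one (Ideal.Quotient.mk I), Ideal.Quotient.eq] at ht
    have h3 : r * t ∈ mxR K 2 := Ideal.mul_mem_right _ _ hr
    have := (mxR K 2).sub_mem h3 (hI ht)
    rw [sub_sub_cancel] at this
    exact M_ne_top this
  show φ (Ideal.Quotient.mk I r) ∈ _
  rw [← hs]
  exact Ideal.mem_map_of_mem _ this

lemma transfer {I J : Ideal (MvPowerSeries (Fin 2) K)} (hI : I ≤ mxR K 2)
    (φ : (MvPowerSeries (Fin 2) K ⧸ I) ≃ₐ[K] (MvPowerSeries (Fin 2) K ⧸ J))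
    (k : ℕ) {r s : MvPowerSeries (Fin 2) K} (hr : r ∈ I ⊔ mxR K 2 ^ k)
    (hs : Ideal.Quotient.mk J s = φ (Ideal.Quotient.mk I r)) : s ∈ J ⊔ mxR K 2 ^ k := by
  have h1 : Ideal.Quotient.mk I r ∈ ((mxR K 2).map (Ideal.Quotient.mk I)) ^ k := by
    have := Ideal.mem_map_of_mem (Ideal.Quotient.mk I) hr
    rwa [Ideal.map_sup, Ideal.map_quotient_self, bot_sup_eq, Ideal.map_pow] at this
  have h2 := Ideal.mem_map_of_mem (φ : _ →+* (MvPowerSeries (Fin 2) K ⧸ J)) h1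
  rw [Ideal.map_pow] at h2
  have h3 := Ideal.pow_right_mono (map_le hI φ) k h2
  rw [← Ideal.map_pow] at h3
  have h4 : s ∈ ((mxR K 2 ^ k).map (Ideal.Quotient.mk J)).comap (Ideal.Quotient.mk J) := by
    rw [Ideal.mem_comap, hs]; exact h3
  rw [Ideal.comap_map_of_surjective _ Ideal.Quotient.mk_surjective, ← RingHom.ker_eq_comap_bot,
    Ideal.mk_ker] at h4
  rwa [sup_comm]

lemma no_iso {I J : Ideal (MvPowerSeries (Fin 2) K)} (hI : I ≤ mxR K 2 ^ 2)
    (hJ : J ≤ mxR K 2 ^ 2) (k : ℕ)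
    (hy : psX 1 ^ 2 ∈ I ⊔ mxR K 2 ^ k)
    (hz : ∀ s ∈ mxR K 2, s ^ 2 ∈ J ⊔ mxR K 2 ^ k → s ∈ mxR K 2 ^ 2) :
    ¬ Nonempty ((MvPowerSeries (Fin 2) K ⧸ I) ≃ₐ[K] (MvPowerSeries (Fin 2) K ⧸ J)) := by
  rintro ⟨φ⟩
  have hM : mxR K 2 ^ 2 ≤ mxR K 2 := Ideal.pow_le_self two_ne_zero
  obtain ⟨s, hs⟩ := Ideal.Quotient.mk_surjective (φ (Ideal.Quotient.mk I (psX 1)))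
  have h1 : s ∈ mxR K 2 := by
    have := transfer (hI.trans hM) φ 1 (r := psX 1) (s := s)
      (by rw [pow_one]; exact Ideal.mem_sup_right X1_mem) hs
    rw [pow_one, sup_eq_right.2 (hJ.trans hM)] at this
    exact this
  have h2 : s ^ 2 ∈ J ⊔ mxR K 2 ^ k :=
    transfer (hI.trans hM) φ k hy (by rw [map_pow, map_pow, hs, map_pow])
  have h3 := hz s h1 h2
  have h4 := transfer (hJ.trans hM) φ.symm 2 (r := s) (s := psX 1)
    (Ideal.mem_sup_right h3) (by rw [hs, AlgEquiv.symm_apply_apply])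
  rw [sup_eq_right.2 hI] at h4
  have := pow_cc h4 0 1 (by norm_num)
  rw [cc_X1'] at this
  simp at this

lemma X0p {n k : ℕ} (h : k ≤ n) : psX (K := K) (n := 2) 0 ^ n ∈ mxR K 2 ^ k :=
  Ideal.pow_le_pow_right h (Ideal.pow_mem_pow X0_mem n)
lemma X1p {n k : ℕ} (h : k ≤ n) : psX (K := K) (n := 2) 1 ^ n ∈ mxR K 2 ^ k :=
  Ideal.pow_le_pow_right h (Ideal.pow_mem_pow X1_mem n)

lemma Ia_le : (Ideal.span {psX 0 ^ 4, psX 1 ^ 2} : Ideal (MvPowerSeries (Fin 2) K)) ≤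
    mxR K 2 ^ 2 := by
  rw [Ideal.span_le]
  rintro _ (rfl | rfl)
  exacts [X0p (by norm_num), X1p le_rfl]

lemma Ib_le : (Ideal.span {psX 0 ^ 4, -psX 0 ^ 3 + psX 1 ^ 2} :
    Ideal (MvPowerSeries (Fin 2) K)) ≤ mxR K 2 ^ 2 := by
  rw [Ideal.span_le]
  rintro _ (rfl | rfl)
  exacts [X0p (by norm_num), add_mem (neg_mem (X0p (by norm_num))) (X1p le_rfl)]

lemma Ic_le : (Ideal.span {psX 0 ^ 2 + psX 1 ^ 2, psX 1 ^ 4} :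
    Ideal (MvPowerSeries (Fin 2) K)) ≤ mxR K 2 ^ 2 := by
  rw [Ideal.span_le]
  rintro _ (rfl | rfl)
  exacts [add_mem (X0p le_rfl) (X1p le_rfl), X1p (by norm_num)]

lemma hz_b (s : MvPowerSeries (Fin 2) K) (hs : s ∈ mxR K 2)
    (h : s ^ 2 ∈ (Ideal.span {psX 0 ^ 4, -psX 0 ^ 3 + psX 1 ^ 2} :
      Ideal (MvPowerSeries (Fin 2) K)) ⊔ mxR K 2 ^ 4) : s ∈ mxR K 2 ^ 2 := by
  rw [mem_M] at hs
  obtain ⟨u, hu, v, hv, e⟩ := Submodule.mem_sup.1 h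
  obtain ⟨a, b, rfl⟩ := Ideal.mem_span_pair.1 hu
  have e20 := congrArg (cc 2 0) e
  have e30 := congrArg (cc 3 0) e
  have e02 := congrArg (cc 0 2) e
  rw [pow_two s] at e20 e30 e02
  simp [cc_add, cc_neg, cc_mul, Finset.Nat.antidiagonal_succ, cc_X0, cc_X1, pow_cc hv, hs] at e20 e30 e02
  have h1 : cc 1 0 s = 0 := e20
  rw [h1] at e30
  refine M_sq hs h1 ?_
  have : cc 0 1 s * cc 0 1 s = 0 := by
    rw [← e02, ← neg_eq_zero, e30]; ring
  simpa using this

lemma hz_c [CharZero K] (s : MvPowerSeries (Fin 2) K) (hs : s ∈ mxR K 2)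
    (h : s ^ 2 ∈ (Ideal.span {psX 0 ^ 2 + psX 1 ^ 2, psX 1 ^ 4} :
      Ideal (MvPowerSeries (Fin 2) K)) ⊔ mxR K 2 ^ 3) : s ∈ mxR K 2 ^ 2 := by
  rw [mem_M] at hs
  obtain ⟨u, hu, v, hv, e⟩ := Submodule.mem_sup.1 h
  obtain ⟨a, b, rfl⟩ := Ideal.mem_span_pair.1 hu
  have e20 := congrArg (cc 2 0) e
  have e11 := congrArg (cc 1 1) e
  have e02 := congrArg (cc 0 2) e
  rw [pow_two s] at e20 e11 e02
  simp [cc_add, cc_neg, cc_mul, Finset.Nat.antidiagonal_succ, cc_X0, cc_X1, pow_cc hv, hs] at e20 e11 e02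
  have h2 : (2 : K) * (cc 1 0 s * cc 0 1 s) = 0 := by linear_combination -e11
  have h3 : cc 1 0 s * cc 0 1 s = 0 := by simpa using h2
  have h4 : cc 1 0 s * cc 1 0 s = cc 0 1 s * cc 0 1 s := by rw [← e20, ← e02]
  have h5 : cc 1 0 s = 0 := by
    rcases mul_eq_zero.1 h3 with h | h
    · exact h
    · rw [h] at h4; simpa using h4
  rw [h5] at h4
  exact M_sq hs h5 (by simpa using h4.symm)

lemma degM_E (i j : ℕ) : degM (E i j) = i + j := by
  simp [degM, Fin.sum_univ_two, E_zero, E_one]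

lemma initial_le {I : Ideal (MvPowerSeries (Fin 2) K)} (hI : I ≤ mxR K 2 ^ 2) :
    initialIdeal I ≤ mxR K 2 ^ 2 := by
  unfold initialIdeal
  rw [Ideal.span_le]
  rintro g ⟨f, hf, d, h1, h2⟩
  have h := pow_cc (hI hf)
  have key : ∀ i j, i + j < 2 → cc i j g = 0 := by
    intro i j hij
    unfold cc
    rw [h2]
    split_ifs
    · exact h i j hij
    · rfl
  exact M_sq (key _ _ (by norm_num)) (key _ _ (by norm_num)) (key _ _ (by norm_num))

lemma not_bgr : ¬ Nonempty ((MvPowerSeries (Fin 2) K ⧸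
        (Ideal.span {psX 0 ^ 4, -psX 0 ^ 3 + psX 1 ^ 2} :
          Ideal (MvPowerSeries (Fin 2) K))) ≃ₐ[K]
      (MvPowerSeries (Fin 2) K ⧸
        initialIdeal (Ideal.span {psX 0 ^ 4, -psX 0 ^ 3 + psX 1 ^ 2} :
          Ideal (MvPowerSeries (Fin 2) K)))) := by
  rintro ⟨φ⟩
  refine no_iso (initial_le Ib_le) Ib_le 4 (Ideal.mem_sup_left ?_) hz_b ⟨φ.symm⟩
  apply Ideal.subset_span
  refine ⟨(-psX 0 ^ 3 + psX 1 ^ 2 : MvPowerSeries (Fin 2) K), Ideal.subset_span (by simp), 2, ?_, ?_⟩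
  · intro α hα
    rw [← E_self α] at hα ⊢
    rw [degM_E] at hα
    generalize α 0 = i at *
    generalize α 1 = j at *
    change cc i j _ = 0
    rw [cc_add, cc_neg, cc_X0, cc_X1, if_neg (by omega), if_neg (by omega)]; simp
  · intro α
    rw [← E_self α, degM_E]
    generalize α 0 = i at *
    generalize α 1 = j at *
    change cc i j (psX 1 ^ 2 : MvPowerSeries (Fin 2) K) =
      if i + j = 2 then cc i j (-psX 0 ^ 3 + psX 1 ^ 2 : MvPowerSeries (Fin 2) K) else 0
    rw [cc_add, cc_neg, cc_X0, cc_X1]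
    split_ifs <;> first | omega | simp

lemma not_ab : ¬ Nonempty ((MvPowerSeries (Fin 2) K ⧸
        (Ideal.span {psX 0 ^ 4, psX 1 ^ 2} :
          Ideal (MvPowerSeries (Fin 2) K))) ≃ₐ[K]
      (MvPowerSeries (Fin 2) K ⧸
        (Ideal.span {psX 0 ^ 4, -psX 0 ^ 3 + psX 1 ^ 2} :
          Ideal (MvPowerSeries (Fin 2) K)))) :=
  no_iso Ia_le Ib_le 4 (Ideal.mem_sup_left (Ideal.subset_span (by simp))) hz_b

lemma not_ac [CharZero K] : ¬ Nonempty ((MvPowerSeries (Fin 2) K ⧸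
        (Ideal.span {psX 0 ^ 4, psX 1 ^ 2} :
          Ideal (MvPowerSeries (Fin 2) K))) ≃ₐ[K]
      (MvPowerSeries (Fin 2) K ⧸
        (Ideal.span {psX 0 ^ 2 + psX 1 ^ 2, psX 1 ^ 4} :
          Ideal (MvPowerSeries (Fin 2) K)))) :=
  no_iso Ia_le Ic_le 3 (Ideal.mem_sup_left (Ideal.subset_span (by simp))) hz_c

lemma not_bc [CharZero K] : ¬ Nonempty ((MvPowerSeries (Fin 2) K ⧸
        (Ideal.span {psX 0 ^ 4, -psX 0 ^ 3 + psX 1 ^ 2} :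
          Ideal (MvPowerSeries (Fin 2) K))) ≃ₐ[K]
      (MvPowerSeries (Fin 2) K ⧸
        (Ideal.span {psX 0 ^ 2 + psX 1 ^ 2, psX 1 ^ 4} :
          Ideal (MvPowerSeries (Fin 2) K)))) := by
  refine no_iso Ib_le Ic_le 3 ?_ hz_c
  have : (psX 1 ^ 2 : MvPowerSeries (Fin 2) K) = (-psX 0 ^ 3 + psX 1 ^ 2) + psX 0 ^ 3 := by ring
  rw [this]
  exact add_mem (Ideal.mem_sup_left (Ideal.subset_span (by simp)))
    (Ideal.mem_sup_right (X0p le_rfl))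

end HC

namespace HC

variable {K : Type*} [Field K]

lemma ext_cc {f g : MvPowerSeries (Fin 2) K} (h : ∀ i j, cc i j f = cc i j g) : f = g := by
  ext α
  rw [← E_self α]
  exact h _ _

lemma homog_comp {g : MvPowerSeries (Fin 2) K} {e : ℕ} (hg : ∀ i j, i + j ≠ e → cc i j g = 0)
    (a : MvPowerSeries (Fin 2) K) (d : ℕ) : ∃ a' : MvPowerSeries (Fin 2) K,
      ∀ i j, cc i j (a' * g) = if i + j = d then cc i j (a * g) else 0 := by
  let a' : MvPowerSeries (Fin 2) K := fun α =>
    if α 0 + α 1 + e = d then MvPowerSeries.coeff α a else 0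
  have ha : ∀ i j, cc i j a' = if i + j + e = d then cc i j a else 0 := by
    intro i j
    show (if E i j 0 + E i j 1 + e = d then MvPowerSeries.coeff (E i j) a else 0) = _
    rw [E_zero, E_one]; rfl
  refine ⟨a', fun i j => ?_⟩
  rw [cc_mul, cc_mul]
  split_ifs with h
  · refine Finset.sum_congr rfl fun p hp => Finset.sum_congr rfl fun q hq => ?_
    rw [Finset.HasAntidiagonal.mem_antidiagonal] at hp hq
    rw [ha]
    by_cases h' : p.2 + q.2 = e
    · rw [if_pos (by omega)]
    · rw [hg _ _ h', mul_zero, mul_zero]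
  · refine Finset.sum_eq_zero fun p hp => Finset.sum_eq_zero fun q hq => ?_
    rw [Finset.HasAntidiagonal.mem_antidiagonal] at hp hq
    rw [ha]
    by_cases h' : p.2 + q.2 = e
    · rw [if_neg (by omega), zero_mul]
    · rw [hg _ _ h', mul_zero]

lemma initial_homog {g1 g2 : MvPowerSeries (Fin 2) K} {e1 e2 : ℕ}
    (h1 : ∀ i j, i + j ≠ e1 → cc i j g1 = 0) (h2 : ∀ i j, i + j ≠ e2 → cc i j g2 = 0) :
    initialIdeal (Ideal.span {g1, g2}) = Ideal.span {g1, g2} := by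
  have own : ∀ (g : MvPowerSeries (Fin 2) K) (e : ℕ), (∀ i j, i + j ≠ e → cc i j g = 0) →
      g ∈ Ideal.span {g1, g2} → g ∈ initialIdeal (Ideal.span {g1, g2}) := by
    intro g e hg hgI
    apply Ideal.subset_span
    refine ⟨g, hgI, e, ?_, ?_⟩
    · intro α hα
      rw [← E_self α] at hα ⊢
      rw [degM_E] at hα
      exact hg _ _ hα.ne
    · intro α
      rw [← E_self α, degM_E]
      split_ifs with h
      · rfl
      · exact hg _ _ h
  apply le_antisymm
  · unfold initialIdeal
    rw [Ideal.span_le]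
    rintro g ⟨f, hf, d, -, h⟩
    obtain ⟨a, b, rfl⟩ := Ideal.mem_span_pair.1 hf
    obtain ⟨a', ha⟩ := homog_comp h1 a d
    obtain ⟨b', hb⟩ := homog_comp h2 b d
    refine Ideal.mem_span_pair.2 ⟨a', b', ext_cc fun i j => ?_⟩
    have := h (E i j)
    rw [degM_E] at this
    rw [cc_add, ha, hb]
    unfold cc at *
    rw [this, map_add]
    split_ifs <;> simp
  · rw [Ideal.span_le]
    rintro _ (rfl | rfl)
    · exact own _ e1 h1 (Ideal.subset_span (by simp))
    · exact own _ e2 h2 (Ideal.subset_span (by simp))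

lemma gr_a : initialIdeal (Ideal.span {psX 0 ^ 4, psX 1 ^ 2} : Ideal (MvPowerSeries (Fin 2) K)) =
    Ideal.span {psX 0 ^ 4, psX 1 ^ 2} := by
  refine initial_homog (e1 := 4) (e2 := 2) ?_ ?_ <;> intro i j h
  · rw [cc_X0, if_neg (by omega)]
  · rw [cc_X1, if_neg (by omega)]

lemma gr_c : initialIdeal (Ideal.span {psX 0 ^ 2 + psX 1 ^ 2, psX 1 ^ 4} :
    Ideal (MvPowerSeries (Fin 2) K)) = Ideal.span {psX 0 ^ 2 + psX 1 ^ 2, psX 1 ^ 4} := by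
  refine initial_homog (e1 := 2) (e2 := 4) ?_ ?_ <;> intro i j h
  · rw [cc_add, cc_X0, cc_X1, if_neg (by omega), if_neg (by omega), add_zero]
  · rw [cc_X1, if_neg (by omega)]

/-- generation -/
def Gen (K : Type*) [Field K] {B : Type*} [CommRing B] [Algebra K B] (x y : B) : Prop :=
  ∀ b : B, ∃ (c : K) (b1 b2 : B), b = algebraMap K B c + x * b1 + y * b2

lemma gen_top {B : Type*} [CommRing B] [Algebra K B] {x y : B} (hg : Gen K x y) {N : ℕ}
    (hN : (Ideal.span {x, y}) ^ N = ⊥) (W : Submodule K B) (h1 : 1 ∈ W)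
    (hx : ∀ w ∈ W, x * w ∈ W) (hy : ∀ w ∈ W, y * w ∈ W) : W = ⊤ := by
  have key : ∀ n : ℕ, ∀ b : B, ∃ w ∈ W, b - w ∈ (Ideal.span {x, y}) ^ n := by
    intro n
    induction n with
    | zero => intro b; exact ⟨0, zero_mem _, by simp⟩
    | succ n ih =>
      intro b
      obtain ⟨c, b1, b2, hb⟩ := hg b
      obtain ⟨w1, hw1, e1⟩ := ih b1
      obtain ⟨w2, hw2, e2⟩ := ih b2
      refine ⟨c • 1 + x * w1 + y * w2, add_mem (add_mem (W.smul_mem _ h1) (hx _ hw1)) (hy _ hw2), ?_⟩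
      have : b - (c • 1 + x * w1 + y * w2) = x * (b1 - w1) + y * (b2 - w2) := by
        rw [← Algebra.algebraMap_eq_smul_one]
        linear_combination hb
      rw [this, pow_succ']
      exact add_mem (Ideal.mul_mem_mul (Ideal.subset_span (by simp)) e1)
        (Ideal.mul_mem_mul (Ideal.subset_span (by simp)) e2)
  rw [eq_top_iff]
  intro b _
  obtain ⟨w, hw, e⟩ := key N b
  rw [hN] at e
  rw [sub_eq_zero.1 (by simpa using e : b - w = 0)]
  exact hw

lemma span8 {B : Type*} [CommRing B] [Algebra K B] {x y : B} (hg : Gen K x y) {N : ℕ}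
    (hN : (Ideal.span {x, y}) ^ N = ⊥) (f : Fin 8 → B)
    (h1 : 1 ∈ Submodule.span K (Set.range f))
    (hx : ∀ i, x * f i ∈ Submodule.span K (Set.range f))
    (hy : ∀ i, y * f i ∈ Submodule.span K (Set.range f)) :
    Module.Finite K B ∧ Module.finrank K B ≤ 8 := by
  have cl : ∀ z : B, (∀ i, z * f i ∈ Submodule.span K (Set.range f)) →
      ∀ w ∈ Submodule.span K (Set.range f), z * w ∈ Submodule.span K (Set.range f) := by
    intro z hz w hw
    induction hw using Submodule.span_induction with
    | mem w hw => obtain ⟨i, rfl⟩ := hw; exact hz i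
    | zero => rw [mul_zero]; exact zero_mem _
    | add a b _ _ ha hb => rw [mul_add]; exact add_mem ha hb
    | smul c a _ ha => rw [mul_smul_comm]; exact Submodule.smul_mem _ _ ha
  have top := gen_top hg hN _ h1 (cl x hx) (cl y hy)
  have hf : Module.Finite K B := ⟨top ▸ Submodule.fg_span (Set.finite_range f)⟩
  refine ⟨hf, ?_⟩
  have := finrank_range_le_card (R := K) f
  rw [Set.finrank, top, finrank_top] at this
  simpa using this

lemma gen_quot (I : Ideal (MvPowerSeries (Fin 2) K)) :
    Gen K (Ideal.Quotient.mk I (psX 0)) (Ideal.Quotient.mk I (psX 1)) := by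
  intro b
  obtain ⟨f, rfl⟩ := Ideal.Quotient.mk_surjective b
  obtain ⟨g, h, e⟩ := split f
  refine ⟨cc 0 0 f, Ideal.Quotient.mk I g, Ideal.Quotient.mk I h, ?_⟩
  conv_lhs => rw [e]
  rw [map_add, map_add, map_mul, map_mul]
  rfl

lemma pair_pow {B : Type*} [CommRing B] {x y : B} {n : ℕ} (hx : x ^ n = 0) (hy : y ^ n = 0) :
    (Ideal.span {x, y}) ^ (n + n) = ⊥ := by
  rw [Ideal.span_insert, eq_bot_iff]
  refine Ideal.sup_pow_add_le_pow_sup_pow.trans ?_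
  rw [Ideal.span_singleton_pow, Ideal.span_singleton_pow, hx, hy]
  simp

lemma sp8 {B : Type*} [CommRing B] [Algebra K B] {x y : B} (hg : Gen K x y)
    (hx : x ^ 4 = 0) (c d : K) (hy : y ^ 2 = algebraMap K B c * x ^ 2 + algebraMap K B d * x ^ 3) :
    Module.Finite K B ∧ Module.finrank K B ≤ 8 := by
  have hy4 : y ^ 4 = 0 := by
    linear_combination (y ^ 2 + algebraMap K B c * x ^ 2 + algebraMap K B d * x ^ 3) * hy +
      (algebraMap K B c + algebraMap K B d * x) ^ 2 * hx
  let f : Fin 8 → B := ![1, x, x ^ 2, x ^ 3, y, x * y, x ^ 2 * y, x ^ 3 * y]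
  have hm : ∀ i, f i ∈ Submodule.span K (Set.range f) := fun i =>
    Submodule.subset_span ⟨i, rfl⟩
  have hz : (0 : B) ∈ Submodule.span K (Set.range f) := zero_mem _
  refine span8 hg (pair_pow hx hy4) f (hm 0) ?_ ?_
  · intro i
    fin_cases i
    · convert hm 1 using 1; simp [f]
    · convert hm 2 using 1; simp [f]; ring
    · convert hm 3 using 1; simp [f]; ring
    · convert hz using 1; simp [f]; rw [← hx]; ring
    · convert hm 5 using 1; simp [f]
    · convert hm 6 using 1; simp [f]; ring
    · convert hm 7 using 1; simp [f]; ring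
    · convert hz using 1; simp [f]
      linear_combination y * hx
  · intro i
    fin_cases i
    · convert hm 4 using 1; simp [f]
    · convert hm 5 using 1; simp [f]; ring
    · convert hm 6 using 1; simp [f]; ring
    · convert hm 7 using 1; simp [f]; ring
    · convert add_mem (Submodule.smul_mem _ c (hm 2)) (Submodule.smul_mem _ d (hm 3)) using 1
      simp [f, Algebra.smul_def]
      linear_combination hy
    · convert Submodule.smul_mem _ c (hm 3) using 1
      simp [f, Algebra.smul_def]
      linear_combination x * hy + algebraMap K B d * hx
    · convert hz using 1; simp [f]
      linear_combination x ^ 2 * hy + (algebraMap K B c + algebraMap K B d * x) * hx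
    · convert hz using 1; simp [f]
      linear_combination x ^ 3 * hy + (algebraMap K B c * x + algebraMap K B d * x ^ 2) * hx

lemma Gen.symm {B : Type*} [CommRing B] [Algebra K B] {x y : B} (hg : Gen K x y) : Gen K y x := by
  intro b
  obtain ⟨c, b1, b2, h⟩ := hg b
  exact ⟨c, b2, b1, by rw [h]; ring⟩

lemma fin_a : Module.Finite K (MvPowerSeries (Fin 2) K ⧸
      (Ideal.span {psX 0 ^ 4, psX 1 ^ 2} : Ideal (MvPowerSeries (Fin 2) K))) ∧
    Module.finrank K (MvPowerSeries (Fin 2) K ⧸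
      (Ideal.span {psX 0 ^ 4, psX 1 ^ 2} : Ideal (MvPowerSeries (Fin 2) K))) ≤ 8 := by
  refine sp8 (gen_quot _) ?_ 0 0 ?_
  · rw [← map_pow, Ideal.Quotient.eq_zero_iff_mem]
    exact Ideal.subset_span (by simp)
  · rw [map_zero, zero_mul, zero_mul, add_zero, ← map_pow, Ideal.Quotient.eq_zero_iff_mem]
    exact Ideal.subset_span (by simp)

lemma fin_b : Module.Finite K (MvPowerSeries (Fin 2) K ⧸
      (Ideal.span {psX 0 ^ 4, -psX 0 ^ 3 + psX 1 ^ 2} : Ideal (MvPowerSeries (Fin 2) K))) ∧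
    Module.finrank K (MvPowerSeries (Fin 2) K ⧸
      (Ideal.span {psX 0 ^ 4, -psX 0 ^ 3 + psX 1 ^ 2} :
        Ideal (MvPowerSeries (Fin 2) K))) ≤ 8 := by
  refine sp8 (gen_quot _) ?_ 0 1 ?_
  · rw [← map_pow, Ideal.Quotient.eq_zero_iff_mem]
    exact Ideal.subset_span (by simp)
  · rw [map_zero, zero_mul, zero_add, map_one, one_mul, ← map_pow, ← map_pow, Ideal.Quotient.eq]
    exact Ideal.subset_span (by right; simp; ring)

lemma sp8c {B : Type*} [CommRing B] [Algebra K B] {x y : B} (hg : Gen K x y)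
    (hx : x ^ 4 = 0) (hy : y ^ 2 + x ^ 2 = 0) :
    Module.Finite K B ∧ Module.finrank K B ≤ 8 :=
  sp8 hg hx (-1) 0 (by rw [map_zero, map_neg, map_one]; linear_combination hy)

lemma fin_c : Module.Finite K (MvPowerSeries (Fin 2) K ⧸
      (Ideal.span {psX 0 ^ 2 + psX 1 ^ 2, psX 1 ^ 4} : Ideal (MvPowerSeries (Fin 2) K))) ∧
    Module.finrank K (MvPowerSeries (Fin 2) K ⧸
      (Ideal.span {psX 0 ^ 2 + psX 1 ^ 2, psX 1 ^ 4} :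
        Ideal (MvPowerSeries (Fin 2) K))) ≤ 8 := by
  refine sp8c (gen_quot _).symm ?_ ?_
  · rw [← map_pow, Ideal.Quotient.eq_zero_iff_mem]
    exact Ideal.subset_span (by simp)
  · have h : Ideal.Quotient.mk (Ideal.span {psX 0 ^ 2 + psX 1 ^ 2, psX 1 ^ 4} :
        Ideal (MvPowerSeries (Fin 2) K)) (psX 0 ^ 2 + psX 1 ^ 2) = 0 :=
      Ideal.Quotient.eq_zero_iff_mem.2 (Ideal.subset_span (by simp))
    rw [map_add, map_pow, map_pow] at h
    exact h

lemma exists_hom {A : Type*} [CommRing A] [Algebra K A] {x y : A}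
    (hx : IsNilpotent x) (hy : IsNilpotent y) :
    ∃ F : MvPowerSeries (Fin 2) K →ₐ[K] A, F (psX 0) = x ∧ F (psX 1) = y := by
  let : UniformSpace K := ⊥
  let : UniformSpace A := ⊥
  have : DiscreteTopology K := ⟨rfl⟩
  have : DiscreteTopology A := ⟨rfl⟩
  have : DiscreteUniformity K := ⟨rfl⟩
  have : DiscreteUniformity A := ⟨rfl⟩
  have : IsUniformAddGroup K := inferInstance
  have : IsUniformAddGroup A := inferInstance
  have : IsLinearTopology A A := inferInstance
  have : ContinuousSMul K A := ⟨continuous_of_discreteTopology⟩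
  have ha : MvPowerSeries.HasEval ![x, y] := by
    refine ⟨?_, ?_⟩
    · intro s
      have : IsNilpotent (![x, y] s) := by fin_cases s <;> simpa
      obtain ⟨n, hn⟩ := this
      refine tendsto_nhds_of_eventually_eq ?_
      filter_upwards [Filter.eventually_ge_atTop n] with k hk
      exact pow_eq_zero_of_le hk hn
    · simp
  refine ⟨MvPowerSeries.aeval ha, ?_, ?_⟩
  · unfold psX; rw [MvPowerSeries.coe_aeval, MvPowerSeries.eval₂_X]; rfl
  · unfold psX; rw [MvPowerSeries.coe_aeval, MvPowerSeries.eval₂_X]; rfl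

lemma make_iso {A : Type*} [CommRing A] [Algebra K A] {x y : A} {N : ℕ}
    (hN : (Ideal.span {x, y}) ^ N = ⊥) (hg : Gen K x y) (h8 : Module.finrank K A = 8)
    {g1 g2 : MvPowerSeries (Fin 2) K}
    (hfin : Module.Finite K (MvPowerSeries (Fin 2) K ⧸ Ideal.span {g1, g2}) ∧
      Module.finrank K (MvPowerSeries (Fin 2) K ⧸ Ideal.span {g1, g2}) ≤ 8)
    (hF : ∀ F : MvPowerSeries (Fin 2) K →ₐ[K] A, F (psX 0) = x → F (psX 1) = y →
      F g1 = 0 ∧ F g2 = 0) :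
    Nonempty (A ≃ₐ[K] (MvPowerSeries (Fin 2) K ⧸ Ideal.span {g1, g2})) := by
  have nil : ∀ z ∈ Ideal.span {x, y}, IsNilpotent z := fun z hz =>
    ⟨N, by simpa [hN] using Ideal.pow_mem_pow hz N⟩
  obtain ⟨F, hF0, hF1⟩ := exists_hom (K := K) (nil x (Ideal.subset_span (by simp)))
    (nil y (Ideal.subset_span (by simp)))
  obtain ⟨e1, e2⟩ := hF F hF0 hF1
  have hle : ∀ a ∈ Ideal.span {g1, g2}, F a = 0 := by
    intro a ha
    obtain ⟨u, v, rfl⟩ := Ideal.mem_span_pair.1 ha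
    simp [e1, e2]
  have hsurj : Function.Surjective F := by
    have := gen_top hg hN (LinearMap.range F.toLinearMap) ⟨1, by simp⟩ ?_ ?_
    · exact LinearMap.range_eq_top.1 this
    · rintro _ ⟨a, rfl⟩
      exact ⟨psX 0 * a, by simp [hF0]⟩
    · rintro _ ⟨a, rfl⟩
      exact ⟨psX 1 * a, by simp [hF1]⟩
  let G := Ideal.Quotient.liftₐ (Ideal.span {g1, g2}) F hle
  have hG : Function.Surjective G := by
    intro a
    obtain ⟨b, rfl⟩ := hsurj a
    exact ⟨Ideal.Quotient.mk _ b, rfl⟩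
  have := hfin.1
  have hfA : Module.Finite K A := Module.Finite.of_surjective G.toLinearMap hG
  have hr : Module.finrank K (MvPowerSeries (Fin 2) K ⧸ Ideal.span {g1, g2}) =
      Module.finrank K A := by
    apply le_antisymm
    · rw [h8]; exact hfin.2
    · exact LinearMap.finrank_le_finrank_of_surjective (f := G.toLinearMap) hG
  have hinj : Function.Injective G :=
    (LinearMap.injective_iff_surjective_of_finrank_eq_finrank (f := G.toLinearMap) hr).2 hG
  exact ⟨(AlgEquiv.ofBijective G ⟨hinj, hG⟩).symm⟩

end HC

namespace HC

variable {K : Type*} [Field K] {A : Type*} [CommRing A] [Algebra K A]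

local notation "ι" => algebraMap K A

lemma sp1 [Module.Finite K A] {U V : Submodule K A} (hUV : U ≤ V)
    (hd : Module.finrank K V ≤ Module.finrank K U + 1) {u : A} (hu : u ∈ V) (hu' : u ∉ U) :
    ∀ a ∈ V, ∃ c : K, a - ι c * u ∈ U := by
  have hle : U ⊔ Submodule.span K {u} ≤ V :=
    sup_le hUV ((Submodule.span_singleton_le_iff_mem _ _).2 hu)
  have hlt : U < U ⊔ Submodule.span K {u} := by
    refine lt_of_le_of_ne le_sup_left fun h => hu' ?_
    rw [h]
    exact Submodule.mem_sup_right (Submodule.mem_span_singleton_self u)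
  have h1 := Submodule.finrank_lt_finrank_of_lt hlt
  have h2 := Submodule.eq_of_le_of_finrank_le hle (by omega)
  intro a ha
  rw [← h2] at ha
  obtain ⟨w, hw, z, hz, rfl⟩ := Submodule.mem_sup.1 ha
  obtain ⟨c, rfl⟩ := Submodule.mem_span_singleton.1 hz
  refine ⟨c, ?_⟩
  rw [← Algebra.smul_def, add_sub_cancel_right]
  exact hw

lemma fr1 (u : A) : Module.finrank K (Submodule.span K {u}) ≤ 1 := by
  have := finrank_span_finset_le_card (R := K) ({u} : Finset A)
  rw [Finset.card_singleton, Finset.coe_singleton] at this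
  exact this

lemma finrank_le_of [Module.Finite K A] {U V : Submodule K A} {u : A}
    (h : ∀ a ∈ V, ∃ c : K, a - ι c * u ∈ U) :
    Module.finrank K V ≤ Module.finrank K U + 1 := by
  have hle : V ≤ U ⊔ Submodule.span K {u} := by
    intro a ha
    obtain ⟨c, hc⟩ := h a ha
    rw [← sub_add_cancel a (ι c * u), Algebra.smul_def c u |>.symm] at *
    exact Submodule.add_mem_sup (by simpa using hc) (Submodule.smul_mem _ _ (Submodule.mem_span_singleton_self u))
  have h1 := Submodule.finrank_mono hle
  have h2 := Submodule.finrank_add_le_finrank_add_finrank U (Submodule.span K {u})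
  have h3 := fr1 (K := K) u
  omega

/-- dimension of a power of an ideal -/
noncomputable def dm (K : Type*) [Field K] {A : Type*} [CommRing A] [Algebra K A]
    (m : Ideal A) (k : ℕ) : ℕ := Module.finrank K ((m ^ k).restrictScalars K)

/-- basis of the cotangent space -/
def Sp (K : Type*) [Field K] {A : Type*} [CommRing A] [Algebra K A] (m : Ideal A) (x y : A) : Prop :=
  x ∈ m ∧ y ∈ m ∧ ∀ a ∈ m, ∃ α β : K,
    a - (algebraMap K A α * x + algebraMap K A β * y) ∈ m ^ 2

lemma Sp.change {m : Ideal A} {x y X Y : A} (h : Sp K m x y) (hX : X ∈ m) (hY : Y ∈ m)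
    (a b c d : K) (h1 : x - (ι a * X + ι b * Y) ∈ m ^ 2) (h2 : y - (ι c * X + ι d * Y) ∈ m ^ 2) :
    Sp K m X Y := by
  refine ⟨hX, hY, fun z hz => ?_⟩
  obtain ⟨α, β, h3⟩ := h.2.2 z hz
  refine ⟨α * a + β * c, α * b + β * d, ?_⟩
  have := add_mem (add_mem h3 (Ideal.mul_mem_left _ (ι α) h1)) (Ideal.mul_mem_left _ (ι β) h2)
  convert this using 1
  simp only [map_add, map_mul]
  ring

lemma step {m : Ideal A} {x y u v : A} (h : Sp K m x y) {k : ℕ} (hu : u ∈ m ^ k) (hv : v ∈ m ^ k)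
    (hk : ∀ a ∈ m ^ k, ∃ α β : K, a - (ι α * u + ι β * v) ∈ m ^ (k + 1)) :
    ∀ a ∈ m ^ (k + 1), ∃ p q r s : K,
      a - (ι p * (u * x) + ι q * (u * y) + ι r * (v * x) + ι s * (v * y)) ∈ m ^ (k + 2) := by
  intro a ha
  rw [pow_succ] at ha
  refine Submodule.mul_induction_on ha ?_ ?_
  · intro b hb c hc
    obtain ⟨α, β, h1⟩ := hk b hb
    obtain ⟨γ, δ, h2⟩ := h.2.2 c hc
    refine ⟨α * γ, α * δ, β * γ, β * δ, ?_⟩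
    have h3 : (b - (ι α * u + ι β * v)) * c ∈ m ^ (k + 2) := by
      rw [pow_succ m (k + 1)]; exact Ideal.mul_mem_mul h1 hc
    have h4 : (ι α * u + ι β * v) * (c - (ι γ * x + ι δ * y)) ∈ m ^ (k + 2) := by
      rw [pow_add m k 2]
      exact Ideal.mul_mem_mul (add_mem (Ideal.mul_mem_left _ _ hu) (Ideal.mul_mem_left _ _ hv)) h2
    convert add_mem h3 h4 using 1
    simp only [map_mul]; ring
  · rintro b c ⟨p, q, r, s, h1⟩ ⟨p', q', r', s', h2⟩
    refine ⟨p + p', q + q', r + r', s + s', ?_⟩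
    convert add_mem h1 h2 using 1
    simp only [map_add]; ring

lemma nak {m J : Ideal A} (h2 : m ≤ J ⊔ m ^ 2) (n : ℕ) : m ≤ J ⊔ m ^ n := by
  induction n with
  | zero => rw [pow_zero, Ideal.one_eq_top, sup_top_eq]; exact le_top
  | succ n ih =>
    refine h2.trans (sup_le le_sup_left ?_)
    rw [pow_two, Ideal.mul_le]
    intro r hr s hs
    obtain ⟨j, hj, t, ht, rfl⟩ := Submodule.mem_sup.1 (ih hr)
    rw [add_mul]
    refine Submodule.add_mem_sup (Ideal.mul_mem_right _ _ hj) ?_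
    rw [pow_succ]
    exact Ideal.mul_mem_mul ht hs

lemma Sp.span_eq {m : Ideal A} (h5 : m ^ 5 = ⊥) {x y : A} (h : Sp K m x y) :
    Ideal.span {x, y} = m := by
  have hle : Ideal.span {x, y} ≤ m := by
    rw [Ideal.span_le]; rintro _ (rfl | rfl); exacts [h.1, h.2.1]
  apply le_antisymm hle
  have h2 : m ≤ Ideal.span {x, y} ⊔ m ^ 2 := by
    intro a ha
    obtain ⟨α, β, hab⟩ := h.2.2 a ha
    rw [← add_sub_cancel (ι α * x + ι β * y) a]
    exact Submodule.add_mem_sup (add_mem (Ideal.mul_mem_left _ _ (Ideal.subset_span (by simp)))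
      (Ideal.mul_mem_left _ _ (Ideal.subset_span (by simp)))) hab
  have := nak h2 5
  rwa [h5, sup_bot_eq] at this

lemma Sp.gen {m : Ideal A} (h5 : m ^ 5 = ⊥) (hK : ∀ a : A, ∃ c : K, a - ι c ∈ m)
    {x y : A} (h : Sp K m x y) : Gen K x y := by
  intro b
  obtain ⟨c, hc⟩ := hK b
  rw [← h.span_eq h5] at hc
  obtain ⟨u, v, e⟩ := Ideal.mem_span_pair.1 hc
  exact ⟨c, u, v, by linear_combination -e⟩

lemma Sp.soc {m : Ideal A} (h5 : m ^ 5 = ⊥) (hs : ∀ a : A, (∀ b ∈ m, a * b = 0) → a ∈ m ^ 4)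
    {x y : A} (h : Sp K m x y) {a : A} (hx : a * x = 0) (hy : a * y = 0) : a ∈ m ^ 4 := by
  refine hs a fun b hb => ?_
  rw [← h.span_eq h5] at hb
  obtain ⟨u, v, rfl⟩ := Ideal.mem_span_pair.1 hb
  linear_combination u * hx + v * hy

lemma mm1 {m : Ideal A} {x a : A} {k : ℕ} (hx : x ∈ m) (ha : a ∈ m ^ k) : x * a ∈ m ^ (k + 1) := by
  rw [pow_succ']; exact Ideal.mul_mem_mul hx ha

lemma z5 {m : Ideal A} (h5 : m ^ 5 = ⊥) {a : A} {k : ℕ} (hk : 5 ≤ k) (ha : a ∈ m ^ k) : a = 0 := by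
  have := Ideal.pow_le_pow_right hk ha
  rwa [h5, Ideal.mem_bot] at this

/-- properties in the case `x y ∈ m^3` -/
lemma caseD1 [Module.Finite K A] {m : Ideal A} (h5 : m ^ 5 = ⊥) (d3 : dm K m 3 = 3)
    (d4 : dm K m 4 = 1) {x y : A} (h : Sp K m x y) (hxy : x * y ∈ m ^ 3) :
    (∀ a ∈ m ^ 3, ∃ α β : K, a - (ι α * x ^ 3 + ι β * y ^ 3) ∈ m ^ 4) ∧
    (∀ a ∈ m ^ 4, ∃ α β : K, a = ι α * x ^ 4 + ι β * y ^ 4) ∧ x ^ 3 ∉ m ^ 4 ∧ y ^ 3 ∉ m ^ 4 := by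
  have hx := h.1
  have hy := h.2.1
  have s2 : ∀ a ∈ m ^ 2, ∃ α β : K, a - (ι α * x ^ 2 + ι β * y ^ 2) ∈ m ^ 3 := by
    intro a ha
    obtain ⟨p, q, r, s, e⟩ := step h (k := 1) (by simpa using hx) (by simpa using hy)
      (by simpa using h.2.2) a ha
    refine ⟨p, s, ?_⟩
    convert add_mem e (Ideal.mul_mem_left _ (ι q + ι r) hxy) using 1; ring
  have s3 : ∀ a ∈ m ^ 3, ∃ α β : K, a - (ι α * x ^ 3 + ι β * y ^ 3) ∈ m ^ 4 := by
    intro a ha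
    obtain ⟨p, q, r, s, e⟩ := step h (k := 2) (Ideal.pow_mem_pow hx 2) (Ideal.pow_mem_pow hy 2)
      s2 a ha
    refine ⟨p, s, ?_⟩
    convert add_mem e (add_mem (Ideal.mul_mem_left _ (ι q) (mm1 hx hxy))
      (Ideal.mul_mem_left _ (ι r) (mm1 hy hxy))) using 1; ring
  have s4 : ∀ a ∈ m ^ 4, ∃ α β : K, a = ι α * x ^ 4 + ι β * y ^ 4 := by
    intro a ha
    obtain ⟨p, q, r, s, e⟩ := step h (k := 3) (Ideal.pow_mem_pow hx 3) (Ideal.pow_mem_pow hy 3)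
      s3 a ha
    refine ⟨p, s, ?_⟩
    have := z5 h5 le_rfl e
    have e1 := z5 h5 le_rfl (mm1 hx (mm1 hx hxy))
    have e2 := z5 h5 le_rfl (mm1 hy (mm1 hy hxy))
    linear_combination this + ι q * e1 + ι r * e2
  refine ⟨s3, s4, fun hc => ?_, fun hc => ?_⟩
  · have := finrank_le_of (K := K) (V := (m ^ 3).restrictScalars K) (U := (m ^ 4).restrictScalars K)
      (u := y ^ 3) (by
        intro a ha
        obtain ⟨α, β, e⟩ := s3 a ha
        refine ⟨β, ?_⟩
        have := add_mem e (Ideal.mul_mem_left _ (ι α) hc)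
        show _ ∈ m ^ 4
        convert this using 1; ring)
    unfold dm at d3 d4; omega
  · have := finrank_le_of (K := K) (V := (m ^ 3).restrictScalars K) (U := (m ^ 4).restrictScalars K)
      (u := x ^ 3) (by
        intro a ha
        obtain ⟨α, β, e⟩ := s3 a ha
        refine ⟨α, ?_⟩
        have := add_mem e (Ideal.mul_mem_left _ (ι β) hc)
        show _ ∈ m ^ 4
        convert this using 1; ring)
    unfold dm at d3 d4; omega

lemma caseD [IsAlgClosed K] [CharZero K] [Module.Finite K A] {m : Ideal A} (h5 : m ^ 5 = ⊥)
    (d3 : dm K m 3 = 3) (d4 : dm K m 4 = 1)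
    (hs : ∀ a : A, (∀ b ∈ m, a * b = 0) → a ∈ m ^ 4)
    {x y : A} (h : Sp K m x y) (hxy : x * y ∈ m ^ 3) :
    ∃ X Y : A, Sp K m X Y ∧ X ^ 2 + Y ^ 2 = 0 ∧ Y ^ 4 = 0 := by
  obtain ⟨x1, y1, h1, hxy1⟩ : ∃ x1 y1 : A, Sp K m x1 y1 ∧ x1 * y1 = 0 := by
    have hx := h.1
    have hy := h.2.1
    obtain ⟨s3, s4, -, -⟩ := caseD1 h5 d3 d4 h hxy
    obtain ⟨α, β, e⟩ := s3 _ hxy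
    obtain ⟨γ, δ, e⟩ := s4 _ e
    have hx2 : ι β * y ^ 2 + ι δ * y ^ 3 ∈ m ^ 2 := add_mem
      (Ideal.mul_mem_left _ _ (Ideal.pow_mem_pow hy 2))
      (Ideal.mul_mem_left _ _ (Ideal.pow_le_pow_right (by norm_num) (Ideal.pow_mem_pow hy 3)))
    have hy2 : ι α * x ^ 2 + ι γ * x ^ 3 ∈ m ^ 2 := add_mem
      (Ideal.mul_mem_left _ _ (Ideal.pow_mem_pow hx 2))
      (Ideal.mul_mem_left _ _ (Ideal.pow_le_pow_right (by norm_num) (Ideal.pow_mem_pow hx 3)))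
    have hle : m ^ 2 ≤ m := Ideal.pow_le_self two_ne_zero
    refine ⟨x - (ι β * y ^ 2 + ι δ * y ^ 3), y - (ι α * x ^ 2 + ι γ * x ^ 3),
      h.change (sub_mem hx (hle hx2)) (sub_mem hy (hle hy2)) 1 0 0 1 ?_ ?_, ?_⟩
    · simpa using hx2
    · simpa using hy2
    · have e2 : x ^ 2 * y ^ 2 = 0 := by
        have := Ideal.mul_mem_mul hxy hxy
        rw [← pow_add] at this
        have := z5 h5 (by norm_num) this
        linear_combination this
      linear_combination e + (ι β + ι δ * y) * (ι α + ι γ * x) * e2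
  obtain ⟨-, -, n1, n2⟩ := caseD1 h5 d3 d4 h1 (by rw [hxy1]; exact zero_mem _)
  have hx := h1.1
  have hy := h1.2.1
  have x4 : x1 ^ 4 ≠ 0 := fun hc => n1 (h1.soc h5 hs (by linear_combination hc)
    (by linear_combination x1 ^ 2 * hxy1))
  have y4 : y1 ^ 4 ≠ 0 := fun hc => n2 (h1.soc h5 hs (by linear_combination y1 ^ 2 * hxy1)
    (by linear_combination hc))
  obtain ⟨c, hc⟩ := sp1 (K := K) (U := ⊥) (V := (m ^ 4).restrictScalars K) bot_le
    (by unfold dm at d4; simp [d4]) (u := x1 ^ 4) (Ideal.pow_mem_pow hx 4) (by simpa using x4)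
    (y1 ^ 4) (Ideal.pow_mem_pow hy 4)
  have hc' : y1 ^ 4 = ι c * x1 ^ 4 := by
    rw [Submodule.mem_bot] at hc; exact sub_eq_zero.1 hc
  have c0 : c ≠ 0 := by rintro rfl; rw [map_zero, zero_mul] at hc'; exact y4 hc'
  obtain ⟨l, hl⟩ := IsAlgClosed.exists_pow_nat_eq (-c) (n := 4) (by norm_num)
  have l0 : l ≠ 0 := by
    rintro rfl
    apply c0
    rw [← neg_eq_zero, ← hl]; norm_num
  obtain ⟨I, hI⟩ := IsAlgClosed.exists_pow_nat_eq (-1 : K) (n := 2) (by norm_num)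
  have hI' : (ι I) ^ 2 = -1 := by rw [← map_pow, hI, map_neg, map_one]
  have hl' : (ι l) ^ 4 = - ι c := by rw [← map_pow, hl, map_neg]
  obtain ⟨k, hk⟩ : ∃ k, l * (2 * k) = 1 := ⟨l⁻¹ / 2, by field_simp⟩
  have hk' : ι l * (2 * ι k) = 1 := by
    rw [← map_one ι, ← hk, map_mul, map_mul, map_ofNat]
  obtain ⟨w, hw⟩ : ∃ w : K, 2 * w = 1 := ⟨1 / 2, by norm_num⟩
  have hw' : 2 * ι w = 1 := by rw [← map_one ι, ← hw, map_mul, map_ofNat]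
  refine ⟨ι l * x1 + y1, ι I * (ι l * x1 - y1), h1.change
    (add_mem (Ideal.mul_mem_left _ _ hx) hy)
    (Ideal.mul_mem_left _ _ (sub_mem (Ideal.mul_mem_left _ _ hx) hy))
    k (-I * k) w (I * w) ?_ ?_, ?_, ?_⟩
  · convert zero_mem (m ^ 2) using 1
    simp only [map_mul, map_neg]
    linear_combination (ι k) * (ι l * x1 - y1) * hI' - x1 * hk'
  · convert zero_mem (m ^ 2) using 1
    simp only [map_mul, map_neg]
    linear_combination -(ι w) * (ι l * x1 - y1) * hI' - y1 * hw'
  · linear_combination (ι l * x1 - y1) ^ 2 * hI' + 4 * ι l * hxy1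
  · have : ι I ^ 4 = 1 := by linear_combination (ι I ^ 2 - 1) * hI'
    linear_combination (ι l * x1 - y1) ^ 4 * this + x1 ^ 4 * hl' + hc' +
      (-4 * ι l ^ 3 * x1 ^ 2 + 6 * ι l ^ 2 * x1 * y1 - 4 * ι l * y1 ^ 2) * hxy1

/-- properties in the case `y^2 ∈ m^3` -/
lemma caseE1 [Module.Finite K A] {m : Ideal A} (h5 : m ^ 5 = ⊥) (d3 : dm K m 3 = 3)
    (d4 : dm K m 4 = 1) {x y : A} (h : Sp K m x y) (hyy : y * y ∈ m ^ 3) :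
    (∀ a ∈ m ^ 3, ∃ α β : K, a - (ι α * x ^ 3 + ι β * (x ^ 2 * y)) ∈ m ^ 4) ∧
    (∀ a ∈ m ^ 4, ∃ α β : K, a = ι α * x ^ 4 + ι β * (x ^ 3 * y)) ∧ x ^ 2 * y ∉ m ^ 4 := by
  have hx := h.1
  have hy := h.2.1
  have s2 : ∀ a ∈ m ^ 2, ∃ α β : K, a - (ι α * x ^ 2 + ι β * (x * y)) ∈ m ^ 3 := by
    intro a ha
    obtain ⟨p, q, r, s, e⟩ := step h (k := 1) (by simpa using hx) (by simpa using hy)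
      (by simpa using h.2.2) a ha
    refine ⟨p, q + r, ?_⟩
    convert add_mem e (Ideal.mul_mem_left _ (ι s) hyy) using 1
    rw [map_add]; ring
  have hy' : y ∈ m ^ 1 := by simpa using hy
  have s3 : ∀ a ∈ m ^ 3, ∃ α β : K, a - (ι α * x ^ 3 + ι β * (x ^ 2 * y)) ∈ m ^ 4 := by
    intro a ha
    obtain ⟨p, q, r, s, e⟩ := step h (k := 2) (Ideal.pow_mem_pow hx 2) (mm1 hx hy')
      s2 a ha
    refine ⟨p, q + r, ?_⟩
    convert add_mem e (Ideal.mul_mem_left _ (ι s) (mm1 hx hyy)) using 1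
    rw [map_add]; ring
  have s4 : ∀ a ∈ m ^ 4, ∃ α β : K, a = ι α * x ^ 4 + ι β * (x ^ 3 * y) := by
    intro a ha
    obtain ⟨p, q, r, s, e⟩ := step h (k := 3) (Ideal.pow_mem_pow hx 3)
      (by simpa [pow_two, mul_assoc] using mm1 hx (mm1 hx hy')) s3 a ha
    refine ⟨p, q + r, ?_⟩
    have := z5 h5 le_rfl e
    have e1 := z5 h5 le_rfl (mm1 hx (mm1 hx hyy))
    rw [map_add]
    linear_combination this + ι s * e1
  refine ⟨s3, s4, fun hc => ?_⟩
  have := finrank_le_of (K := K) (V := (m ^ 3).restrictScalars K) (U := (m ^ 4).restrictScalars K)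
    (u := x ^ 3) (by
      intro a ha
      obtain ⟨α, β, e⟩ := s3 a ha
      refine ⟨α, ?_⟩
      have := add_mem e (Ideal.mul_mem_left _ (ι β) hc)
      show _ ∈ m ^ 4
      convert this using 1; ring)
  unfold dm at d3 d4; omega

lemma caseE [IsAlgClosed K] [CharZero K] [Module.Finite K A] {m : Ideal A} (h5 : m ^ 5 = ⊥)
    (d3 : dm K m 3 = 3) (d4 : dm K m 4 = 1)
    (hs : ∀ a : A, (∀ b ∈ m, a * b = 0) → a ∈ m ^ 4)
    {x y : A} (h : Sp K m x y) (hyy : y * y ∈ m ^ 3) :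
    ∃ X Y : A, Sp K m X Y ∧ X ^ 4 = 0 ∧ (Y ^ 2 = 0 ∨ Y ^ 2 = X ^ 3) := by
  have hle : m ^ 2 ≤ m := Ideal.pow_le_self two_ne_zero
  obtain ⟨x1, h1, hx4⟩ : ∃ x1 : A, Sp K m x1 y ∧ x1 ^ 4 = 0 := by
    have hx := h.1
    have hy := h.2.1
    obtain ⟨s3, s4, n⟩ := caseE1 h5 d3 d4 h hyy
    have exx := z5 h5 le_rfl (mm1 hx (mm1 hx hyy))
    have exy := z5 h5 le_rfl (mm1 hx (mm1 hy hyy))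
    have eyy := z5 h5 le_rfl (mm1 hy (mm1 hy hyy))
    have n' : x ^ 3 * y ≠ 0 := fun hc => n (h.soc h5 hs (by linear_combination hc)
      (by linear_combination exx))
    have hy' : y ∈ m ^ 1 := by simpa using hy
    obtain ⟨c, hc⟩ := sp1 (K := K) (U := ⊥) (V := (m ^ 4).restrictScalars K) bot_le
      (by unfold dm at d4; simp [d4]) (u := x ^ 3 * y)
      (by
        have := mm1 hx (mm1 hx (mm1 hx hy'))
        show _ ∈ m ^ 4
        convert this using 1; ring) (by simpa using n')
      (x ^ 4) (Ideal.pow_mem_pow hx 4)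
    rw [Submodule.mem_bot] at hc
    obtain ⟨b, rfl⟩ : ∃ b, c = 4 * b := ⟨c / 4, by field_simp⟩
    rw [map_mul, map_ofNat] at hc
    refine ⟨x - ι b * y, h.change (sub_mem hx (Ideal.mul_mem_left _ _ hy)) hy 1 b 0 1 ?_ ?_, ?_⟩
    · simp
    · simp
    · linear_combination hc + 6 * ι b ^ 2 * exx - 4 * ι b ^ 3 * exy + ι b ^ 4 * eyy
  obtain ⟨s3, s4, -⟩ := caseE1 h5 d3 d4 h1 hyy
  have hx := h1.1
  have hy := h1.2.1
  obtain ⟨a, b, e⟩ := s3 _ hyy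
  obtain ⟨g, d, e⟩ := s4 _ e
  obtain ⟨b, rfl⟩ : ∃ b', b = 2 * b' := ⟨b / 2, by field_simp⟩
  obtain ⟨d, rfl⟩ : ∃ d', d = 2 * d' := ⟨d / 2, by field_simp⟩
  simp only [map_mul, map_ofNat] at e
  have hy2 : ι b * x1 ^ 2 + ι d * x1 ^ 3 ∈ m ^ 2 := add_mem
      (Ideal.mul_mem_left _ _ (Ideal.pow_mem_pow hx 2))
      (Ideal.mul_mem_left _ _ (Ideal.pow_le_pow_right (by norm_num) (Ideal.pow_mem_pow hx 3)))
  set y1 := y - (ι b * x1 ^ 2 + ι d * x1 ^ 3) with hy1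
  have h2 : Sp K m x1 y1 := h1.change hx (sub_mem hy (hle hy2)) 1 0 0 1 (by simp)
    (by simpa [hy1] using hy2)
  have e1 : y1 ^ 2 = ι a * x1 ^ 3 := by
    rw [hy1]
    linear_combination e + (ι g + (ι b + ι d * x1) ^ 2) * hx4
  by_cases ha : a = 0
  · exact ⟨x1, y1, h2, hx4, Or.inl (by rw [e1, ha]; simp)⟩
  · obtain ⟨l, hl⟩ := IsAlgClosed.exists_pow_nat_eq a (n := 3) (by norm_num)
    have l0 : l ≠ 0 := by
      rintro rfl
      apply ha; rw [← hl]; norm_num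
    refine ⟨ι l * x1, y1, h2.change (Ideal.mul_mem_left _ _ hx) h2.2.1 l⁻¹ 0 0 1 ?_ (by simp), ?_,
      Or.inr ?_⟩
    · rw [← mul_assoc, ← map_mul, inv_mul_cancel₀ l0]; simp
    · rw [mul_pow, hx4, mul_zero]
    · rw [e1, ← hl, map_pow]; ring

lemma exists_uv [IsAlgClosed K] [CharZero K] [Module.Finite K A] {m : Ideal A}
    (d1 : dm K m 1 = 7) (d2 : dm K m 2 = 5) (d3 : dm K m 3 = 3) :
    (∃ x y : A, Sp K m x y ∧ x * y ∈ m ^ 3) ∨ (∃ x y : A, Sp K m x y ∧ y * y ∈ m ^ 3) := by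
  have hle : m ^ 2 ≤ m := Ideal.pow_le_self two_ne_zero
  unfold dm at d1 d2 d3
  rw [pow_one] at d1
  -- completing to a basis
  have comp : ∀ u ∈ m, ∃ v ∈ m, v ∉ (m ^ 2).restrictScalars K ⊔ Submodule.span K {u} := by
    intro u hu
    by_contra! hc
    have h1 := Submodule.finrank_mono
      (show m.restrictScalars K ≤ (m ^ 2).restrictScalars K ⊔ Submodule.span K {u} from hc)
    have h2 := Submodule.finrank_add_le_finrank_add_finrank ((m ^ 2).restrictScalars K)
      (Submodule.span K {u})
    have h3 := fr1 (K := K) u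
    omega
  have basis : ∀ u ∈ m, u ∉ m ^ 2 → ∀ v ∈ m,
      v ∉ (m ^ 2).restrictScalars K ⊔ Submodule.span K {u} → Sp K m u v := by
    intro u hu hu' v hv hv'
    refine ⟨hu, hv, fun a ha => ?_⟩
    have hlt : (m ^ 2).restrictScalars K < (m ^ 2).restrictScalars K ⊔ Submodule.span K {u} := by
      refine lt_of_le_of_ne le_sup_left fun h => hu' ?_
      have : u ∈ (m ^ 2).restrictScalars K := by
        rw [h]; exact Submodule.mem_sup_right (Submodule.mem_span_singleton_self u)
      exact this
    have h1 := Submodule.finrank_lt_finrank_of_lt hlt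
    have hle' : (m ^ 2).restrictScalars K ≤ m.restrictScalars K := by
      intro z hz
      rw [Submodule.restrictScalars_mem] at hz ⊢
      exact hle hz
    obtain ⟨c, hc⟩ := sp1 (K := K) (U := (m ^ 2).restrictScalars K ⊔ Submodule.span K {u})
      (V := m.restrictScalars K)
      (sup_le hle' ((Submodule.span_singleton_le_iff_mem _ _).2 hu)) (by omega) hv hv' a ha
    obtain ⟨w, hw, z, hz, e⟩ := Submodule.mem_sup.1 hc
    obtain ⟨d, rfl⟩ := Submodule.mem_span_singleton.1 hz
    rw [Algebra.smul_def] at e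
    refine ⟨d, c, ?_⟩
    have : a - (ι d * u + ι c * v) = w := by linear_combination -e
    rw [this]; exact hw
  obtain ⟨x, hx, hx'⟩ : ∃ x ∈ m, x ∉ m ^ 2 := by
    obtain ⟨v, hv, hv'⟩ := comp 0 (zero_mem _)
    exact ⟨v, hv, fun h => hv' (Submodule.mem_sup_left h)⟩
  obtain ⟨y, hy, hy'⟩ := comp x hx
  have ind : ∀ α β : K, ι α * x + ι β * y ∈ m ^ 2 → α = 0 ∧ β = 0 := by
    intro α β h
    have hb : β = 0 := by
      by_contra hb
      apply hy'
      refine Submodule.mem_sup.2 ⟨ι β⁻¹ * (ι α * x + ι β * y), Ideal.mul_mem_left _ _ h,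
        -(β⁻¹ * α) • x, Submodule.smul_mem _ _ (Submodule.mem_span_singleton_self x), ?_⟩
      have : ι β⁻¹ * ι β = 1 := by rw [← map_mul, inv_mul_cancel₀ hb, map_one]
      rw [Algebra.smul_def, map_neg, map_mul]
      linear_combination y * this
    refine ⟨?_, hb⟩
    by_contra ha
    apply hx'
    rw [hb, map_zero, zero_mul, add_zero] at h
    have := Ideal.mul_mem_left _ (ι α⁻¹) h
    rwa [← mul_assoc, ← map_mul, inv_mul_cancel₀ ha, map_one, one_mul] at this
  -- the quadratic relation
  obtain ⟨p, q, r, hne, hrel⟩ : ∃ p q r : K, ¬ (p = 0 ∧ q = 0 ∧ r = 0) ∧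
      ι p * x ^ 2 + ι q * (x * y) + ι r * y ^ 2 ∈ m ^ 3 := by
    let L : (Fin 3 → K) →ₗ[K] A := Fintype.linearCombination K ![x ^ 2, x * y, y ^ 2]
    have hL : ∀ c, L c = ι (c 0) * x ^ 2 + ι (c 1) * (x * y) + ι (c 2) * y ^ 2 := by
      intro c
      simp [L, Fintype.linearCombination_apply, Fin.sum_univ_three, Algebra.smul_def]
    by_contra! hc
    have hinj : Function.Injective L := by
      rw [← LinearMap.ker_eq_bot, LinearMap.ker_eq_bot']
      intro c h0
      by_contra hcne
      refine hc (c 0) (c 1) (c 2) ?_ (by rw [← hL, h0]; exact zero_mem _)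
      intro e0 e1 e2
      apply hcne
      ext i; fin_cases i <;> assumption
    have hdisj : LinearMap.range L ⊓ (m ^ 3).restrictScalars K = ⊥ := by
      rw [eq_bot_iff]
      rintro _ ⟨⟨c, rfl⟩, h3⟩
      by_contra hne
      refine hc (c 0) (c 1) (c 2) ?_ (by rw [← hL]; exact h3)
      intro e0 e1 e2
      apply hne
      rw [Submodule.mem_bot, hL, e0, e1, e2]; simp
    have hsum := Submodule.finrank_sup_add_finrank_inf_eq (LinearMap.range L)
      ((m ^ 3).restrictScalars K)
    rw [hdisj, finrank_bot, LinearMap.finrank_range_of_inj hinj, d3] at hsum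
    have hmono := Submodule.finrank_mono
      (show LinearMap.range L ⊔ (m ^ 3).restrictScalars K ≤ (m ^ 2).restrictScalars K from by
        refine sup_le ?_ (fun a ha => Ideal.pow_le_pow_right (by norm_num) ha)
        rintro _ ⟨c, rfl⟩
        rw [hL]
        show _ ∈ m ^ 2
        refine add_mem (add_mem (Ideal.mul_mem_left _ _ (Ideal.pow_mem_pow hx 2))
          (Ideal.mul_mem_left _ _ ?_)) (Ideal.mul_mem_left _ _ (Ideal.pow_mem_pow hy 2))
        rw [pow_two]; exact Ideal.mul_mem_mul hx hy)
    simp at hsum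
    omega
  obtain ⟨u, hu, hu', v, hv, hv', huv⟩ : ∃ u ∈ m, u ∉ m ^ 2 ∧ ∃ v ∈ m, v ∉ m ^ 2 ∧
      u * v ∈ m ^ 3 := by
    by_cases hp : p = 0
    · refine ⟨y, hy, fun h => ?_, ι q * x + ι r * y, add_mem (Ideal.mul_mem_left _ _ hx)
        (Ideal.mul_mem_left _ _ hy), fun h => hne ⟨hp, ind _ _ h⟩, ?_⟩
      · have := (ind 0 1 (by simpa using h)).2
        exact one_ne_zero this
      · rw [hp] at hrel
        convert hrel using 1
        simp; ring
    · obtain ⟨δ, hδ⟩ := IsAlgClosed.exists_pow_nat_eq (q ^ 2 - 4 * p * r) (n := 2) (by norm_num)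
      obtain ⟨α, β, h1, h2⟩ : ∃ α β : K, p⁻¹ * q = -(α + β) ∧ p⁻¹ * r = α * β := by
        refine ⟨(-q + δ) / (2 * p), (-q - δ) / (2 * p), ?_, ?_⟩
        · field_simp; ring
        · field_simp; linear_combination hδ
      have nn : ∀ α : K, x - ι α * y ∉ m ^ 2 := fun α h => by
        have := (ind 1 (-α) (by simpa [sub_eq_add_neg] using h)).1
        exact one_ne_zero this
      refine ⟨x - ι α * y, sub_mem hx (Ideal.mul_mem_left _ _ hy), nn α,
        x - ι β * y, sub_mem hx (Ideal.mul_mem_left _ _ hy), nn β, ?_⟩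
      have := Ideal.mul_mem_left _ (ι p⁻¹) hrel
      convert this using 1
      have e0 : ι p⁻¹ * ι p = 1 := by rw [← map_mul, inv_mul_cancel₀ hp, map_one]
      have e1 := congrArg ι h1
      have e2 := congrArg ι h2
      simp only [map_mul, map_neg, map_add] at e1 e2
      linear_combination -x ^ 2 * e0 - x * y * e1 - y ^ 2 * e2
  by_cases hd : v ∈ (m ^ 2).restrictScalars K ⊔ Submodule.span K {u}
  · right
    obtain ⟨w, hw, z, hz, e⟩ := Submodule.mem_sup.1 hd
    obtain ⟨c, rfl⟩ := Submodule.mem_span_singleton.1 hz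
    have hw : w ∈ m ^ 2 := hw
    have c0 : c ≠ 0 := by
      rintro rfl
      rw [zero_smul, add_zero] at e
      exact hv' (e ▸ hw)
    rw [Algebra.smul_def] at e
    obtain ⟨x', hx1, hx2⟩ := comp u hu
    have hS := basis u hu hu' x' hx1 hx2
    refine ⟨x', u, hS.change hx1 hu 0 1 1 0 (by simp) (by simp), ?_⟩
    have h1 := sub_mem huv (mm1 hu hw)
    have h2 := Ideal.mul_mem_left _ (ι c⁻¹) h1
    convert h2 using 1
    have e0 : ι c⁻¹ * ι c = 1 := by rw [← map_mul, inv_mul_cancel₀ c0, map_one]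
    rw [← e]
    linear_combination -u * u * e0
  · left
    exact ⟨u, v, basis u hu hu' v hv hd, huv⟩

end HC

namespace HC

lemma existence {K : Type*} [Field K] [IsAlgClosed K] [CharZero K]
    {A : Type*} [CommRing A] [Algebra K A] {m : Ideal A} (h5 : m ^ 5 = ⊥)
    (h8 : Module.finrank K A = 8) (hK : ∀ a : A, ∃ c : K, a - algebraMap K A c ∈ m)
    (d1 : dm K m 1 = 7) (d2 : dm K m 2 = 5) (d3 : dm K m 3 = 3) (d4 : dm K m 4 = 1)
    (hs : ∀ a : A, (∀ b ∈ m, a * b = 0) → a ∈ m ^ 4) :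
    Nonempty (A ≃ₐ[K] (MvPowerSeries (Fin 2) K ⧸
          (Ideal.span {psX 0 ^ 4, psX 1 ^ 2} : Ideal (MvPowerSeries (Fin 2) K)))) ∨
        Nonempty (A ≃ₐ[K] (MvPowerSeries (Fin 2) K ⧸
          (Ideal.span {psX 0 ^ 4, -psX 0 ^ 3 + psX 1 ^ 2} :
            Ideal (MvPowerSeries (Fin 2) K)))) ∨
        Nonempty (A ≃ₐ[K] (MvPowerSeries (Fin 2) K ⧸
          (Ideal.span {psX 0 ^ 2 + psX 1 ^ 2, psX 1 ^ 4} :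
            Ideal (MvPowerSeries (Fin 2) K)))) := by
  have : Module.Finite K A := Module.finite_of_finrank_pos (by omega)
  rcases exists_uv d1 d2 d3 with ⟨x, y, h, hxy⟩ | ⟨x, y, h, hyy⟩
  · obtain ⟨X, Y, hS, e1, e2⟩ := caseD h5 d3 d4 hs h hxy
    right; right
    refine make_iso (N := 5) (by rw [hS.span_eq h5, h5]) (hS.gen h5 hK) h8 fin_c ?_
    intro F hX hY
    rw [map_add, map_pow, map_pow, map_pow, hX, hY]
    exact ⟨e1, e2⟩
  · obtain ⟨X, Y, hS, e1, e2 | e2⟩ := caseE h5 d3 d4 hs h hyy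
    · left
      refine make_iso (N := 5) (by rw [hS.span_eq h5, h5]) (hS.gen h5 hK) h8 fin_a ?_
      intro F hX hY
      rw [map_pow, map_pow, hX, hY]
      exact ⟨e1, e2⟩
    · right; left
      refine make_iso (N := 5) (by rw [hS.span_eq h5, h5]) (hS.gen h5 hK) h8 fin_b ?_
      intro F hX hY
      rw [map_add, map_neg, map_pow, map_pow, map_pow, hX, hY]
      exact ⟨e1, by rw [e2, neg_add_cancel]⟩

lemma dm_add {K : Type*} [Field K] {A : Type*} [CommRing A] [Algebra K A] [Module.Finite K A]
    (m : Ideal A) (k : ℕ) :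
    Module.finrank K (A ⧸ m ^ k) + dm K m k = Module.finrank K A := by
  have h := Submodule.finrank_quotient_add_finrank ((m ^ k).restrictScalars K)
  have e := (Submodule.Quotient.restrictScalarsEquiv K (m ^ k)).finrank_eq
  unfold dm
  rw [← h]
  congr 1

lemma hyps {K : Type*} [Field K] {A : Type*} [CommRing A] [IsLocalRing A] [Algebra K A]
    (hres : residueFieldIsK K A) (hGor : socDimLoc K A = 1)
    (h0 : hilbLoc K A 0 = 1) (h1 : hilbLoc K A 1 = 2) (h2 : hilbLoc K A 2 = 2)
    (h3 : hilbLoc K A 3 = 2) (h4 : hilbLoc K A 4 = 1)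
    (hm5 : IsLocalRing.maximalIdeal A ^ 5 = ⊥) {m : Ideal A}
    (hm : m = IsLocalRing.maximalIdeal A) :
    Module.finrank K A = 8 ∧ (∀ a : A, ∃ c : K, a - algebraMap K A c ∈ m) ∧
    dm K m 1 = 7 ∧ dm K m 2 = 5 ∧ dm K m 3 = 3 ∧ dm K m 4 = 1 ∧
    (∀ a : A, (∀ b ∈ m, a * b = 0) → a ∈ m ^ 4) := by
  unfold hilbLoc at h0 h1 h2 h3 h4
  unfold socDimLoc at hGor
  rw [← hm] at h0 h1 h2 h3 h4 hm5 hGor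
  simp only [zero_add, Nat.reduceAdd] at h0 h1 h2 h3 h4
  have z : Module.finrank K (A ⧸ m ^ 0) = 0 := by
    have : Subsingleton (A ⧸ m ^ 0) := by
      rw [Ideal.Quotient.subsingleton_iff, pow_zero, Ideal.one_eq_top]
    exact Module.finrank_zero_of_subsingleton
  have h8 : Module.finrank K A = 8 := by
    have e : (A ⧸ m ^ 5) ≃ₗ[K] A :=
      ((Submodule.quotEquivOfEqBot (m ^ 5) hm5).restrictScalars K)
    have := e.finrank_eq
    omega
  have : Module.Finite K A := Module.finite_of_finrank_pos (by omega)
  have a1 := dm_add (K := K) m 1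
  have a2 := dm_add (K := K) m 2
  have a3 := dm_add (K := K) m 3
  have a4 := dm_add (K := K) m 4
  refine ⟨h8, fun a => ?_, by omega, by omega, by omega, by omega, fun a ha => ?_⟩
  · obtain ⟨c, hc⟩ := hres.2 (IsLocalRing.residue A a)
    refine ⟨c, ?_⟩
    rw [hm, ← IsLocalRing.residue_eq_zero_iff, map_sub, ← hc, sub_eq_zero]
    rfl
  · have hle : (m ^ 4).restrictScalars K ≤
        (Submodule.colon (⊥ : Ideal A) (m : Set A)).restrictScalars K := by
      intro b hb
      show b ∈ Submodule.colon (⊥ : Ideal A) (m : Set A)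
      rw [Submodule.mem_colon]
      intro s hs
      have hb : b ∈ m ^ 4 := hb
      have := Ideal.mul_mem_mul hb hs
      rwa [← pow_succ, hm5] at this
    have d4 : dm K m 4 = 1 := by omega
    have e := Submodule.eq_of_le_of_finrank_le hle (by
      unfold dm at d4; rw [d4]; exact hGor.le)
    have : a ∈ (m ^ 4).restrictScalars K := by
      rw [e]
      show a ∈ Submodule.colon (⊥ : Ideal A) (m : Set A)
      rw [Submodule.mem_colon]
      intro s hs
      rw [Submodule.mem_bot]
      exact ha s hs
    exact this

end HC

/-- Classification of Artinian Gorenstein local `K`-algebras with Hilbert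
function `{1,2,2,2,1}`: `A` is isomorphic to one and only one of
`(a) = K[[x_1,x_2]]/(x_1^4, x_2^2)`, `(b) = K[[x_1,x_2]]/(x_1^4, -x_1^3+x_2^2)`,
`(c) = K[[x_1,x_2]]/(x_1^2+x_2^2, x_2^4)`; moreover the rings in cases `(a)` and
`(c)` are isomorphic to their associated graded rings, while `(b)` is not. -/
theorem classification_hilbert_12221
    {K : Type*} [Field K] [IsAlgClosed K] [CharZero K]
    (A : Type*) [CommRing A] [IsLocalRing A] [Algebra K A] [IsArtinianRing A]
    (hres : residueFieldIsK K A) (hGor : socDimLoc K A = 1)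
    (h0 : hilbLoc K A 0 = 1) (h1 : hilbLoc K A 1 = 2) (h2 : hilbLoc K A 2 = 2)
    (h3 : hilbLoc K A 3 = 2) (h4 : hilbLoc K A 4 = 1)
    (hm5 : IsLocalRing.maximalIdeal A ^ 5 = ⊥) :
    (∃! k : Fin 3,
      ![Nonempty (A ≃ₐ[K] (MvPowerSeries (Fin 2) K ⧸
          (Ideal.span {psX 0 ^ 4, psX 1 ^ 2} : Ideal (MvPowerSeries (Fin 2) K)))),
        Nonempty (A ≃ₐ[K] (MvPowerSeries (Fin 2) K ⧸
          (Ideal.span {psX 0 ^ 4, -psX 0 ^ 3 + psX 1 ^ 2} :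
            Ideal (MvPowerSeries (Fin 2) K)))),
        Nonempty (A ≃ₐ[K] (MvPowerSeries (Fin 2) K ⧸
          (Ideal.span {psX 0 ^ 2 + psX 1 ^ 2, psX 1 ^ 4} :
            Ideal (MvPowerSeries (Fin 2) K))))] k) ∧
    Nonempty ((MvPowerSeries (Fin 2) K ⧸
        (Ideal.span {psX 0 ^ 4, psX 1 ^ 2} : Ideal (MvPowerSeries (Fin 2) K))) ≃ₐ[K]
      (MvPowerSeries (Fin 2) K ⧸
        initialIdeal (Ideal.span {psX 0 ^ 4, psX 1 ^ 2} :
          Ideal (MvPowerSeries (Fin 2) K)))) ∧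
    Nonempty ((MvPowerSeries (Fin 2) K ⧸
        (Ideal.span {psX 0 ^ 2 + psX 1 ^ 2, psX 1 ^ 4} :
          Ideal (MvPowerSeries (Fin 2) K))) ≃ₐ[K]
      (MvPowerSeries (Fin 2) K ⧸
        initialIdeal (Ideal.span {psX 0 ^ 2 + psX 1 ^ 2, psX 1 ^ 4} :
          Ideal (MvPowerSeries (Fin 2) K)))) ∧
    ¬ Nonempty ((MvPowerSeries (Fin 2) K ⧸
        (Ideal.span {psX 0 ^ 4, -psX 0 ^ 3 + psX 1 ^ 2} :
          Ideal (MvPowerSeries (Fin 2) K))) ≃ₐ[K]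
      (MvPowerSeries (Fin 2) K ⧸
        initialIdeal (Ideal.span {psX 0 ^ 4, -psX 0 ^ 3 + psX 1 ^ 2} :
          Ideal (MvPowerSeries (Fin 2) K)))) := by
  obtain ⟨h8, hK, d1, d2, d3, d4, hs⟩ := HC.hyps hres hGor h0 h1 h2 h3 h4 hm5 rfl
  refine ⟨?_, ⟨Ideal.quotientEquivAlgOfEq K HC.gr_a.symm⟩,
    ⟨Ideal.quotientEquivAlgOfEq K HC.gr_c.symm⟩, HC.not_bgr⟩
  rcases HC.existence hm5 h8 hK d1 d2 d3 d4 hs with h | h | h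
  · obtain ⟨e⟩ := h
    refine ⟨0, ⟨e⟩, fun k hk => ?_⟩
    match k, hk with
    | 0, _ => rfl
    | 1, ⟨e'⟩ => exact (HC.not_ab ⟨e.symm.trans e'⟩).elim
    | 2, ⟨e'⟩ => exact (HC.not_ac ⟨e.symm.trans e'⟩).elim
  · obtain ⟨e⟩ := h
    refine ⟨1, ⟨e⟩, fun k hk => ?_⟩
    match k, hk with
    | 0, ⟨e'⟩ => exact (HC.not_ab ⟨e'.symm.trans e⟩).elim
    | 1, _ => rfl
    | 2, ⟨e'⟩ => exact (HC.not_bc ⟨e.symm.trans e'⟩).elim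
  · obtain ⟨e⟩ := h
    refine ⟨2, ⟨e⟩, fun k hk => ?_⟩
    match k, hk with
    | 0, ⟨e'⟩ => exact (HC.not_ac ⟨e'.symm.trans e⟩).elim
    | 1, ⟨e'⟩ => exact (HC.not_bc ⟨e'.symm.trans e⟩).elim
    | 2, _ => rfl
end

section
/- Let I ⊆ R = K[[x_1,…,x_n]] be an ideal such that A = R/I has finite length. Then the pairing ⟨f,g⟩ = (f ∘ g)(0) induces an isomorphism of K-vector spaces (R/I)^* ≅ I^⊥, where I^⊥ = {g ∈ P : f ∘ g = 0 for all f ∈ I}; in particular dim_K R/I = dim_K I^⊥. -/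
/-- Macaulay's inverse system `I^⊥ = {g ∈ P : f ∘ g = 0 for all f ∈ I}`,
a `K`-subspace of `P = K[y_1,…,y_n]`. -/
noncomputable def perpSpace {K : Type*} [Field K] {n : ℕ}
    (I : Ideal (MvPowerSeries (Fin n) K)) : Submodule K (MvPolynomial (Fin n) K) where
  carrier := {g | ∀ f ∈ I, contract f g = 0}
  zero_mem' := fun f _ => map_zero _
  add_mem' := fun {a b} ha hb f hf => by rw [map_add, ha f hf, hb f hf, add_zero]
  smul_mem' := fun c g hg f hf => by rw [map_smul, hg f hf, smul_zero]

noncomputable section AuxMacaulay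

theorem aux_contract_monomial {K : Type*} [Field K] {n : ℕ} (f : MvPowerSeries (Fin n) K)
    (β : Fin n →₀ ℕ) (c : K) :
    contract f (MvPolynomial.monomial β c) = c • ∑ α ∈ Finset.Iic β,
      (MvPowerSeries.coeff α f * ∏ i, ((β i).descFactorial (α i) : K)) •
        MvPolynomial.monomial (β - α) (1 : K) := by
  have h : MvPolynomial.monomial β c = c • MvPolynomial.basisMonomials (Fin n) K β := by
    simp [MvPolynomial.smul_monomial]
  rw [h, map_smul, contract, Module.Basis.constr_basis]

theorem aux_coeff_monomial {K : Type*} [Field K] {n : ℕ} (f : MvPowerSeries (Fin n) K)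
    (β γ : Fin n →₀ ℕ) (c : K) :
    MvPolynomial.coeff γ (contract f (MvPolynomial.monomial β c)) =
      if γ ≤ β then c * (MvPowerSeries.coeff (β - γ) f *
        ∏ i, ((β i).descFactorial ((β - γ) i) : K)) else 0 := by
  rw [aux_contract_monomial, MvPolynomial.coeff_smul, MvPolynomial.coeff_sum]
  simp only [MvPolynomial.coeff_smul, MvPolynomial.coeff_monomial, smul_eq_mul]
  split_ifs with h
  · congr 1
    rw [Finset.sum_eq_single (β - γ)]
    · rw [if_pos (tsub_tsub_cancel_of_le h), mul_one]
    · intro α hα hne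
      rw [if_neg, mul_zero]
      rintro rfl
      exact hne (tsub_tsub_cancel_of_le (Finset.mem_Iic.1 hα)).symm
    · intro h'
      exact absurd (Finset.mem_Iic.2 tsub_le_self) h'
  · rw [Finset.sum_eq_zero, mul_zero]
    intro α hα
    rw [if_neg, mul_zero]
    rintro rfl
    exact h tsub_le_self

/-- multi-index factorial -/
def auxFact (K : Type*) [Field K] {n : ℕ} (β : Fin n →₀ ℕ) : K := ∏ i, ((β i).factorial : K)

theorem auxFact_ne {K : Type*} [Field K] [CharZero K] {n : ℕ} (β : Fin n →₀ ℕ) :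
    auxFact K β ≠ 0 :=
  Finset.prod_ne_zero_iff.2 fun i _ => Nat.cast_ne_zero.2 (Nat.factorial_ne_zero _)

theorem aux_pair_monomial {K : Type*} [Field K] {n : ℕ} (f : MvPowerSeries (Fin n) K)
    (β : Fin n →₀ ℕ) (c : K) :
    MvPolynomial.coeff 0 (contract f (MvPolynomial.monomial β c)) =
      c * (MvPowerSeries.coeff β f * auxFact K β) := by
  rw [aux_coeff_monomial, if_pos (zero_le)]
  simp [auxFact, Nat.descFactorial_self]

theorem aux_shift {K : Type*} [Field K] {n : ℕ} (f : MvPowerSeries (Fin n) K)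
    (γ : Fin n →₀ ℕ) (g : MvPolynomial (Fin n) K) :
    MvPolynomial.coeff γ (contract f g) * auxFact K γ =
      MvPolynomial.coeff 0 (contract (MvPowerSeries.monomial γ 1 * f) g) := by
  induction g using MvPolynomial.induction_on' with
  | add p q hp hq => rw [map_add, map_add, MvPolynomial.coeff_add, MvPolynomial.coeff_add,
      add_mul, hp, hq]
  | monomial β c =>
    rw [aux_coeff_monomial, aux_pair_monomial, MvPowerSeries.coeff_monomial_mul]
    split_ifs with h
    · rw [one_mul, mul_assoc, mul_assoc]
      congr 2
      rw [auxFact, auxFact, ← Finset.prod_mul_distrib]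
      refine Finset.prod_congr rfl fun i _ => ?_
      have := Nat.factorial_mul_descFactorial (n := β i) (k := (β - γ) i) (by simp)
      have h2 : β i - (β - γ) i = γ i := by
        have := h i
        simp only [Finsupp.tsub_apply]; omega
      rw [h2] at this
      rw [← this]; push_cast; ring
    · simp

/-- pairing as a linear map in `f` -/
def auxPair {K : Type*} [Field K] {n : ℕ} (g : MvPolynomial (Fin n) K) :
    MvPowerSeries (Fin n) K →ₗ[K] K where
  toFun f := MvPolynomial.coeff 0 (contract f g)
  map_add' f f' := by rw [contract_add]; simp
  map_smul' c f := by
    induction g using MvPolynomial.induction_on' with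
    | add p q hp hq => rw [map_add, map_add, MvPolynomial.coeff_add, MvPolynomial.coeff_add,
        smul_add, hp, hq]
    | monomial β b =>
      rw [aux_pair_monomial, aux_pair_monomial]; simp; ring

theorem aux_pair_X {K : Type*} [Field K] {n : ℕ} (β : Fin n →₀ ℕ) (g : MvPolynomial (Fin n) K) :
    MvPolynomial.coeff 0 (contract (MvPowerSeries.monomial β 1) g) =
      MvPolynomial.coeff β g * auxFact K β := by
  induction g using MvPolynomial.induction_on' with
  | add p q hp hq => rw [map_add, MvPolynomial.coeff_add, hp, hq, MvPolynomial.coeff_add, add_mul]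
  | monomial α c =>
    rw [aux_pair_monomial, MvPowerSeries.coeff_monomial, MvPolynomial.coeff_monomial]
    split_ifs with h
    · subst h; ring
    · simp

theorem aux_mem_perp {K : Type*} [Field K] [CharZero K] {n : ℕ}
    (I : Ideal (MvPowerSeries (Fin n) K)) (g : MvPolynomial (Fin n) K)
    (h : ∀ f ∈ I, MvPolynomial.coeff 0 (contract f g) = 0) : g ∈ perpSpace I := by
  intro f hf
  ext γ
  have := aux_shift f γ g
  rw [h _ (I.mul_mem_left _ hf)] at this
  simpa [auxFact_ne] using this

theorem aux_nilp {K : Type*} [Field K] {n : ℕ}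
    (I : Ideal (MvPowerSeries (Fin n) K))
    (hlen : IsFiniteLength (MvPowerSeries (Fin n) K) (MvPowerSeries (Fin n) K ⧸ I)) (i : Fin n) :
    ∃ N, (MvPowerSeries.X i : MvPowerSeries (Fin n) K) ^ N ∈ I := by
  have h1 := (isFiniteLength_iff_isNoetherian_isArtinian.1 hlen).2
  have : IsArtinianRing (MvPowerSeries (Fin n) K ⧸ I) :=
    isArtinian_of_tower (MvPowerSeries (Fin n) K) h1
  obtain ⟨N, hN⟩ := IsArtinianRing.isNilpotent_jacobson_bot (R := MvPowerSeries (Fin n) K ⧸ I)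
  have hx : Ideal.Quotient.mk I (MvPowerSeries.X i) ∈
      Ideal.jacobson (⊥ : Ideal (MvPowerSeries (Fin n) K ⧸ I)) := by
    rw [Ideal.mem_jacobson_bot]
    intro y
    obtain ⟨r, rfl⟩ := Ideal.Quotient.mk_surjective y
    rw [← map_mul, ← map_one (Ideal.Quotient.mk I), ← map_add]
    apply IsUnit.map
    rw [MvPowerSeries.isUnit_iff_constantCoeff]
    simp
  refine ⟨N, ?_⟩
  rw [← Ideal.Quotient.eq_zero_iff_mem, map_pow]
  have := Ideal.pow_mem_pow hx N
  rw [hN] at this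
  simpa using this

theorem aux_box {K : Type*} [Field K] {n : ℕ}
    (I : Ideal (MvPowerSeries (Fin n) K)) (N : Fin n → ℕ)
    (hN : ∀ i, (MvPowerSeries.X i : MvPowerSeries (Fin n) K) ^ N i ∈ I)
    (f : MvPowerSeries (Fin n) K)
    (hf : ∀ β : Fin n →₀ ℕ, (∀ i, β i < N i) → MvPowerSeries.coeff β f = 0) : f ∈ I := by
  classical
  let c : (Fin n →₀ ℕ) → Fin n → Prop := fun β i => N i ≤ β i ∧ ∀ j < i, β j < N j
  let F : Fin n → MvPowerSeries (Fin n) K := fun i β =>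
    if c β i then MvPowerSeries.coeff β f else 0
  have hF : ∀ i β, MvPowerSeries.coeff β (F i) =
    if c β i then MvPowerSeries.coeff β f else 0 := fun i β => rfl
  have hs : f = ∑ i, F i := by
    ext β
    rw [map_sum]
    simp only [hF]
    by_cases h : ∀ i, β i < N i
    · rw [hf β h]; simp
    · have hne : ∃ i, N i ≤ β i := by push Not at h; exact h
      obtain ⟨i, hi, hm⟩ := WellFounded.has_min (wellFounded_lt (α := Fin n))
        {i | N i ≤ β i} hne
      rw [Finset.sum_eq_single i]
      · rw [if_pos]
        exact ⟨hi, fun j hj => not_le.1 fun h' => hm j h' hj⟩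
      · intro j _ hj
        rw [if_neg]
        rintro ⟨h1, h2⟩
        rcases lt_or_gt_of_ne hj with h3 | h3
        · exact hm j h1 h3
        · exact absurd hi (not_le.2 (h2 i h3))
      · simp
  rw [hs]
  refine I.sum_mem fun i _ => ?_
  refine I.mem_of_dvd ?_ (hN i)
  rw [MvPowerSeries.X_pow_dvd_iff]
  intro m hm
  rw [hF, if_neg]
  rintro ⟨h1, -⟩
  omega

theorem aux_factor {K V W : Type*} [Field K] [AddCommGroup V] [Module K V] [AddCommGroup W]
    [Module K W] (q : V →ₗ[K] W) (hq : Function.Surjective q) (φ : V →ₗ[K] K)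
    (h : ∀ v, q v = 0 → φ v = 0) : ∃ ξ : Module.Dual K W, ∀ v, ξ (q v) = φ v := by
  obtain ⟨s, hs⟩ := q.exists_rightInverse_of_surjective (LinearMap.range_eq_top.2 hq)
  refine ⟨φ ∘ₗ s, fun v => ?_⟩
  rw [LinearMap.comp_apply, ← sub_eq_zero, ← map_sub]
  apply h
  rw [map_sub, sub_eq_zero]
  exact LinearMap.congr_fun hs (q v)

end AuxMacaulay

/-- Macaulay duality: if `A = R/I` has finite length, the pairing
`⟨f, g⟩ = (f ∘ g)(0)` induces an isomorphism of `K`-vector spaces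
`(R/I)^* ≅ I^⊥`; in particular `dim_K R/I = dim_K I^⊥`. -/
theorem dual_iso_perp
    {K : Type*} [Field K] [IsAlgClosed K] [CharZero K] {n : ℕ}
    (I : Ideal (MvPowerSeries (Fin n) K))
    (hlen : IsFiniteLength (MvPowerSeries (Fin n) K) (MvPowerSeries (Fin n) K ⧸ I)) :
    (∃ e : Module.Dual K (MvPowerSeries (Fin n) K ⧸ I) ≃ₗ[K] perpSpace I,
      ∀ (ξ : Module.Dual K (MvPowerSeries (Fin n) K ⧸ I))
        (f : MvPowerSeries (Fin n) K),
        ξ (Ideal.Quotient.mk I f) =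
          MvPolynomial.coeff 0 (contract f ((e ξ : perpSpace I) :
            MvPolynomial (Fin n) K))) ∧
    Module.finrank K (MvPowerSeries (Fin n) K ⧸ I) =
      Module.finrank K (perpSpace I) := by
  classical
  choose N hN using aux_nilp I hlen
  let S : Finset (Fin n →₀ ℕ) := Finset.univ.image
    fun b : ((i : Fin n) → Fin (N i)) => Finsupp.equivFunOnFinite.symm fun i => (b i : ℕ)
  have hS : ∀ β : Fin n →₀ ℕ, (∀ i, β i < N i) → β ∈ S := by
    intro β h
    refine Finset.mem_image.2 ⟨fun i => ⟨β i, h i⟩, Finset.mem_univ _, ?_⟩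
    ext i; simp
  let q : MvPowerSeries (Fin n) K →ₗ[K] MvPowerSeries (Fin n) K ⧸ I :=
    (Ideal.Quotient.mkₐ K I).toLinearMap
  have hq : ∀ f, q f = Ideal.Quotient.mk I f := fun f => rfl
  let Φ : Module.Dual K (MvPowerSeries (Fin n) K ⧸ I) →ₗ[K] MvPolynomial (Fin n) K :=
    ∑ β ∈ S, (MvPolynomial.monomial β) ∘ₗ
      ((auxFact K β)⁻¹ • Module.Dual.eval K _ (q (MvPowerSeries.monomial β 1)))
  have hΦ : ∀ ξ, Φ ξ = ∑ β ∈ S, MvPolynomial.monomial β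
      ((auxFact K β)⁻¹ * ξ (q (MvPowerSeries.monomial β 1))) := by
    intro ξ
    simp [Φ, LinearMap.sum_apply]
  have key : ∀ ξ f, ξ (q f) = MvPolynomial.coeff 0 (contract f (Φ ξ)) := by
    intro ξ f
    have h1 : f - ∑ β ∈ S, MvPowerSeries.coeff β f • MvPowerSeries.monomial β (1 : K) ∈ I := by
      refine aux_box I N hN _ fun γ hγ => ?_
      rw [map_sub, map_sum]
      simp [MvPowerSeries.coeff_monomial, hS γ hγ]
    have h2 : q f = q (∑ β ∈ S, MvPowerSeries.coeff β f • MvPowerSeries.monomial β (1 : K)) := by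
      rw [hq, hq]; exact Ideal.Quotient.eq.2 h1
    rw [h2, hΦ, map_sum, map_sum, map_sum, MvPolynomial.coeff_sum]
    refine Finset.sum_congr rfl fun β _ => ?_
    rw [aux_pair_monomial, map_smul, map_smul, smul_eq_mul]
    have := auxFact_ne (K := K) β
    field_simp
  have hmem : ∀ ξ, Φ ξ ∈ perpSpace I := by
    intro ξ
    refine aux_mem_perp I _ fun f hf => ?_
    rw [← key, hq, Ideal.Quotient.eq_zero_iff_mem.2 hf, map_zero]
  have hsurjq : Function.Surjective q := Ideal.Quotient.mk_surjective
  let e := LinearEquiv.ofBijective (Φ.codRestrict (perpSpace I) hmem) (by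
    constructor
    · rw [← LinearMap.ker_eq_bot, LinearMap.ker_eq_bot']
      intro ξ h
      have h0 : Φ ξ = 0 := congrArg Subtype.val h
      ext x
      obtain ⟨f, rfl⟩ := hsurjq x
      rw [key, h0]; simp
    · rintro ⟨g, hg⟩
      obtain ⟨ξ, h3⟩ := aux_factor q hsurjq (auxPair g) (by
        intro f hf
        rw [hq, Ideal.Quotient.eq_zero_iff_mem] at hf
        change MvPolynomial.coeff 0 (contract _ g) = 0
        rw [hg _ hf]; simp)
      refine ⟨ξ, Subtype.ext ?_⟩
      change Φ ξ = g
      ext β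
      have h5 := h3 (MvPowerSeries.monomial β 1)
      rw [key, aux_pair_X] at h5
      have h6 : auxPair g (MvPowerSeries.monomial β (1 : K)) =
        MvPolynomial.coeff β g * auxFact K β := aux_pair_X β g
      rw [h6] at h5
      exact mul_right_cancel₀ (auxFact_ne β) h5)
  refine ⟨⟨e, fun ξ f => key ξ f⟩, ?_⟩
  rw [← e.finrank_eq, Subspace.dual_finrank_eq]
end

section
/- Let I ⊆ R = K[[x_1,…,x_n]] be an ideal such that A = R/I has finite length. Then for every i ≥ 0 the Hilbert function of A satisfies HF_{R/I}(i) = dim_K ((I^⊥ ∩ P_{≤i} + P_{≤i−1}) / P_{≤i−1}), where P_{≤j} denotes the space of polynomials of degree at most j. -/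
/-- The subspace `P_{< i}` of polynomials of degree `< i`
(`⊥` for `i = 0`, otherwise `P_{≤ i-1}`). -/
noncomputable def pLT (K : Type*) [Field K] (n : ℕ) :
    ℕ → Submodule K (MvPolynomial (Fin n) K)
  | 0 => ⊥
  | (j + 1) => MvPolynomial.restrictTotalDegree (Fin n) K j

section Aux

variable {K : Type*} [Field K] {n : ℕ}

/-- product of factorials -/
noncomputable def mfact (K : Type*) [Field K] {n : ℕ} (β : Fin n →₀ ℕ) : K :=
  ∏ i, ((β i).factorial : K)

theorem mfact_ne [CharZero K] (β : Fin n →₀ ℕ) : mfact K β ≠ 0 := by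
  unfold mfact
  exact Finset.prod_ne_zero_iff.mpr fun i _ => by exact_mod_cast Nat.factorial_ne_zero _

/-- the pairing -/
noncomputable def pairΦ (K : Type*) [Field K] (n : ℕ) :
    MvPolynomial (Fin n) K →ₗ[K] Module.Dual K (MvPowerSeries (Fin n) K) :=
  (MvPolynomial.basisMonomials (Fin n) K).constr K fun β =>
    mfact K β • (MvPowerSeries.coeff β : MvPowerSeries (Fin n) K →ₗ[K] K)

theorem pairΦ_monomial (β : Fin n →₀ ℕ) (f : MvPowerSeries (Fin n) K) :
    pairΦ K n (MvPolynomial.monomial β 1) f = mfact K β * MvPowerSeries.coeff β f := by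
  have := (MvPolynomial.basisMonomials (Fin n) K).constr_basis K (fun β =>
    mfact K β • (MvPowerSeries.coeff β : MvPowerSeries (Fin n) K →ₗ[K] K)) β
  rw [MvPolynomial.coe_basisMonomials] at this
  unfold pairΦ
  rw [this]; rfl

theorem pairΦ_apply_monomial (g : MvPolynomial (Fin n) K) (α : Fin n →₀ ℕ) (c : K) :
    pairΦ K n g (MvPowerSeries.monomial α c) = c * mfact K α * MvPolynomial.coeff α g := by
  classical
  have hlin : (pairΦ K n).flip (MvPowerSeries.monomial α c) =
      (c * mfact K α) • MvPolynomial.lcoeff K α := by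
    refine (MvPolynomial.basisMonomials (Fin n) K).ext fun β => ?_
    rw [MvPolynomial.coe_basisMonomials]
    simp only [LinearMap.smul_apply, LinearMap.flip_apply, pairΦ_monomial,
      MvPolynomial.lcoeff_apply, MvPolynomial.coeff_monomial, MvPowerSeries.coeff_monomial]
    by_cases h : β = α
    · subst h; simp; ring
    · simp [h]
  simpa using LinearMap.congr_fun hlin g

theorem contract_monomial (f : MvPowerSeries (Fin n) K) (β : Fin n →₀ ℕ) :
    contract f (MvPolynomial.monomial β 1) = ∑ α ∈ Finset.Iic β,
      (MvPowerSeries.coeff α f * ∏ i, ((β i).descFactorial (α i) : K)) •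
        MvPolynomial.monomial (β - α) (1 : K) := by
  have := (MvPolynomial.basisMonomials (Fin n) K).constr_basis K (fun β =>
    ∑ α ∈ Finset.Iic β,
      (MvPowerSeries.coeff α f * ∏ i, ((β i).descFactorial (α i) : K)) •
        MvPolynomial.monomial (β - α) (1 : K)) β
  rw [MvPolynomial.coe_basisMonomials] at this
  exact this

theorem key (f : MvPowerSeries (Fin n) K) (γ : Fin n →₀ ℕ) (g : MvPolynomial (Fin n) K) :
    mfact K γ * MvPolynomial.coeff γ (contract f g) =
      pairΦ K n g (MvPowerSeries.monomial γ 1 * f) := by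
  classical
  have hlin : (mfact K γ) • (MvPolynomial.lcoeff K γ ∘ₗ contract f) =
      (pairΦ K n).flip (MvPowerSeries.monomial γ 1 * f) := by
    refine (MvPolynomial.basisMonomials (Fin n) K).ext fun β => ?_
    rw [MvPolynomial.coe_basisMonomials]
    simp only [LinearMap.smul_apply, LinearMap.comp_apply, LinearMap.flip_apply, pairΦ_monomial,
      contract_monomial, MvPolynomial.lcoeff_apply, MvPolynomial.coeff_sum,
      MvPolynomial.coeff_smul, MvPolynomial.coeff_monomial, MvPowerSeries.coeff_monomial_mul,
      smul_eq_mul, mul_ite, mul_one, mul_zero, one_mul]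
    split_ifs with h
    · rw [Finset.sum_eq_single (β - γ)]
      · rw [if_pos (tsub_tsub_cancel_of_le h)]
        have : mfact K β = mfact K γ * ∏ i, ((β i).descFactorial ((β - γ) i) : K) := by
          unfold mfact
          rw [← Finset.prod_mul_distrib]
          refine Finset.prod_congr rfl fun i _ => ?_
          have := Nat.factorial_mul_descFactorial (n := β i) (k := (β - γ) i) (by simp)
          rw [Finsupp.tsub_apply, tsub_tsub_cancel_of_le (h i)] at this
          rw [Finsupp.tsub_apply]
          rw [← Nat.cast_mul, this]
        rw [this]; ring
      · intro α hα hne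
        rw [if_neg]
        rintro rfl
        exact hne (tsub_tsub_cancel_of_le (Finset.mem_Iic.mp hα)).symm
      · intro h'; exact absurd (Finset.mem_Iic.mpr tsub_le_self) h'
    · rw [Finset.sum_eq_zero, mul_zero]
      intro α _
      rw [if_neg]
      rintro rfl
      exact h tsub_le_self
  simpa using LinearMap.congr_fun hlin g

theorem mem_perp_iff [CharZero K] (I : Ideal (MvPowerSeries (Fin n) K))
    (g : MvPolynomial (Fin n) K) :
    g ∈ perpSpace I ↔ ∀ f ∈ I, pairΦ K n g f = 0 := by
  constructor
  · intro h f hf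
    have := key f 0 g
    rw [show contract f g = 0 from h f hf] at this
    simpa [MvPowerSeries.monomial_zero_one] using this.symm
  · intro h f hf
    ext γ
    have := key f γ g
    rw [h _ (I.mul_mem_left _ hf)] at this
    simpa [mfact_ne] using this

theorem mem_mx_pow (j : ℕ) (f : MvPowerSeries (Fin n) K) :
    f ∈ mxR K n ^ j ↔ ∀ α : Fin n →₀ ℕ, α.degree < j → MvPowerSeries.coeff α f = 0 := by
  classical
  constructor
  · induction j generalizing f with
    | zero => simp
    | succ j ih =>
      intro hf
      rw [pow_succ] at hf
      refine Submodule.mul_induction_on hf ?_ ?_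
      · intro a ha b hb α hα
        rw [MvPowerSeries.coeff_mul]
        refine Finset.sum_eq_zero fun p hp => ?_
        rw [Finset.HasAntidiagonal.mem_antidiagonal] at hp
        by_cases h0 : p.2 = 0
        · have : MvPowerSeries.constantCoeff b = 0 := hb
          rw [h0, MvPowerSeries.coeff_zero_eq_constantCoeff_apply, this, mul_zero]
        · rw [ih a ha, zero_mul]
          have h1 : p.2.degree ≠ 0 := by rwa [Ne, Finsupp.degree_eq_zero_iff]
          have h2 : p.1.degree + p.2.degree = α.degree := by rw [← map_add, hp]
          omega
      · intro a b ha hb α hα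
        rw [map_add, ha α hα, hb α hα, add_zero]
  · induction j generalizing f with
    | zero => simp
    | succ j ih =>
      intro hf
      have hex : ∀ α : Fin n →₀ ℕ, ∃ s : Option (Fin n), (α ≠ 0 → ∃ t, s = some t ∧ α t ≠ 0) := by
        intro α
        by_cases h : α = 0
        · exact ⟨none, fun h' => absurd h h'⟩
        · obtain ⟨t, ht⟩ := Finsupp.ne_iff.mp h
          exact ⟨some t, fun _ => ⟨t, rfl, ht⟩⟩
      choose ch hch using hex
      let h : Fin n → MvPowerSeries (Fin n) K := fun s γ =>
        if ch (γ + Finsupp.single s 1) = some s then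
          MvPowerSeries.coeff (γ + Finsupp.single s 1) f else 0
      have hc : ∀ s γ, MvPowerSeries.coeff γ (h s) =
        if ch (γ + Finsupp.single s 1) = some s then
          MvPowerSeries.coeff (γ + Finsupp.single s 1) f else 0 := fun s γ => rfl
      have hfe : f = ∑ s, h s * MvPowerSeries.X s := by
        ext α
        rw [map_sum]
        simp only [mul_comm (h _), MvPowerSeries.X_def, MvPowerSeries.coeff_monomial_mul, one_mul,
          hc]
        by_cases h0 : α = 0
        · subst h0
          rw [hf 0 (by simp), Finset.sum_eq_zero]
          intro s _
          rw [if_neg]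
          intro hle
          have := hle s
          simp at this
        · obtain ⟨t, ht, hαt⟩ := hch α h0
          have hle : Finsupp.single t 1 ≤ α := by
            rw [Finsupp.single_le_iff]; omega
          rw [Finset.sum_eq_single t]
          · rw [if_pos hle, tsub_add_cancel_of_le hle, if_pos ht]
          · intro s _ hs
            split_ifs with h1 h2
            · rw [tsub_add_cancel_of_le h1, ht] at h2
              exact absurd (Option.some.inj h2).symm hs
            · rfl
            · rfl
          · simp
      rw [hfe, pow_succ]
      refine Submodule.sum_mem _ fun s _ => Ideal.mul_mem_mul (ih _ ?_) ?_
      · intro α hα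
        rw [hc, hf, ite_self]
        rw [map_add, Finsupp.degree_single]; omega
      · exact MvPowerSeries.constantCoeff_X s

theorem mem_pLT (j : ℕ) (g : MvPolynomial (Fin n) K) :
    g ∈ pLT K n j ↔ ∀ α : Fin n →₀ ℕ, j ≤ α.degree → MvPolynomial.coeff α g = 0 := by
  cases j with
  | zero =>
    change g ∈ (⊥ : Submodule K _) ↔ _
    rw [Submodule.mem_bot, MvPolynomial.ext_iff]
    simp
  | succ j =>
    change g ∈ MvPolynomial.restrictTotalDegree (Fin n) K j ↔ _
    rw [MvPolynomial.mem_restrictTotalDegree, MvPolynomial.totalDegree, Finset.sup_le_iff]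
    constructor
    · intro h α hα
      by_contra hne
      have h1 : α.degree ≤ j := h α (MvPolynomial.mem_support_iff.mpr hne)
      omega
    · intro h α hα
      by_contra hlt
      have h1 : ¬ α.degree ≤ j := hlt
      exact MvPolynomial.mem_support_iff.mp hα (h α (by omega))

theorem pLT_mono (j : ℕ) : pLT K n j ≤ pLT K n (j + 1) := fun g hg => by
  rw [mem_pLT] at *
  exact fun α h => hg α (by omega)

theorem pair_zero {j : ℕ} {g : MvPolynomial (Fin n) K} (hg : g ∈ pLT K n j)
    {f : MvPowerSeries (Fin n) K} (hf : f ∈ mxR K n ^ j) : pairΦ K n g f = 0 := by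
  rw [mem_pLT] at hg
  rw [mem_mx_pow] at hf
  rw [g.as_sum, map_sum, LinearMap.sum_apply]
  refine Finset.sum_eq_zero fun α hα => ?_
  have : (MvPolynomial.monomial α (MvPolynomial.coeff α g) : MvPolynomial (Fin n) K) =
      MvPolynomial.coeff α g • MvPolynomial.monomial α 1 := by
    simp [MvPolynomial.smul_monomial]
  rw [this, map_smul, LinearMap.smul_apply, pairΦ_monomial]
  by_cases h : j ≤ α.degree
  · rw [hg α h, zero_smul]
  · rw [hf α (by omega)]; simp

theorem map_eq [CharZero K] (I : Ideal (MvPowerSeries (Fin n) K)) (j : ℕ) :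
    (perpSpace I ⊓ pLT K n j).map (pairΦ K n) =
      ((I ⊔ mxR K n ^ j).restrictScalars K).dualAnnihilator := by
  classical
  ext φ
  rw [Submodule.mem_map, Submodule.mem_dualAnnihilator]
  constructor
  · rintro ⟨g, ⟨hg1, hg2⟩, rfl⟩ f hf
    obtain ⟨a, ha, b, hb, rfl⟩ := Submodule.mem_sup.mp hf
    rw [map_add, (mem_perp_iff I g).mp hg1 a ha, pair_zero hg2 hb, add_zero]
  · intro h
    have hfin : {α : Fin n →₀ ℕ | α.degree < j}.Finite := Finsupp.finite_of_degree_lt j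
    let S := hfin.toFinset
    have hS : ∀ α, α ∈ S ↔ α.degree < j := by simp [S]
    let g : MvPolynomial (Fin n) K := ∑ α ∈ S,
      MvPolynomial.monomial α (φ (MvPowerSeries.monomial α 1) / mfact K α)
    have hgc : ∀ α, MvPolynomial.coeff α g =
        if α ∈ S then φ (MvPowerSeries.monomial α 1) / mfact K α else 0 := by
      intro α
      simp [g, MvPolynomial.coeff_sum, MvPolynomial.coeff_monomial]
    have hg : g ∈ pLT K n j := by
      rw [mem_pLT]
      intro α hα
      rw [hgc, if_neg]
      rw [hS]; omega
    have hφ : pairΦ K n g = φ := by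
      ext f
      let t : MvPowerSeries (Fin n) K := ∑ α ∈ S, MvPowerSeries.monomial α (MvPowerSeries.coeff α f)
      have hft : f - t ∈ mxR K n ^ j := by
        rw [mem_mx_pow]
        intro α hα
        have := (hS α).mpr hα
        simp [t, map_sum, MvPowerSeries.coeff_monomial, this]
      have h1 := pair_zero hg hft
      have h2 := h _ (show f - t ∈ (I ⊔ mxR K n ^ j).restrictScalars K from
        (le_sup_right : mxR K n ^ j ≤ I ⊔ mxR K n ^ j) hft)
      rw [map_sub, sub_eq_zero] at h1 h2
      rw [h1, h2]
      simp only [t, map_sum]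
      refine Finset.sum_congr rfl (fun α hα => ?_)
      have : (MvPowerSeries.monomial α (MvPowerSeries.coeff α f) : MvPowerSeries (Fin n) K) =
        MvPowerSeries.coeff α f • MvPowerSeries.monomial α (1 : K) := by
        rw [← LinearMap.map_smul, smul_eq_mul, mul_one]
      rw [this, map_smul, map_smul, pairΦ_apply_monomial, hgc, if_pos hα, one_mul,
        mul_div_cancel₀ _ (mfact_ne α)]
    refine ⟨g, ⟨?_, hg⟩, hφ⟩
    refine (mem_perp_iff I g).mpr fun f hf => ?_
    rw [hφ]
    exact h _ ((le_sup_left : I ≤ I ⊔ mxR K n ^ j) hf)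

theorem pairΦ_inj [CharZero K] : Function.Injective (pairΦ K n) := by
  rw [← LinearMap.ker_eq_bot, LinearMap.ker_eq_bot']
  intro g hg
  ext α
  have := pairΦ_apply_monomial g α 1
  rw [hg] at this
  simpa [mfact_ne] using this.symm

theorem dim_eq [CharZero K] (I : Ideal (MvPowerSeries (Fin n) K)) (j : ℕ) :
    Module.finrank K (MvPowerSeries (Fin n) K ⧸ (I ⊔ mxR K n ^ j)) =
      Module.finrank K (perpSpace I ⊓ pLT K n j : Submodule K _) := by
  rw [← (Submodule.Quotient.restrictScalarsEquiv K (I ⊔ mxR K n ^ j)).finrank_eq,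
    ← Subspace.dual_finrank_eq,
    (Submodule.dualQuotEquivDualAnnihilator _).finrank_eq, ← map_eq]
  exact (Submodule.equivMapOfInjective _ pairΦ_inj _).finrank_eq.symm

end Aux

/-- The Hilbert function of `A = R/I` via the inverse system: for every `i`,
`HF_{R/I}(i) = dim_K ((I^⊥ ∩ P_{≤ i} + P_{< i}) / P_{< i})`, the right-hand side
being realized as the image of `I^⊥ ∩ P_{≤ i}` in `P/P_{< i}`. -/
theorem hilbert_function_eq_perp_dim
    {K : Type*} [Field K] [IsAlgClosed K] [CharZero K] {n : ℕ}
    (I : Ideal (MvPowerSeries (Fin n) K))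
    (hlen : IsFiniteLength (MvPowerSeries (Fin n) K) (MvPowerSeries (Fin n) K ⧸ I))
    (i : ℕ) :
    hilbQ I i =
      Module.finrank K (Submodule.map (pLT K n i).mkQ
        (perpSpace I ⊓ MvPolynomial.restrictTotalDegree (Fin n) K i)) := by
  have hfd : FiniteDimensional K (perpSpace I ⊓ pLT K n (i + 1) : Submodule K _) :=
    Submodule.finiteDimensional_of_le (S₂ := MvPolynomial.restrictTotalDegree (Fin n) K i)
      inf_le_right
  unfold hilbQ
  rw [dim_eq, dim_eq]
  change _ = Module.finrank K (Submodule.map (pLT K n i).mkQ (perpSpace I ⊓ pLT K n (i + 1)))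
  have h := LinearMap.finrank_range_add_finrank_ker
    ((pLT K n i).mkQ.domRestrict (perpSpace I ⊓ pLT K n (i + 1)))
  rw [LinearMap.range_domRestrict] at h
  have hk : Module.finrank K
      (LinearMap.ker ((pLT K n i).mkQ.domRestrict (perpSpace I ⊓ pLT K n (i + 1)))) =
      Module.finrank K (perpSpace I ⊓ pLT K n i : Submodule K _) := by
    rw [LinearMap.ker_domRestrict, Submodule.ker_mkQ,
      (Submodule.equivMapOfInjective (Submodule.subtype _) (Submodule.subtype_injective _) _).finrank_eq, Submodule.map_comap_subtype,
      inf_assoc, inf_eq_right.mpr (pLT_mono i)]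
  omega
end

section
/- For polynomials f, h ∈ P = K[y_1,…,y_n], the cyclic R-submodules generated under the contraction action coincide, ⟨f⟩_R = ⟨h⟩_R, if and only if there exists an invertible element u of R = K[[x_1,…,x_n]] such that f = u ∘ h. -/
theorem contract_monomial_aux {K : Type*} [Field K] {n : ℕ} (f : MvPowerSeries (Fin n) K)
    (β : Fin n →₀ ℕ) : contract f (MvPolynomial.monomial β (1 : K)) =
    ∑ α ∈ Finset.Iic β,
      (MvPowerSeries.coeff α f * ∏ i, ((β i).descFactorial (α i) : K)) •
        MvPolynomial.monomial (β - α) (1 : K) := by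
  unfold contract
  have := (MvPolynomial.basisMonomials (Fin n) K).constr_basis K (fun β =>
    ∑ α ∈ Finset.Iic β,
      (MvPowerSeries.coeff α f * ∏ i, ((β i).descFactorial (α i) : K)) •
        MvPolynomial.monomial (β - α) (1 : K)) β
  rwa [MvPolynomial.coe_basisMonomials] at this

theorem contract_one_aux {K : Type*} [Field K] {n : ℕ} (p : MvPolynomial (Fin n) K) :
    contract 1 p = p := by
  suffices h : contract (1 : MvPowerSeries (Fin n) K) = LinearMap.id by rw [h]; rfl
  refine (MvPolynomial.basisMonomials (Fin n) K).ext fun β => ?_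
  rw [MvPolynomial.coe_basisMonomials, contract_monomial_aux, Finset.sum_eq_single 0]
  · simp
  · intro α _ h
    classical
    simp [MvPowerSeries.coeff_one, h]
  · simp

theorem descFactorial_add_aux (m a c : ℕ) :
    m.descFactorial (a + c) = m.descFactorial a * (m - a).descFactorial c := by
  induction c with
  | zero => simp
  | succ c ih => rw [← add_assoc, Nat.descFactorial_succ, Nat.descFactorial_succ, ih, Nat.sub_sub]; ring

theorem contract_mul_aux {K : Type*} [Field K] {n : ℕ} (u v : MvPowerSeries (Fin n) K)
    (p : MvPolynomial (Fin n) K) :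
    contract (u * v) p = contract u (contract v p) := by
  classical
  suffices h : contract (u * v) = contract u ∘ₗ contract v by rw [h]; rfl
  refine (MvPolynomial.basisMonomials (Fin n) K).ext fun β => ?_
  rw [MvPolynomial.coe_basisMonomials, LinearMap.comp_apply, contract_monomial_aux,
    contract_monomial_aux, map_sum]
  simp only [map_smul, contract_monomial_aux, MvPowerSeries.coeff_mul, Finset.sum_mul,
    Finset.sum_smul, Finset.smul_sum, smul_smul]
  rw [Finset.sum_sigma', Finset.sum_sigma']
  refine Finset.sum_bij' (fun x _ => ⟨x.2.2, x.2.1⟩) (fun x _ => ⟨x.2 + x.1, (x.2, x.1)⟩)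
    ?_ ?_ ?_ ?_ ?_
  · rintro ⟨δ, γ, α⟩ h
    simp only [Finset.mem_sigma, Finset.mem_Iic, Finset.HasAntidiagonal.mem_antidiagonal] at h ⊢
    obtain ⟨h1, rfl⟩ := h
    exact ⟨le_trans le_add_self h1, le_tsub_of_add_le_right h1⟩
  · rintro ⟨α, γ⟩ h
    simp only [Finset.mem_sigma, Finset.mem_Iic, Finset.HasAntidiagonal.mem_antidiagonal] at h ⊢
    exact ⟨(add_le_add_left h.2 α).trans (tsub_add_cancel_of_le h.1).le, trivial⟩
  · rintro ⟨δ, γ, α⟩ h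
    simp only [Finset.mem_sigma, Finset.mem_Iic, Finset.HasAntidiagonal.mem_antidiagonal] at h ⊢
    obtain ⟨h1, rfl⟩ := h
    rfl
  · rintro ⟨α, γ⟩ h
    rfl
  · rintro ⟨δ, γ, α⟩ h
    simp only [Finset.mem_sigma, Finset.mem_Iic, Finset.HasAntidiagonal.mem_antidiagonal] at h ⊢
    obtain ⟨h1, rfl⟩ := h
    have e : β - (γ + α) = β - α - γ := by rw [add_comm, tsub_add_eq_tsub_tsub]
    rw [e]
    congr 1
    have : ∏ i, ((β i).descFactorial ((γ + α) i) : K) =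
        (∏ i, ((β i).descFactorial (α i) : K)) * ∏ i, (((β - α) i).descFactorial (γ i) : K) := by
      rw [← Finset.prod_mul_distrib]
      refine Finset.prod_congr rfl fun i _ => ?_
      rw [Finsupp.add_apply, add_comm, descFactorial_add_aux, Nat.cast_mul, Finsupp.tsub_apply]
    rw [this]
    ring

/-- The cyclic `R`-submodules `⟨f⟩_R = R ∘ f` and `⟨h⟩_R = R ∘ h` of `P`
coincide iff `f = u ∘ h` for some invertible `u ∈ R = K[[x_1,…,x_n]]`. -/
theorem cyclic_submodules_eq_iff_unit
    {K : Type*} [Field K] [IsAlgClosed K] [CharZero K] {n : ℕ}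
    (f h : MvPolynomial (Fin n) K) :
    {p : MvPolynomial (Fin n) K | ∃ u : MvPowerSeries (Fin n) K, contract u f = p} =
      {p : MvPolynomial (Fin n) K | ∃ u : MvPowerSeries (Fin n) K, contract u h = p} ↔
    ∃ u : MvPowerSeries (Fin n) K, IsUnit u ∧ contract u h = f := by
  constructor
  · intro H
    obtain ⟨u, hu⟩ : f ∈ {p | ∃ u : MvPowerSeries (Fin n) K, contract u h = p} :=
      H ▸ ⟨1, contract_one_aux f⟩
    obtain ⟨v, hv⟩ : h ∈ {p | ∃ u : MvPowerSeries (Fin n) K, contract u f = p} :=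
      H ▸ ⟨1, contract_one_aux h⟩
    by_cases hU : IsUnit u
    · exact ⟨u, hU, hu⟩
    have hc : MvPowerSeries.constantCoeff u = 0 := by
      rw [MvPowerSeries.isUnit_iff_constantCoeff] at hU
      simpa using hU
    have hw : IsUnit (1 - u * v) := by
      rw [MvPowerSeries.isUnit_iff_constantCoeff]
      simp [hc]
    have h0 : contract (1 - u * v) f = 0 := by
      have h1 := contract_add (1 - u * v) (u * v)
      rw [sub_add_cancel] at h1
      have h2 := congrArg (fun l => l f) h1
      simp only [LinearMap.add_apply, contract_one_aux, contract_mul_aux, hv, hu] at h2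
      simpa using h2
    obtain ⟨w, hw⟩ := hw.exists_left_inv
    have f0 : f = 0 := by
      rw [← contract_one_aux f, ← hw, contract_mul_aux, h0, map_zero]
    have h0 : h = 0 := by rw [← hv, f0, map_zero]
    exact ⟨1, isUnit_one, by rw [h0, f0, map_zero]⟩
  · rintro ⟨u, hu, rfl⟩
    obtain ⟨w, hw⟩ := hu.exists_left_inv
    ext p
    constructor
    · rintro ⟨v, rfl⟩
      exact ⟨v * u, contract_mul_aux _ _ _⟩
    · rintro ⟨v, rfl⟩
      refine ⟨v * w, ?_⟩
      rw [← contract_mul_aux, mul_assoc, hw, mul_one]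
end
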